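/- arXiv:1407.0177 — 2 statements merged into one kernel-verified Lean document; each statement's English description precedes it below -/
import Mathlib

section
/- For every integer n ≥ 45, p(n-1)/p(n) · (1 + π/(√24 · n^(3/2))) > p(n)/p(n+1), where p is the partition function. -/
/-!
Let `q = exp (-z)`. The modular transformation of the Dedekind eta function under `z ↦ 4π² / z`
writes the generating function of the partition numbers as an explicit singular factor, of order
`√z * exp (π² / (6z))`, times the generating function at the dual point.
On the circle `Re z = s` dropping this last factor changes the function by at most about
`exp (π² / (24s))`, against a peak of `exp (π² / (6s))`, so the singular factor alone gives all but
an exponentially smaller part of Cauchy's integral for `p(n)`. Completing the square in `√z`, the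
integral of the singular factor along a vertical segment has an antiderivative in terms of a
primitive of `exp (z ^ 2)`, so no Bessel function is needed, and its value is the elementary main
term `const * exp u * (u - 1) / u ^ 3` with `u = 2π / √6 * √(n - 1/24)`, up to an error
`exp (u / 2)`.

With `h = 1 / (n - 1/24)`, the ratio `M(n)² / (M(n - 1) * M(n + 1))` of main terms is smaller than
`1 + π / (√24 * n ^ (3/2))` by about `h²`, which beats the errors for `n ≥ 500`. The remaining cases
are computed exactly: the partition numbers up to `500` are read off as the digits of one large
integer, Euler's product evaluated at a power of two.
-/

namespace PartitionRatio

open Complex Filter Finset MeasureTheory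
open scoped ComplexConjugate PowerSeries PowerSeries.WithPiTopology Real Topology

/-- The number `p(n)` of partitions of `n`. -/
def partitionCount (n : ℕ) : ℕ := Fintype.card (Nat.Partition n)

/-- The number of partitions of `n` into parts of size at most `N`; it interpolates between the
trivial case `N = 0` and `partitionCount n`, which is the value for all `N ≥ n`. -/
def boundedCount (N n : ℕ) : ℕ := #(Nat.Partition.restricted n (· ≤ N))

lemma partitionCount_zero : partitionCount 0 = 1 := by simp [partitionCount]

lemma boundedCount_le_partitionCount (N n : ℕ) : boundedCount N n ≤ partitionCount n :=
  card_le_univ _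

lemma boundedCount_eq_partitionCount {N n : ℕ} (h : n ≤ N) :
    boundedCount N n = partitionCount n := by
  rw [boundedCount, partitionCount, ← card_univ]
  congr 1
  ext p
  simpa [Nat.Partition.restricted] using fun i hi ↦ (Nat.Partition.le_of_mem_parts hi).trans h

lemma mk_boundedCount (N : ℕ) : (PowerSeries.mk fun n ↦ (boundedCount N n : ℤ)) =
    ∏ i ∈ range N, ∑' j : ℕ, (PowerSeries.X : ℤ⟦X⟧) ^ ((i + 1) * j) := by
  have hprod := Nat.Partition.hasProd_powerSeriesMk_card_restricted ℤ (· ≤ N)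
  rw [← prod_congr rfl fun i hi ↦ if_pos (Nat.succ_le_of_lt (mem_range.1 hi))]
  exact hprod.unique <| hasProd_prod_of_ne_finset_one (L := .unconditional ℕ) fun i hi ↦
    if_neg fun h ↦ hi (mem_range.2 h)

lemma mk_boundedCount_succ_mul (N : ℕ) :
    (PowerSeries.mk fun n ↦ (boundedCount (N + 1) n : ℤ)) * (1 - PowerSeries.X ^ (N + 1)) =
      PowerSeries.mk fun n ↦ (boundedCount N n : ℤ) := by
  rw [mk_boundedCount, prod_range_succ, ← mk_boundedCount, mul_assoc]
  simp_rw [pow_mul]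
  rw [PowerSeries.WithPiTopology.tsum_pow_mul_one_sub_of_constantCoeff_eq_zero (by simp), mul_one]

lemma boundedCount_zero_left (n : ℕ) : boundedCount 0 n = if n = 0 then 1 else 0 := by
  have h := congrArg (PowerSeries.coeff n) (mk_boundedCount 0)
  rw [PowerSeries.coeff_mk, prod_range_zero, PowerSeries.coeff_one] at h
  exact_mod_cast h

lemma boundedCount_succ (N n : ℕ) : boundedCount (N + 1) n =
    boundedCount N n + if N + 1 ≤ n then boundedCount (N + 1) (n - (N + 1)) else 0 := by
  have h := congrArg (PowerSeries.coeff n) (mk_boundedCount_succ_mul N)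
  rw [mul_sub, mul_one, map_sub, PowerSeries.coeff_mul_X_pow'] at h
  simp only [PowerSeries.coeff_mk] at h
  exact_mod_cast sub_eq_iff_eq_add.1 h

lemma sum_boundedCount_zero_mul_pow_le {r : ℝ} (M : ℕ) :
    ∑ n ∈ range M, (boundedCount 0 n : ℝ) * r ^ n ≤ 1 := by
  simp only [boundedCount_zero_left, Nat.cast_ite, Nat.cast_one, Nat.cast_zero, ite_mul, one_mul,
    zero_mul, sum_ite_eq', pow_zero]
  split_ifs <;> norm_num

lemma sum_boundedCount_succ_mul_pow {R : Type*} [CommSemiring R] (x : R) (N M : ℕ) :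
    ∑ n ∈ range (M + (N + 1)), (boundedCount (N + 1) n : R) * x ^ n =
      ∑ n ∈ range (M + (N + 1)), (boundedCount N n : R) * x ^ n +
        x ^ (N + 1) * ∑ n ∈ range M, (boundedCount (N + 1) n : R) * x ^ n := by
  have hsmall : ∑ n ∈ range (N + 1), (boundedCount (N + 1) n : R) * x ^ n =
      ∑ n ∈ range (N + 1), (boundedCount N n : R) * x ^ n :=
    sum_congr rfl fun n hn ↦ by
      rw [boundedCount_succ, if_neg (mem_range.1 hn).not_ge, add_zero]
  rw [add_comm M, sum_range_add _ (N + 1), sum_range_add _ (N + 1), hsmall, add_assoc, mul_sum,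
    ← sum_add_distrib]
  refine congrArg _ (sum_congr rfl fun n _ ↦ ?_)
  rw [boundedCount_succ, if_pos (Nat.le_add_right _ _), Nat.add_sub_cancel_left]
  push_cast
  ring

/-! ### Euler's product for the generating function -/

lemma sum_boundedCount_mul_pow_mul_prod_le {r : ℝ} (hr0 : 0 ≤ r) (hr1 : r ≤ 1) (N M : ℕ) :
    (∑ n ∈ range M, (boundedCount N n : ℝ) * r ^ n) * ∏ i ∈ range N, (1 - r ^ (i + 1)) ≤ 1 := by
  have hfactor (i : ℕ) : 0 ≤ 1 - r ^ (i + 1) := sub_nonneg.2 (pow_le_one₀ hr0 hr1)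
  induction N generalizing M with
  | zero => simpa using sum_boundedCount_zero_mul_pow_le M
  | succ N ih =>
    have hmono : ∑ n ∈ range M, (boundedCount (N + 1) n : ℝ) * r ^ n ≤
        ∑ n ∈ range (M + (N + 1)), (boundedCount (N + 1) n : ℝ) * r ^ n :=
      sum_le_sum_of_subset_of_nonneg (range_subset_range.2 (Nat.le_add_right _ _))
        fun _ _ _ ↦ by positivity
    have hstep : (∑ n ∈ range M, (boundedCount (N + 1) n : ℝ) * r ^ n) * (1 - r ^ (N + 1)) ≤
        ∑ n ∈ range (M + (N + 1)), (boundedCount N n : ℝ) * r ^ n := by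
      linarith [sum_boundedCount_succ_mul_pow r N M]
    calc _ = (∑ n ∈ range M, (boundedCount (N + 1) n : ℝ) * r ^ n) * (1 - r ^ (N + 1)) *
          ∏ i ∈ range N, (1 - r ^ (i + 1)) := by rw [prod_range_succ]; ring
      _ ≤ _ := mul_le_mul_of_nonneg_right hstep (prod_nonneg fun i _ ↦ hfactor i)
      _ ≤ 1 := ih _

lemma inv_one_sub_pow_le_exp {r : ℝ} (hr0 : 0 ≤ r) (hr1 : r < 1) (i : ℕ) :
    (1 - r ^ (i + 1))⁻¹ ≤ Real.exp (r ^ (i + 1) / (1 - r)) := by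
  have hpow : r ^ (i + 1) ≤ r := pow_le_of_le_one hr0 hr1.le i.succ_ne_zero
  have hpos : 0 < 1 - r ^ (i + 1) := by linarith
  calc (1 - r ^ (i + 1))⁻¹ = r ^ (i + 1) / (1 - r ^ (i + 1)) + 1 := by field_simp; ring
    _ ≤ r ^ (i + 1) / (1 - r) + 1 := by gcongr
    _ ≤ _ := Real.add_one_le_exp _

lemma inv_prod_one_sub_pow_le {r : ℝ} (hr0 : 0 ≤ r) (hr1 : r < 1) (N : ℕ) :
    (∏ i ∈ range N, (1 - r ^ (i + 1)))⁻¹ ≤ Real.exp (r / (1 - r) ^ 2) := by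
  have hgeom : ∑ i ∈ range N, r ^ (i + 1) ≤ r / (1 - r) := by
    simp_rw [pow_succ']
    rw [← mul_sum, div_eq_mul_inv, ← tsum_geometric_of_lt_one hr0 hr1]
    exact mul_le_mul_of_nonneg_left ((summable_geometric_of_lt_one hr0 hr1).sum_le_tsum _
      fun i _ ↦ by positivity) hr0
  rw [← prod_inv_distrib]
  calc ∏ i ∈ range N, (1 - r ^ (i + 1))⁻¹
    _ ≤ ∏ i ∈ range N, Real.exp (r ^ (i + 1) / (1 - r)) :=
        prod_le_prod (fun i _ ↦ inv_nonneg.2 (sub_nonneg.2 (pow_le_one₀ hr0 hr1.le)))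
          fun i _ ↦ inv_one_sub_pow_le_exp hr0 hr1 i
    _ = Real.exp ((∑ i ∈ range N, r ^ (i + 1)) / (1 - r)) := by
        rw [← Real.exp_sum, sum_div]
    _ ≤ Real.exp (r / (1 - r) / (1 - r)) := by gcongr
    _ = _ := by rw [div_div, sq]

lemma sum_partitionCount_mul_pow_le {r : ℝ} (hr0 : 0 ≤ r) (hr1 : r < 1) (N : ℕ) :
    ∑ n ∈ range N, (partitionCount n : ℝ) * r ^ n ≤ Real.exp (r / (1 - r) ^ 2) := by
  have hprod : 0 < ∏ i ∈ range N, (1 - r ^ (i + 1)) :=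
    prod_pos fun i _ ↦ sub_pos.2 (pow_lt_one₀ hr0 hr1 i.succ_ne_zero)
  calc ∑ n ∈ range N, (partitionCount n : ℝ) * r ^ n
      = ∑ n ∈ range N, (boundedCount N n : ℝ) * r ^ n :=
        sum_congr rfl fun n hn ↦ by rw [boundedCount_eq_partitionCount (mem_range.1 hn).le]
    _ ≤ (∏ i ∈ range N, (1 - r ^ (i + 1)))⁻¹ := by
        rw [← one_div, le_div_iff₀ hprod]
        exact sum_boundedCount_mul_pow_mul_prod_le hr0 hr1.le N N
    _ ≤ _ := inv_prod_one_sub_pow_le hr0 hr1 N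

lemma summable_partitionCount_mul_pow {r : ℝ} (hr0 : 0 ≤ r) (hr1 : r < 1) :
    Summable fun n ↦ (partitionCount n : ℝ) * r ^ n :=
  summable_of_sum_range_le (fun _ ↦ by positivity) (sum_partitionCount_mul_pow_le hr0 hr1)

lemma tsum_partitionCount_mul_pow_le {r : ℝ} (hr0 : 0 ≤ r) (hr1 : r < 1) :
    ∑' n, (partitionCount n : ℝ) * r ^ n ≤ Real.exp (r / (1 - r) ^ 2) :=
  (summable_partitionCount_mul_pow hr0 hr1).tsum_le_of_sum_range_le
    (sum_partitionCount_mul_pow_le hr0 hr1)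

lemma summable_norm_partitionCount_mul_pow {q : ℂ} (hq : ‖q‖ < 1) :
    Summable fun n ↦ ‖(partitionCount n : ℂ) * q ^ n‖ := by
  simpa using summable_partitionCount_mul_pow (norm_nonneg q) hq

lemma norm_boundedCount_mul_pow_le (N n : ℕ) (q : ℂ) :
    ‖(boundedCount N n : ℂ) * q ^ n‖ ≤ ‖(partitionCount n : ℂ) * q ^ n‖ := by
  simp only [norm_mul, norm_natCast]
  gcongr
  exact boundedCount_le_partitionCount N n

/-- The generating function `∑ p(n) qⁿ` of the partition numbers. -/
noncomputable def partitionGen (q : ℂ) : ℂ := ∑' n, (partitionCount n : ℂ) * q ^ n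

/-- The generating function of the partitions into parts of size at most `N`. -/
noncomputable def boundedGen (N : ℕ) (q : ℂ) : ℂ := ∑' n, (boundedCount N n : ℂ) * q ^ n

lemma boundedGen_succ_mul {q : ℂ} (hq : ‖q‖ < 1) (N : ℕ) :
    boundedGen (N + 1) q * (1 - q ^ (N + 1)) = boundedGen N q := by
  have hlim (K : ℕ) : Tendsto (fun M ↦ ∑ n ∈ range M, (boundedCount K n : ℂ) * q ^ n) atTop
      (𝓝 (boundedGen K q)) :=
    (Summable.of_norm_bounded (summable_norm_partitionCount_mul_pow hq)
      (norm_boundedCount_mul_pow_le K · q)).hasSum.tendsto_sum_nat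
  have hshift := tendsto_add_atTop_nat (N + 1)
  have hrec := ((hlim (N + 1)).comp hshift).congr (sum_boundedCount_succ_mul_pow q N)
  have hrec' := ((hlim N).comp hshift).add ((hlim (N + 1)).const_mul (q ^ (N + 1)))
  linear_combination tendsto_nhds_unique hrec hrec'

lemma boundedGen_mul_prod {q : ℂ} (hq : ‖q‖ < 1) (N : ℕ) :
    boundedGen N q * ∏ i ∈ range N, (1 - q ^ (i + 1)) = 1 := by
  induction N with
  | zero => simp [boundedGen, boundedCount_zero_left]
  | succ N ih => rw [prod_range_succ_comm, ← mul_assoc, boundedGen_succ_mul hq, ih]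

lemma tendsto_boundedGen {q : ℂ} (hq : ‖q‖ < 1) :
    Tendsto (boundedGen · q) atTop (𝓝 (partitionGen q)) := by
  refine tendsto_tsum_of_dominated_convergence (summable_norm_partitionCount_mul_pow hq)
    (fun n ↦ tendsto_nhds_of_eventually_eq ?_)
    (Eventually.of_forall fun N n ↦ norm_boundedCount_mul_pow_le N n q)
  filter_upwards [eventually_ge_atTop n] with N hN
  rw [boundedCount_eq_partitionCount hN]

lemma partitionGen_mul_tprod {q : ℂ} (hq : ‖q‖ < 1) :
    partitionGen q * ∏' n : ℕ, (1 - q ^ (n + 1)) = 1 :=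
  tendsto_nhds_unique
    ((tendsto_boundedGen hq).mul
      (ModularForm.multipliable_one_sub_pow hq).hasProd.tendsto_prod_nat)
    (tendsto_const_nhds.congr fun N ↦ (boundedGen_mul_prod hq N).symm)

/-! ### The modular transformation of the generating function -/

lemma norm_exp_neg_lt_one {z : ℂ} (hz : 0 < z.re) : ‖cexp (-z)‖ < 1 := by
  rw [Complex.norm_exp, neg_re, Real.exp_lt_one_iff]
  exact neg_neg_of_pos hz

lemma re_four_pi_sq_div (z : ℂ) : (4 * π ^ 2 / z).re = 4 * π ^ 2 * z.re / normSq z := by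
  rw [show (4 * π ^ 2 / z : ℂ) = ((4 * π ^ 2 : ℝ) : ℂ) * z⁻¹ by push_cast; rfl, re_ofReal_mul,
    inv_re, mul_div_assoc]

lemma re_four_pi_sq_div_pos {z : ℂ} (hz : 0 < z.re) : 0 < (4 * π ^ 2 / z).re := by
  have hz0 : 0 < normSq z := normSq_pos.2 (ne_zero_of_re_pos hz)
  rw [re_four_pi_sq_div]
  positivity

lemma re_div_two_pi_pos {z : ℂ} (hz : 0 < z.re) : 0 < (z / (2 * π)).re := by
  rw [show (2 * π : ℂ) = ((2 * π : ℝ) : ℂ) by push_cast; rfl, div_ofReal_re]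
  positivity

lemma qParam_I_mul_div_two_pi (h : ℝ) (z : ℂ) :
    Function.Periodic.qParam h (I * (z / (2 * π))) = cexp (-z / h) := by
  have hcancel : 2 * π * I * (I * (z / (2 * π))) = -z := by
    field_simp
    linear_combination z * I_sq
  rw [Function.Periodic.qParam, hcancel]

lemma eta_mul_partitionGen {z : ℂ} (hz : 0 < z.re) :
    ModularForm.eta (I * (z / (2 * π))) * partitionGen (cexp (-z)) = cexp (-z / 24) := by
  have hq := qParam_I_mul_div_two_pi 1 z
  have hq24 := qParam_I_mul_div_two_pi 24 z
  simp only [ofReal_one, div_one, ofReal_ofNat] at hq hq24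
  simp only [ModularForm.eta, ModularForm.eta_q, hq, hq24]
  rw [mul_assoc, mul_comm _ (partitionGen _), partitionGen_mul_tprod (norm_exp_neg_lt_one hz),
    mul_one]

lemma sqrt_I_mul {w : ℂ} (hw : 0 < w.re) : sqrt (I * w) = sqrt I * sqrt w := by
  have hw0 : w ≠ 0 := ne_zero_of_re_pos hw
  have harg := abs_lt.1 (abs_arg_lt_pi_div_two_iff.2 (Or.inl hw))
  have hlog : log (I * w) = log I + log w :=
    log_mul I_ne_zero hw0 (by rw [arg_I]; constructor <;> linarith [harg.1, harg.2])
  simp only [sqrt, cpow_def_of_ne_zero, mul_ne_zero, ne_eq, I_ne_zero, hw0, not_false_eq_true, hlog,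
    add_mul, exp_add]

lemma eta_four_pi_sq_div {z : ℂ} (hz : 0 < z.re) :
    ModularForm.eta (I * ((4 * π ^ 2 / z) / (2 * π))) =
      sqrt (z / (2 * π)) * ModularForm.eta (I * (z / (2 * π))) := by
  have hπ : (π : ℂ) ≠ 0 := ofReal_ne_zero.2 Real.pi_ne_zero
  have hz0 : z ≠ 0 := ne_zero_of_re_pos hz
  have hI : sqrt I ≠ 0 := by simp [sqrt, I_ne_zero]
  have him : 0 < (I * (z / (2 * π))).im := by simpa using re_div_two_pi_pos hz
  have hinv : -1 / (I * (z / (2 * π))) = I * ((4 * π ^ 2 / z) / (2 * π)) := by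
    field_simp
    linear_combination (-4) * I_sq
  have heta := ModularForm.eta_comp_eq_csqrt_I_inv him
  simp only [Function.comp_apply, hinv, Pi.smul_apply, Pi.mul_apply, smul_eq_mul,
    sqrt_I_mul (re_div_two_pi_pos hz)] at heta
  rw [heta, mul_assoc, inv_mul_cancel_left₀ hI]

lemma ofReal_mul_cpow {r : ℝ} (hr : 0 < r) {z : ℂ} (hz : z ≠ 0) (s : ℂ) :
    ((r : ℂ) * z) ^ s = (r : ℂ) ^ s * z ^ s := by
  have hr0 : (r : ℂ) ≠ 0 := ofReal_ne_zero.2 hr.ne'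
  rw [cpow_def_of_ne_zero (mul_ne_zero hr0 hz), cpow_def_of_ne_zero hr0, cpow_def_of_ne_zero hz,
    log_ofReal_mul hr hz, ofReal_log hr.le, add_mul, exp_add]

lemma sqrt_div_two_pi {z : ℂ} (hz : z ≠ 0) :
    sqrt (z / (2 * π)) = ((√(2 * π))⁻¹ : ℝ) * z ^ (1 / 2 : ℂ) := by
  have hscale : z / (2 * π) = (((2 * π)⁻¹ : ℝ) : ℂ) * z := by push_cast; field_simp
  have hsqrt : (((2 * π)⁻¹ : ℝ) : ℂ) ^ (1 / 2 : ℂ) = ((√(2 * π))⁻¹ : ℝ) := by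
    rw [← Real.sqrt_inv, Real.sqrt_eq_rpow, ofReal_cpow (by positivity)]
    norm_num
  rw [← hsqrt, ← ofReal_mul_cpow (by positivity) hz, ← hscale, sqrt, one_div]

/-- The factor by which the modular transformation `z ↦ 4π² / z` multiplies
`partitionGen (exp (-z))`; it is the main term of `partitionGen (exp (-z))` as `z → 0`. -/
noncomputable def singularPart (z : ℂ) : ℂ :=
  ((√(2 * π))⁻¹ : ℝ) * z ^ (1 / 2 : ℂ) * cexp ((4 * π ^ 2 / z - z) / 24)

lemma partitionGen_exp_neg {z : ℂ} (hz : 0 < z.re) :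
    partitionGen (cexp (-z)) = singularPart z * partitionGen (cexp (-(4 * π ^ 2 / z))) := by
  have heta := eta_mul_partitionGen hz
  have heta_dual := eta_mul_partitionGen (re_four_pi_sq_div_pos hz)
  rw [eta_four_pi_sq_div hz, sqrt_div_two_pi (ne_zero_of_re_pos hz)] at heta_dual
  have heta0 : ModularForm.eta (I * (z / (2 * π))) ≠ 0 :=
    left_ne_zero_of_mul (heta ▸ exp_ne_zero _)
  have hexp : cexp ((4 * π ^ 2 / z - z) / 24) * cexp (-(4 * π ^ 2 / z) / 24) =
      cexp (-z / 24) := by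
    rw [← exp_add]
    ring_nf
  refine mul_left_cancel₀ heta0 ?_
  rw [heta, singularPart, ← hexp, ← heta_dual]
  ring

lemma norm_cpow_half (z : ℂ) : ‖z ^ (1 / 2 : ℂ)‖ = √‖z‖ := by
  rw [show (1 / 2 : ℂ) = ((1 / 2 : ℝ) : ℂ) by push_cast; rfl, norm_cpow_real, Real.sqrt_eq_rpow]

lemma norm_singularPart (z : ℂ) :
    ‖singularPart z‖ = (√(2 * π))⁻¹ * √‖z‖ * Real.exp (((4 * π ^ 2 / z).re - z.re) / 24) := by
  rw [singularPart, norm_mul, norm_mul, norm_cpow_half, Complex.norm_exp, norm_real,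
    Real.norm_of_nonneg (by positivity), show (24 : ℂ) = ((24 : ℝ) : ℂ) by push_cast; rfl,
    div_ofReal_re, sub_re]

lemma norm_partitionGen_ofReal {r : ℝ} (hr : 0 ≤ r) :
    ‖partitionGen r‖ = ∑' n, (partitionCount n : ℝ) * r ^ n := by
  have hcast : partitionGen r = ((∑' n, (partitionCount n : ℝ) * r ^ n : ℝ) : ℂ) := by
    rw [partitionGen, ofReal_tsum]
    push_cast
    rfl
  rw [hcast, norm_real, Real.norm_of_nonneg (tsum_nonneg fun n ↦ by positivity)]

lemma tsum_partitionCount_mul_exp_neg_pow {y : ℝ} (hy : 0 < y) :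
    ∑' n, (partitionCount n : ℝ) * Real.exp (-y) ^ n =
      (√(2 * π))⁻¹ * √y * Real.exp ((4 * π ^ 2 / y - y) / 24) *
        ∑' n, (partitionCount n : ℝ) * Real.exp (-(4 * π ^ 2 / y)) ^ n := by
  have hdiv : (4 * π ^ 2 / y : ℂ) = ((4 * π ^ 2 / y : ℝ) : ℂ) := by push_cast; rfl
  have h := congrArg norm (partitionGen_exp_neg (z := y) (by simpa using hy))
  rwa [norm_mul, norm_singularPart, hdiv, ← ofReal_neg, ← ofReal_neg, ← ofReal_exp, ← ofReal_exp,
    norm_partitionGen_ofReal (Real.exp_pos _).le, norm_partitionGen_ofReal (Real.exp_pos _).le,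
    norm_real, Real.norm_of_nonneg hy.le, ofReal_re, ofReal_re] at h

lemma tsum_partitionCount_mul_pow_le_two {r : ℝ} (hr0 : 0 ≤ r) (hr : r ≤ 1 / 7) :
    ∑' n, (partitionCount n : ℝ) * r ^ n ≤ 2 := by
  have hexponent : r / (1 - r) ^ 2 ≤ 1 / 2 := by
    rw [div_le_iff₀ (by nlinarith)]
    nlinarith
  calc _ ≤ Real.exp (r / (1 - r) ^ 2) := tsum_partitionCount_mul_pow_le hr0 (by linarith)
    _ ≤ Real.exp (1 / 2) := Real.exp_le_exp.2 hexponent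
    _ ≤ 2 := by
      have hsq : Real.exp (1 / 2) ^ 2 = Real.exp 1 := by rw [← Real.exp_nat_mul]; norm_num
      exact le_of_sq_le_sq (by linarith [Real.exp_one_lt_d9]) (by norm_num)

lemma exp_neg_two_pi_le : Real.exp (-(2 * π)) ≤ 1 / 7 := by
  rw [Real.exp_neg, ← one_div]
  gcongr
  linarith [Real.add_one_le_exp (2 * π), Real.pi_gt_three]

lemma exp_mul_tsum_partitionCount_le {y : ℝ} (hy0 : 0 < y) (hy : y ≤ 2 * π) :
    Real.exp (y / 24) * ∑' n, (partitionCount n : ℝ) * Real.exp (-y) ^ n ≤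
      √y * Real.exp (π ^ 2 / (6 * y)) := by
  have hdual : Real.exp (-(4 * π ^ 2 / y)) ≤ 1 / 7 := by
    refine (Real.exp_le_exp.2 ?_).trans exp_neg_two_pi_le
    rw [neg_le_neg_iff, le_div_iff₀ hy0]
    nlinarith [Real.pi_pos]
  have hsqrt : (√(2 * π))⁻¹ ≤ 1 / 2 := by
    rw [← one_div]
    gcongr
    exact Real.le_sqrt_of_sq_le (by linarith [Real.pi_gt_three])
  have hexp : Real.exp (y / 24) * Real.exp ((4 * π ^ 2 / y - y) / 24) =
      Real.exp (π ^ 2 / (6 * y)) := by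
    rw [← Real.exp_add]
    congr 1
    field_simp
    ring
  rw [tsum_partitionCount_mul_exp_neg_pow hy0, ← hexp]
  calc _ = √y * (Real.exp (y / 24) * Real.exp ((4 * π ^ 2 / y - y) / 24)) *
        ((√(2 * π))⁻¹ * ∑' n, (partitionCount n : ℝ) * Real.exp (-(4 * π ^ 2 / y)) ^ n) := by ring
    _ ≤ √y * (Real.exp (y / 24) * Real.exp ((4 * π ^ 2 / y - y) / 24)) * (1 / 2 * 2) := by
      gcongr
      exact tsum_partitionCount_mul_pow_le_two (Real.exp_pos _).le hdual
    _ = _ := by ring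

lemma norm_partitionGen_sub_one_le {q : ℂ} (hq : ‖q‖ < 1) :
    ‖partitionGen q - 1‖ ≤ ∑' n, (partitionCount (n + 1) : ℝ) * ‖q‖ ^ (n + 1) := by
  have hsum := summable_norm_partitionCount_mul_pow hq
  have hsub : partitionGen q - 1 = ∑' n, (partitionCount (n + 1) : ℂ) * q ^ (n + 1) := by
    rw [partitionGen, hsum.of_norm.tsum_eq_zero_add, partitionCount_zero]
    simp
  have htail : Summable fun n ↦ ‖(partitionCount (n + 1) : ℂ) * q ^ (n + 1)‖ :=
    (summable_nat_add_iff 1).2 hsum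
  simpa only [hsub, norm_mul, norm_pow, norm_natCast] using norm_tsum_le_tsum_norm htail

-- Each term `exp (y / 24) * p(n) * exp (-n * y)` with `n ≥ 1` decreases in `y`.
lemma exp_mul_norm_partitionGen_sub_one_le {w : ℂ} {y : ℝ} (hy : 0 < y) (hw : y ≤ w.re) :
    Real.exp (w.re / 24) * ‖partitionGen (cexp (-w)) - 1‖ ≤
      Real.exp (y / 24) * ∑' n, (partitionCount n : ℝ) * Real.exp (-y) ^ n := by
  have hsum {x : ℝ} (hx : 0 < x) := summable_partitionCount_mul_pow (Real.exp_pos (-x)).le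
    (Real.exp_lt_one_iff.2 (neg_neg_of_pos hx))
  have hterm (n : ℕ) :
      Real.exp (w.re / 24) * ((partitionCount (n + 1) : ℝ) * Real.exp (-w.re) ^ (n + 1)) ≤
        Real.exp (y / 24) * ((partitionCount (n + 1) : ℝ) * Real.exp (-y) ^ (n + 1)) := by
    rw [mul_left_comm, mul_left_comm (Real.exp (y / 24)), ← Real.exp_nat_mul, ← Real.exp_nat_mul,
      ← Real.exp_add, ← Real.exp_add]
    gcongr ?_ * Real.exp ?_
    push_cast
    nlinarith [n.cast_nonneg (α := ℝ)]
  have hnorm : ‖cexp (-w)‖ = Real.exp (-w.re) := by rw [Complex.norm_exp, neg_re]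
  calc _ ≤ Real.exp (w.re / 24) *
        ∑' n, (partitionCount (n + 1) : ℝ) * Real.exp (-w.re) ^ (n + 1) := by
        gcongr
        exact hnorm ▸ norm_partitionGen_sub_one_le (norm_exp_neg_lt_one (hy.trans_le hw))
    _ ≤ Real.exp (y / 24) * ∑' n, (partitionCount (n + 1) : ℝ) * Real.exp (-y) ^ (n + 1) := by
        rw [← tsum_mul_left, ← tsum_mul_left]
        exact Summable.tsum_le_tsum hterm
          (((summable_nat_add_iff 1).2 (hsum (hy.trans_le hw))).mul_left _)
          (((summable_nat_add_iff 1).2 (hsum hy)).mul_left _)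
    _ ≤ _ := by
        rw [(hsum hy).tsum_eq_zero_add]
        gcongr
        exact le_add_of_nonneg_left (by positivity)

lemma le_re_four_pi_sq_div {z : ℂ} (hre : 0 < z.re) (him : |z.im| ≤ π) :
    4 * π ^ 2 * z.re / (z.re ^ 2 + π ^ 2) ≤ (4 * π ^ 2 / z).re := by
  have hz0 : 0 < normSq z := normSq_pos.2 (ne_zero_of_re_pos hre)
  rw [re_four_pi_sq_div]
  gcongr
  rw [normSq_apply, ← sq, ← sq, ← sq_abs z.im]
  gcongr

lemma norm_partitionGen_exp_neg_sub_le {z : ℂ} (hre0 : 0 < z.re) (hre1 : z.re ≤ 1)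
    (him : |z.im| ≤ π) : ‖partitionGen (cexp (-z)) - singularPart z‖ ≤
      2 * √z.re * Real.exp (π ^ 2 / (24 * z.re)) := by
  set s := z.re
  set w : ℂ := 4 * π ^ 2 / z
  set y := 4 * π ^ 2 * s / (s ^ 2 + π ^ 2) with hy
  have hy0 : 0 < y := by positivity
  have hy4 : y ≤ 4 * s := by
    rw [hy, div_le_iff₀ (by positivity)]
    nlinarith [pow_pos hre0 3]
  have hdual := (exp_mul_norm_partitionGen_sub_one_le hy0 (le_re_four_pi_sq_div hre0 him)).trans
    (exp_mul_tsum_partitionCount_le hy0 (by linarith [Real.pi_gt_three]))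
  have hscale : (√(2 * π))⁻¹ * √‖z‖ ≤ 1 := by
    rw [inv_mul_le_iff₀ (by positivity), mul_one]
    refine Real.sqrt_le_sqrt ((norm_le_abs_re_add_abs_im z).trans ?_)
    rw [abs_of_pos hre0]
    linarith [Real.pi_gt_three]
  have hsqrt : √y ≤ 2 * √s := by
    rw [← Real.sqrt_sq (zero_le_two (α := ℝ)), ← Real.sqrt_mul (by positivity)]
    exact Real.sqrt_le_sqrt (by linarith)
  have hexp : Real.exp (-(s / 24)) * Real.exp (π ^ 2 / (6 * y)) = Real.exp (π ^ 2 / (24 * s)) := by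
    rw [← Real.exp_add, hy]
    congr 1
    field_simp
    ring
  calc ‖partitionGen (cexp (-z)) - singularPart z‖
      = ((√(2 * π))⁻¹ * √‖z‖) * Real.exp (-(s / 24)) *
          (Real.exp (w.re / 24) * ‖partitionGen (cexp (-w)) - 1‖) := by
        rw [partitionGen_exp_neg hre0, ← mul_sub_one, norm_mul, norm_singularPart, sub_div,
          sub_eq_neg_add, Real.exp_add]
        ring
    _ ≤ 1 * Real.exp (-(s / 24)) * (2 * √s * Real.exp (π ^ 2 / (6 * y))) := by
        gcongr ?_ * _ * ?_
        exact hdual.trans (by gcongr)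
    _ = _ := by rw [← hexp]; ring

/-! ### Coefficient extraction -/

lemma integral_cexp_int_mul (k : ℤ) :
    ∫ θ in (-π)..π, cexp (k * (θ * I)) = if k = 0 then (2 * π : ℂ) else 0 := by
  split_ifs with hk
  · simp [hk, two_mul]
  · have hperiodic : cexp (k * I * π) = cexp (k * I * (-π : ℝ)) :=
      Complex.exp_eq_exp_iff_exists_int.2 ⟨k, by push_cast; ring⟩
    simp_rw [mul_comm (_ : ℂ) I, ← mul_assoc]
    rw [integral_exp_mul_complex (by simp [hk]), hperiodic, sub_self, zero_div]

lemma norm_cexp_neg_add_mul_I (s θ : ℝ) : ‖cexp (-(s + θ * I))‖ = Real.exp (-s) := by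
  simp [Complex.norm_exp]

lemma norm_cexp_nat_mul_add_mul_I (n : ℕ) (s θ : ℝ) :
    ‖cexp (n * (s + θ * I))‖ = Real.exp (n * s) := by
  simp [Complex.norm_exp]

lemma continuous_partitionGen_exp_neg {s : ℝ} (hs : 0 < s) :
    Continuous fun θ : ℝ ↦ partitionGen (cexp (-(s + θ * I))) := by
  unfold partitionGen
  refine continuous_tsum (fun m ↦ by fun_prop)
    (summable_partitionCount_mul_pow (Real.exp_pos (-s)).le (by simpa using hs)) fun m θ ↦ ?_
  rw [norm_mul, norm_pow, norm_cexp_neg_add_mul_I, Complex.norm_natCast]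

lemma integral_mul_exp_neg_pow_mul_exp (c : ℂ) (s : ℝ) (m n : ℕ) :
    ∫ θ in (-π)..π, c * cexp (-(s + θ * I)) ^ m * cexp (n * (s + θ * I)) =
      if m = n then 2 * π * c else 0 := by
  have hterm (θ : ℝ) : c * cexp (-(s + θ * I)) ^ m * cexp (n * (s + θ * I)) =
      c * cexp (((n : ℝ) - m) * s) * cexp (((n - m : ℤ) : ℂ) * (θ * I)) := by
    rw [← Complex.exp_nat_mul, mul_assoc, mul_assoc, ← Complex.exp_add, ← Complex.exp_add]
    congr 2
    push_cast
    ring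
  simp_rw [hterm]
  rw [intervalIntegral.integral_const_mul, integral_cexp_int_mul]
  rcases eq_or_ne m n with rfl | hmn
  · simp [mul_comm]
  · rw [if_neg hmn, if_neg (by omega), mul_zero]

lemma integral_tsum_mul_exp_neg_pow_mul_exp {a : ℕ → ℂ} {s : ℝ}
    (ha : Summable fun m ↦ ‖a m‖ * Real.exp (-s) ^ m) (n : ℕ) :
    ∫ θ in (-π)..π, (∑' m, a m * cexp (-(s + θ * I)) ^ m) * cexp (n * (s + θ * I)) =
      2 * π * a n := by
  have hnorm (m : ℕ) (θ : ℝ) :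
      ‖a m * cexp (-(s + θ * I)) ^ m‖ = ‖a m‖ * Real.exp (-s) ^ m := by
    rw [norm_mul, norm_pow, norm_cexp_neg_add_mul_I]
  have hsum := intervalIntegral.hasSum_integral_of_dominated_convergence (a := -π) (b := π)
    (μ := volume)
    (F := fun m (θ : ℝ) ↦ a m * cexp (-(s + θ * I)) ^ m * cexp (n * (s + θ * I)))
    (f := fun θ : ℝ ↦ (∑' m, a m * cexp (-(s + θ * I)) ^ m) * cexp (n * (s + θ * I)))
    (fun m _ ↦ ‖a m‖ * Real.exp (-s) ^ m * Real.exp (n * s))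
    (fun m ↦ Continuous.aestronglyMeasurable (by fun_prop))
    (fun m ↦ .of_forall fun θ _ ↦ by rw [norm_mul, hnorm, norm_cexp_nat_mul_add_mul_I])
    (.of_forall fun _ _ ↦ ha.mul_right _) intervalIntegrable_const
    (.of_forall fun θ _ ↦ ((ha.congr fun m ↦ (hnorm m θ).symm).of_norm.hasSum.mul_right _))
  simp_rw [integral_mul_exp_neg_pow_mul_exp] at hsum
  simpa using hsum.unique (hasSum_single n fun m hm ↦ if_neg hm)

lemma integral_partitionGen_mul_exp {s : ℝ} (hs : 0 < s) (n : ℕ) :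
    ∫ θ in (-π)..π, partitionGen (cexp (-(s + θ * I))) * cexp (n * (s + θ * I)) =
      2 * π * partitionCount n := by
  refine integral_tsum_mul_exp_neg_pow_mul_exp ?_ n
  simpa only [Complex.norm_natCast] using
    summable_partitionCount_mul_pow (Real.exp_pos (-s)).le (by simpa using hs)

lemma continuous_add_mul_I_cpow_mul_exp {s : ℝ} (hs : 0 < s) (a b : ℂ) :
    Continuous fun θ : ℝ ↦ (s + θ * I) ^ (1 / 2 : ℂ) *
      cexp (a / (s + θ * I) + b * (s + θ * I)) := by
  have hslit (θ : ℝ) : (s + θ * I : ℂ) ∈ slitPlane := Or.inl (by simpa using hs)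
  refine .mul (.cpow (by fun_prop) continuous_const hslit) (continuous_exp.comp (.add ?_ ?_))
  · exact .div continuous_const (by fun_prop) fun θ ↦ slitPlane_ne_zero (hslit θ)
  · fun_prop

lemma singularPart_mul_exp (n : ℕ) (z : ℂ) : singularPart z * cexp (n * z) =
    ((√(2 * π))⁻¹ : ℝ) * (z ^ (1 / 2 : ℂ) * cexp (π ^ 2 / 6 / z + (n - 1 / 24) * z)) := by
  rw [singularPart, mul_assoc, mul_assoc, ← Complex.exp_add]
  ring_nf

lemma norm_two_pi_mul_partitionCount_sub_le {s : ℝ} (hs0 : 0 < s) (hs1 : s ≤ 1) (n : ℕ) :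
    ‖2 * π * (partitionCount n : ℂ) - ((√(2 * π))⁻¹ : ℝ) *
        ∫ θ in (-π)..π, (s + θ * I) ^ (1 / 2 : ℂ) *
          cexp (π ^ 2 / 6 / (s + θ * I) + (n - 1 / 24) * (s + θ * I))‖ ≤
      2 * π * (2 * √s * Real.exp (π ^ 2 / (24 * s)) * Real.exp (n * s)) := by
  have hgen : Continuous fun θ : ℝ ↦
      partitionGen (cexp (-(s + θ * I))) * cexp (n * (s + θ * I)) :=
    (continuous_partitionGen_exp_neg hs0).mul (by fun_prop)
  have hsing := (continuous_add_mul_I_cpow_mul_exp hs0 (π ^ 2 / 6) (n - 1 / 24)).const_mul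
    ((√(2 * π))⁻¹ : ℝ)
  rw [← integral_partitionGen_mul_exp hs0, ← intervalIntegral.integral_const_mul,
    ← intervalIntegral.integral_sub (hgen.intervalIntegrable _ _) (hsing.intervalIntegrable _ _)]
  have hbound (θ : ℝ) (hθ : θ ∈ Set.uIoc (-π) π) :
      ‖partitionGen (cexp (-(s + θ * I))) * cexp (n * (s + θ * I)) - ((√(2 * π))⁻¹ : ℝ) *
        ((s + θ * I) ^ (1 / 2 : ℂ) *
          cexp (π ^ 2 / 6 / (s + θ * I) + (n - 1 / 24) * (s + θ * I)))‖ ≤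
      2 * √s * Real.exp (π ^ 2 / (24 * s)) * Real.exp (n * s) := by
    rw [Set.uIoc_of_le (neg_le_self Real.pi_pos.le)] at hθ
    have hcircle := norm_partitionGen_exp_neg_sub_le (z := s + θ * I) (by simpa using hs0)
      (by simpa using hs1) (by simpa using abs_le.2 ⟨hθ.1.le, hθ.2⟩)
    rw [← singularPart_mul_exp, ← sub_mul, norm_mul, norm_cexp_nat_mul_add_mul_I]
    gcongr
    simpa using hcircle
  refine (intervalIntegral.norm_integral_le_of_norm_le_const hbound).trans_eq ?_
  rw [sub_neg_eq_add, ← two_mul, abs_of_pos Real.two_pi_pos, mul_comm]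

/-! ### An antiderivative of `exp (z ^ 2)` -/

lemma exists_hasDerivAt_cexp_sq : ∃ F : ℂ → ℂ, ∀ z, HasDerivAt F (cexp (z ^ 2)) z := by
  have hdiff : Differentiable ℂ fun z : ℂ ↦ cexp (z ^ 2) := by fun_prop
  obtain ⟨F, hF⟩ := hdiff.isExactOn_univ
  exact ⟨F, fun z ↦ hF z (Set.mem_univ z)⟩

/-- An entire antiderivative of `exp (z ^ 2)`; its additive constant is irrelevant, since only
differences of its values occur. -/
noncomputable def expSqPrimitive : ℂ → ℂ := exists_hasDerivAt_cexp_sq.choose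

lemma hasDerivAt_expSqPrimitive (z : ℂ) : HasDerivAt expSqPrimitive (cexp (z ^ 2)) z :=
  exists_hasDerivAt_cexp_sq.choose_spec z

lemma expSqPrimitive_add_mul_sub (ζ c : ℂ) (a b : ℝ) :
    expSqPrimitive (ζ + b * c) - expSqPrimitive (ζ + a * c) =
      ∫ t in a..b, cexp ((ζ + t * c) ^ 2) * c := by
  refine (intervalIntegral.integral_eq_sub_of_hasDerivAt
    (f := fun t : ℝ ↦ expSqPrimitive (ζ + t * c)) (fun t _ ↦ ?_)
    (Continuous.intervalIntegrable (by fun_prop) _ _)).symm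
  have hline : HasDerivAt (fun t : ℝ ↦ ζ + t * c) c t := by
    simpa using ((hasDerivAt_id t).ofReal_comp.mul_const c).const_add ζ
  exact (hasDerivAt_expSqPrimitive (ζ + t * c)).comp t hline

lemma integral_exp_neg_sq_le {T : ℝ} (hT : 0 ≤ T) : ∫ t in 0..T, Real.exp (-t ^ 2) ≤ √π / 2 := by
  have hgauss := integral_gaussian_Ioi 1
  have hint := integrable_exp_neg_mul_sq one_pos
  simp only [div_one, neg_mul, one_mul] at hgauss hint
  rw [← hgauss, intervalIntegral.integral_of_le hT]
  exact setIntegral_mono_set hint.integrableOn (.of_forall fun t ↦ (Real.exp_pos _).le)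
    Set.Ioc_subset_Ioi_self.eventuallyLE

lemma norm_expSqPrimitive_add_mul_sub_le {ζ c : ℂ} (hc : c ^ 2 = -1) (hζ : (ζ * c).re ≤ 0)
    {T : ℝ} (hT : 0 ≤ T) : ‖expSqPrimitive (ζ + T * c) - expSqPrimitive ζ‖ ≤
      √π / 2 * Real.exp (ζ ^ 2).re := by
  have hnorm_c : ‖c‖ = 1 := by
    rw [← sq_eq_sq₀ (norm_nonneg c) zero_le_one, ← norm_pow, hc, norm_neg, norm_one, one_pow]
  have hbound (t : ℝ) (ht : t ∈ Set.Ioc 0 T) :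
      ‖cexp ((ζ + t * c) ^ 2) * c‖ ≤ Real.exp (-t ^ 2) * Real.exp (ζ ^ 2).re := by
    have hsq : (ζ + t * c) ^ 2 = ((-t ^ 2 : ℝ) : ℂ) + ((2 * t : ℝ) : ℂ) * (ζ * c) + ζ ^ 2 := by
      push_cast
      linear_combination (t : ℂ) ^ 2 * hc
    have hcross : 2 * t * (ζ * c).re ≤ 0 :=
      mul_nonpos_of_nonneg_of_nonpos (by linarith [ht.1]) hζ
    rw [norm_mul, hnorm_c, mul_one, Complex.norm_exp, ← Real.exp_add, hsq, add_re, add_re,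
      re_ofReal_mul, ofReal_re]
    exact Real.exp_le_exp.2 (by linarith)
  calc _ = ‖∫ t in 0..T, cexp ((ζ + t * c) ^ 2) * c‖ := by
        rw [← expSqPrimitive_add_mul_sub, ofReal_zero, zero_mul, add_zero]
    _ ≤ ∫ t in 0..T, Real.exp (-t ^ 2) * Real.exp (ζ ^ 2).re :=
        intervalIntegral.norm_integral_le_of_norm_le hT (.of_forall hbound)
          (Continuous.intervalIntegrable (by fun_prop) _ _)
    _ ≤ _ := by
        rw [intervalIntegral.integral_mul_const]
        gcongr
        exact integral_exp_neg_sq_le hT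

lemma tendsto_expSqPrimitive_add_mul_I_sub (ζ : ℂ) :
    Tendsto (fun T : ℝ ↦ expSqPrimitive (ζ + T * I) - expSqPrimitive (ζ + (-T : ℝ) * I)) atTop
      (𝓝 (√π * I)) := by
  simp_rw [expSqPrimitive_add_mul_sub]
  have hre : (-1 : ℂ).re < 0 := by simp
  have hsq (t : ℝ) : (ζ + t * I) ^ 2 = -1 * t ^ 2 + 2 * ζ * I * t + ζ ^ 2 := by
    linear_combination (t : ℂ) ^ 2 * I_sq
  have hint : Integrable fun t : ℝ ↦ cexp ((ζ + t * I) ^ 2) * I := by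
    simp_rw [hsq]
    exact (integrable_cexp_quadratic' hre (2 * ζ * I) (ζ ^ 2)).mul_const I
  have hval : ∫ t : ℝ, cexp ((ζ + t * I) ^ 2) * I = √π * I := by
    have hshift : ζ ^ 2 - (2 * ζ * I) ^ 2 / (4 * -1) = 0 := by
      linear_combination ζ ^ 2 * I_sq
    rw [integral_mul_const]
    simp_rw [hsq]
    rw [integral_cexp_quadratic hre, hshift, Complex.exp_zero, mul_one, neg_neg, div_one,
      Real.sqrt_eq_rpow, ofReal_cpow Real.pi_pos.le]
    norm_num
  rw [← hval]
  exact intervalIntegral_tendsto_integral hint tendsto_neg_atTop_atBot tendsto_id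

-- Extend the segment from `conj ζ` to `ζ` to the whole vertical line; the two tails are small.
lemma norm_expSqPrimitive_sub_conj_sub_le {ζ : ℂ} (hζ : 0 ≤ ζ.im) :
    ‖expSqPrimitive ζ - expSqPrimitive (conj ζ) - √π * I‖ ≤ √π * Real.exp (ζ ^ 2).re := by
  have hline := (tendsto_expSqPrimitive_add_mul_I_sub ζ.re).comp
    (tendsto_atTop_add_const_left _ ζ.im tendsto_id)
  refine le_of_tendsto (tendsto_const_nhds.sub hline).norm
    ((eventually_ge_atTop 0).mono fun T hT ↦ ?_)
  have hupper := norm_expSqPrimitive_add_mul_sub_le (ζ := ζ) I_sq (by simpa using hζ) hT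
  have hlower := norm_expSqPrimitive_add_mul_sub_le (ζ := conj ζ) (c := -I) (by simp)
    (by simpa using hζ) hT
  rw [← map_pow, conj_re] at hlower
  have htop : (ζ.re : ℂ) + (ζ.im + T : ℝ) * I = ζ + T * I := by
    apply Complex.ext <;> simp
  have hbottom : (ζ.re : ℂ) + (-(ζ.im + T) : ℝ) * I = conj ζ + T * -I := by
    apply Complex.ext <;> simp [add_comm]
  simp only [Function.comp_apply, id_eq, htop, hbottom]
  calc _ = ‖(expSqPrimitive (conj ζ + T * -I) - expSqPrimitive (conj ζ)) -
          (expSqPrimitive (ζ + T * I) - expSqPrimitive ζ)‖ := by ring_nf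
    _ ≤ _ := (norm_sub_le _ _).trans (by linarith)

/-! ### The Bessel-type integral -/

/-- The exponential factor `exp (α ^ 2 / z + ξ ^ 2 * z)` of the circle integral, in the variable
`w = √z`. -/
noncomputable def besselKernel (α ξ : ℝ) (w : ℂ) : ℂ := cexp (α ^ 2 / w ^ 2 + ξ ^ 2 * w ^ 2)

/-- The algebraic factor of `exp (2 * α * ξ)` in the value of the circle integral. -/
noncomputable def besselWeight (α ξ : ℝ) : ℝ := α / ξ ^ 2 - 1 / (2 * ξ ^ 3)

/-- The contribution of `exp (z ^ 2)` to the antiderivative `besselPrimitive`. -/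
noncomputable def erfiTerm (α ξ : ℝ) (w : ℂ) : ℂ :=
  (Real.exp (2 * α * ξ) * besselWeight α ξ : ℝ) * expSqPrimitive (ξ * w - α / w)

/-- An antiderivative of `2 * w ^ 2 * besselKernel α ξ w`, found by completing the square in the
exponent in the two ways `(ξ * w - α / w) ^ 2 + 2 * α * ξ` and `(ξ * w + α / w) ^ 2 - 2 * α * ξ`. -/
noncomputable def besselPrimitive (α ξ : ℝ) (w : ℂ) : ℂ :=
  w * besselKernel α ξ w / ξ ^ 2 + erfiTerm α ξ w + erfiTerm (-α) ξ w

lemma besselKernel_neg (α ξ : ℝ) (w : ℂ) : besselKernel (-α) ξ w = besselKernel α ξ w := by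
  simp [besselKernel]

lemma besselKernel_conj (α ξ : ℝ) (w : ℂ) :
    besselKernel α ξ (conj w) = conj (besselKernel α ξ w) := by
  simp [besselKernel, ← exp_conj]

lemma exp_mul_cexp_sub_sq (α ξ : ℝ) {w : ℂ} (hw : w ≠ 0) :
    (Real.exp (2 * α * ξ) : ℂ) * cexp ((ξ * w - α / w) ^ 2) = besselKernel α ξ w := by
  rw [besselKernel, ofReal_exp, ← Complex.exp_add]
  congr 1
  push_cast
  field_simp
  ring

lemma hasDerivAt_erfiTerm (α ξ : ℝ) {w : ℂ} (hw : w ≠ 0) :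
    HasDerivAt (erfiTerm α ξ) (besselWeight α ξ * (ξ + α / w ^ 2) * besselKernel α ξ w) w := by
  have harg : HasDerivAt (fun w : ℂ ↦ ξ * w - α / w) (ξ + α / w ^ 2) w := by
    simp_rw [div_eq_mul_inv]
    exact (((hasDerivAt_id w).const_mul (ξ : ℂ)).sub
      ((hasDerivAt_inv hw).const_mul (α : ℂ))).congr_deriv (by ring)
  refine (((hasDerivAt_expSqPrimitive _).comp w harg).const_mul _).congr_deriv ?_
  rw [← exp_mul_cexp_sub_sq α ξ hw]
  push_cast
  ring

lemma hasDerivAt_besselKernel (α ξ : ℝ) {w : ℂ} (hw : w ≠ 0) :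
    HasDerivAt (besselKernel α ξ)
      (besselKernel α ξ w * (2 * ξ ^ 2 * w - 2 * α ^ 2 / w ^ 3)) w := by
  have hinv : HasDerivAt (fun w : ℂ ↦ (α : ℂ) ^ 2 / w ^ 2) (-(2 * α ^ 2 / w ^ 3)) w := by
    refine ((hasDerivAt_const w ((α : ℂ) ^ 2)).div (hasDerivAt_pow 2 w)
      (pow_ne_zero 2 hw)).congr_deriv ?_
    push_cast
    field_simp
    ring
  have hsq : HasDerivAt (fun w : ℂ ↦ (ξ : ℂ) ^ 2 * w ^ 2) (2 * ξ ^ 2 * w) w := by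
    refine ((hasDerivAt_pow 2 w).const_mul ((ξ : ℂ) ^ 2)).congr_deriv ?_
    push_cast
    ring
  exact (hinv.add hsq).cexp.congr_deriv (by rw [besselKernel, Pi.add_apply]; ring)

lemma hasDerivAt_besselPrimitive (α : ℝ) {ξ : ℝ} (hξ : ξ ≠ 0) {w : ℂ} (hw : w ≠ 0) :
    HasDerivAt (besselPrimitive α ξ) (2 * w ^ 2 * besselKernel α ξ w) w := by
  have hξ' : (ξ : ℂ) ≠ 0 := ofReal_ne_zero.2 hξ
  refine (((((hasDerivAt_id w).mul (hasDerivAt_besselKernel α ξ hw)).div_const (ξ ^ 2 : ℂ)).add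
    (hasDerivAt_erfiTerm α ξ hw)).add (hasDerivAt_erfiTerm (-α) ξ hw)).congr_deriv ?_
  rw [besselKernel_neg, besselWeight, besselWeight]
  push_cast
  simp only [id]
  field_simp
  ring

lemma cpow_half_sq (z : ℂ) : (z ^ (1 / 2 : ℂ)) ^ 2 = z := by
  simp

lemma hasDerivAt_add_mul_I_cpow_half {s : ℝ} (hs : 0 < s) (θ : ℝ) :
    HasDerivAt (fun θ : ℝ ↦ (s + θ * I : ℂ) ^ (1 / 2 : ℂ))
      (I / (2 * (s + θ * I : ℂ) ^ (1 / 2 : ℂ))) θ := by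
  have hslit : (s + θ * I : ℂ) ∈ slitPlane := Or.inl (by simpa using hs)
  have hline : HasDerivAt (fun t : ℝ ↦ (s + t * I : ℂ)) I θ := by
    simpa using ((hasDerivAt_id θ).ofReal_comp.mul_const I).const_add (s : ℂ)
  refine (((hasDerivAt_id (s + θ * I : ℂ)).cpow_const (c := 1 / 2) hslit).comp θ
    hline).congr_deriv ?_
  rw [show (1 / 2 - 1 : ℂ) = -(1 / 2) by norm_num, cpow_neg, id]
  field_simp

lemma integral_eq_besselPrimitive_sub (α : ℝ) {ξ s : ℝ} (hξ : ξ ≠ 0) (hs : 0 < s) (b : ℝ) :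
    I * ∫ θ in (-b)..b, (s + θ * I) ^ (1 / 2 : ℂ) *
        cexp (α ^ 2 / (s + θ * I) + ξ ^ 2 * (s + θ * I)) =
      besselPrimitive α ξ ((s + b * I) ^ (1 / 2 : ℂ)) -
        besselPrimitive α ξ (conj ((s + b * I) ^ (1 / 2 : ℂ))) := by
  have hslit (θ : ℝ) : (s + θ * I : ℂ) ∈ slitPlane := Or.inl (by simpa using hs)
  have hconj : conj ((s + b * I : ℂ) ^ (1 / 2 : ℂ)) = (s + (-b : ℝ) * I : ℂ) ^ (1 / 2 : ℂ) := by
    have hbase : (s + (-b : ℝ) * I : ℂ) = conj (s + b * I : ℂ) := by simp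
    rw [hbase, conj_cpow _ _ (slitPlane_arg_ne_pi (hslit b)), map_div₀, map_one, map_ofNat]
  rw [hconj, ← intervalIntegral.integral_const_mul]
  refine intervalIntegral.integral_eq_sub_of_hasDerivAt
    (f := fun θ : ℝ ↦ besselPrimitive α ξ ((s + θ * I : ℂ) ^ (1 / 2 : ℂ))) (fun θ _ ↦ ?_)
    (((continuous_add_mul_I_cpow_mul_exp hs _ _).const_mul I).intervalIntegrable _ _)
  have hw : (s + θ * I : ℂ) ^ (1 / 2 : ℂ) ≠ 0 := by
    simp [cpow_eq_zero_iff, slitPlane_ne_zero (hslit θ)]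
  refine ((hasDerivAt_besselPrimitive α hξ hw).comp θ
    (hasDerivAt_add_mul_I_cpow_half hs θ)).congr_deriv ?_
  rw [besselKernel, cpow_half_sq]
  nth_rw 1 [← cpow_half_sq (s + θ * I)]
  field_simp

lemma im_mul_sub_div_nonneg {α ξ : ℝ} {w : ℂ} (hw : w ≠ 0) (him : 0 ≤ w.im)
    (hα : |α| ≤ ξ * ‖w‖ ^ 2) : 0 ≤ (ξ * w - α / w).im := by
  have hnorm : 0 < ‖w‖ ^ 2 := by positivity
  have hval : (ξ * w - α / w).im = w.im * (ξ + α / ‖w‖ ^ 2) := by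
    rw [sub_im, im_ofReal_mul, div_eq_mul_inv, im_ofReal_mul, inv_im, normSq_eq_norm_sq]
    ring
  rw [hval]
  refine mul_nonneg him (neg_le_iff_add_nonneg'.1 ?_)
  rw [neg_le, ← neg_div, div_le_iff₀ hnorm]
  linarith [neg_abs_le α]

lemma norm_erfiTerm_sub_conj_sub_le {α ξ : ℝ} {w : ℂ} (hw : w ≠ 0) (him : 0 ≤ w.im)
    (hα : |α| ≤ ξ * ‖w‖ ^ 2) :
    ‖erfiTerm α ξ w - erfiTerm α ξ (conj w) -
        (Real.exp (2 * α * ξ) * besselWeight α ξ : ℝ) * (√π * I)‖ ≤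
      √π * |besselWeight α ξ| * ‖besselKernel α ξ w‖ := by
  have hconj : ξ * conj w - α / conj w = conj (ξ * w - α / w) := by simp
  rw [erfiTerm, erfiTerm, hconj, ← mul_sub, ← mul_sub, norm_mul, norm_real, norm_mul,
    ← exp_mul_cexp_sub_sq α ξ hw, norm_mul, Complex.norm_exp, norm_real, Real.norm_eq_abs,
    Real.norm_eq_abs]
  calc _ ≤ |Real.exp (2 * α * ξ)| * |besselWeight α ξ| *
        (√π * Real.exp ((ξ * w - α / w) ^ 2).re) := by
        gcongr
        exact norm_expSqPrimitive_sub_conj_sub_le (im_mul_sub_div_nonneg hw him hα)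
    _ = _ := by ring

/-- The value of the circle integral of `√z * exp (α ^ 2 / z + ξ ^ 2 * z)`, up to the boundary
terms bounded in `norm_integral_sub_besselValue_le`. -/
noncomputable def besselValue (α ξ : ℝ) : ℝ :=
  √π * (Real.exp (2 * α * ξ) * besselWeight α ξ + Real.exp (2 * -α * ξ) * besselWeight (-α) ξ)

lemma norm_besselPrimitive_sub_conj_sub_le {α ξ : ℝ} {w : ℂ} (hw : w ≠ 0) (him : 0 ≤ w.im)
    (hα : |α| ≤ ξ * ‖w‖ ^ 2) :
    ‖besselPrimitive α ξ w - besselPrimitive α ξ (conj w) - I * besselValue α ξ‖ ≤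
      (2 * ‖w‖ / ξ ^ 2 + √π * (|besselWeight α ξ| + |besselWeight (-α) ξ|)) *
        ‖besselKernel α ξ w‖ := by
  have hpos := norm_erfiTerm_sub_conj_sub_le hw him hα
  have hneg := norm_erfiTerm_sub_conj_sub_le (α := -α) hw him (by rwa [abs_neg])
  rw [besselKernel_neg] at hneg
  have hbase : ‖(w * besselKernel α ξ w - conj (w * besselKernel α ξ w)) / (ξ : ℂ) ^ 2‖ ≤
      2 * ‖w‖ / ξ ^ 2 * ‖besselKernel α ξ w‖ := by
    rw [norm_div, norm_pow, norm_real, Real.norm_eq_abs, sq_abs, div_mul_eq_mul_div]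
    gcongr
    refine (norm_sub_le _ _).trans_eq ?_
    rw [norm_conj, norm_mul]
    ring
  refine (le_of_eq ?_).trans ((norm_add₃_le.trans (add_le_add_three hbase hpos hneg)).trans_eq ?_)
  · rw [besselPrimitive, besselPrimitive, besselValue, besselKernel_conj, map_mul]
    push_cast
    ring_nf
  · ring

lemma norm_besselKernel_cpow_half (α ξ : ℝ) (z : ℂ) :
    ‖besselKernel α ξ (z ^ (1 / 2 : ℂ))‖ =
      Real.exp (α ^ 2 * z.re / ‖z‖ ^ 2 + ξ ^ 2 * z.re) := by
  rw [besselKernel, cpow_half_sq, Complex.norm_exp, ← ofReal_pow, ← ofReal_pow, add_re,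
    re_ofReal_mul, div_eq_mul_inv, re_ofReal_mul, inv_re, normSq_eq_norm_sq, mul_div_assoc]

lemma norm_integral_sub_besselValue_le {α ξ s b : ℝ} (hξ : ξ ≠ 0) (hs : 0 < s) (hb : 0 ≤ b)
    (hα : |α| ≤ ξ * ‖(s + b * I : ℂ)‖) :
    ‖(∫ θ in (-b)..b, (s + θ * I) ^ (1 / 2 : ℂ) *
        cexp (α ^ 2 / (s + θ * I) + ξ ^ 2 * (s + θ * I))) - besselValue α ξ‖ ≤
      (2 * √‖(s + b * I : ℂ)‖ / ξ ^ 2 + √π * (|besselWeight α ξ| + |besselWeight (-α) ξ|)) *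
        Real.exp (α ^ 2 * s / ‖(s + b * I : ℂ)‖ ^ 2 + ξ ^ 2 * s) := by
  have hprimitive := integral_eq_besselPrimitive_sub α hξ hs b
  set z : ℂ := s + b * I with hz
  have hre : z.re = s := by simp [hz]
  have hsqrt_ne : z ^ (1 / 2 : ℂ) ≠ 0 := by
    simp [cpow_eq_zero_iff, ne_zero_of_re_pos (hre ▸ hs)]
  have hsqrt_im : 0 ≤ (z ^ (1 / 2 : ℂ)).im := by
    rw [one_div, cpow_inv_two_im_eq_sqrt (by simpa [hz] using hb)]
    positivity
  have hbound := norm_besselPrimitive_sub_conj_sub_le hsqrt_ne hsqrt_im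
    (by rwa [← norm_pow, cpow_half_sq])
  rwa [norm_besselKernel_cpow_half, norm_cpow_half, hre, ← hprimitive, ← mul_sub, norm_mul,
    norm_I, one_mul] at hbound

/-! ### The asymptotic formula -/

/-- `√ζ(2)`: the leading singularity of the generating function at `q = exp (-z)` is
`exp (ζ(2) / z)`. -/
noncomputable def sqrtZetaTwo : ℝ := π / √6

/-- The exponent in the asymptotic formula for the number of partitions of `n`. -/
noncomputable def growthExponent (n : ℕ) : ℝ := 2 * sqrtZetaTwo * √(n - 1 / 24)

/-- The main term in the asymptotic formula for the number of partitions, as a function of the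
growth exponent. -/
noncomputable def mainTerm (u : ℝ) : ℝ :=
  √2 * sqrtZetaTwo ^ 3 / π * (Real.exp u * (u - 1) / u ^ 3)

lemma sqrtZetaTwo_sq : sqrtZetaTwo ^ 2 = π ^ 2 / 6 := by
  rw [sqrtZetaTwo, div_pow, Real.sq_sqrt (by norm_num)]

lemma sqrtZetaTwo_pos : 0 < sqrtZetaTwo := by
  unfold sqrtZetaTwo
  positivity

lemma lt_sqrtZetaTwo : 1.28 < sqrtZetaTwo := by
  refine lt_of_pow_lt_pow_left₀ 2 sqrtZetaTwo_pos.le ?_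
  rw [sqrtZetaTwo_sq]
  nlinarith [Real.pi_gt_d4]

lemma sqrtZetaTwo_lt : sqrtZetaTwo < 1.3 := by
  refine lt_of_pow_lt_pow_left₀ 2 (by norm_num) ?_
  rw [sqrtZetaTwo_sq]
  nlinarith [Real.pi_lt_d4, Real.pi_pos]

lemma sqrt_pi_lt : √π < 1.8 := by
  rw [Real.sqrt_lt' (by norm_num)]
  linarith [Real.pi_lt_d4]

lemma exp_le_of_le {s : ℝ} (hs0 : 0 ≤ s) (hs1 : s ≤ 0.03) : Real.exp s ≤ 1.1 := by
  refine (Real.exp_bound_div_one_sub_of_interval hs0 (by linarith)).trans ?_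
  rw [div_le_iff₀ (by linarith)]
  linarith

lemma two_pi_mul_mainTerm {ξ : ℝ} (hξ : 0 < ξ) :
    2 * π * mainTerm (2 * sqrtZetaTwo * ξ) = (√(2 * π))⁻¹ *
      (√π * (Real.exp (2 * sqrtZetaTwo * ξ) * besselWeight sqrtZetaTwo ξ)) := by
  have hα := sqrtZetaTwo_pos
  have hsq2 : √2 ^ 2 = 2 := Real.sq_sqrt (by norm_num)
  rw [mainTerm, besselWeight, Real.sqrt_mul (by norm_num)]
  field_simp
  linear_combination (2 * sqrtZetaTwo * ξ - 1) * hsq2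

lemma abs_besselWeight_add_abs_besselWeight_neg {α ξ : ℝ} (hξ : 0 < ξ) (hαξ : 1 ≤ 2 * α * ξ) :
    |besselWeight α ξ| + |besselWeight (-α) ξ| = 2 * α / ξ ^ 2 := by
  have hα : 0 < α := by
    by_contra! hα
    nlinarith
  have hpos : 0 ≤ besselWeight α ξ := by
    rw [besselWeight, sub_nonneg, div_le_div_iff₀ (by positivity) (by positivity)]
    nlinarith [pow_pos hξ 2]
  have hneg : besselWeight (-α) ξ ≤ 0 := by
    rw [besselWeight, neg_div, sub_nonpos]
    exact (neg_nonpos.2 (by positivity)).trans (by positivity)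
  rw [abs_of_nonneg hpos, abs_of_nonpos hneg, besselWeight, besselWeight]
  ring

lemma abs_two_pi_mul_partitionCount_sub_besselValue_le {n : ℕ} {ξ s : ℝ} (hξ : 1 ≤ ξ)
    (hn : ξ ^ 2 = n - 1 / 24) (hs0 : 0 < s) (hs1 : s ≤ 1) :
    |2 * π * partitionCount n - (√(2 * π))⁻¹ * besselValue sqrtZetaTwo ξ| ≤
      2 * π * (2 * √s * Real.exp (π ^ 2 / (24 * s)) * Real.exp (n * s)) +
      (√(2 * π))⁻¹ * ((2 * √‖(s + π * I : ℂ)‖ / ξ ^ 2 +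
        √π * (|besselWeight sqrtZetaTwo ξ| + |besselWeight (-sqrtZetaTwo) ξ|)) *
        Real.exp (sqrtZetaTwo ^ 2 * s / ‖(s + π * I : ℂ)‖ ^ 2 + ξ ^ 2 * s)) := by
  have hα : |sqrtZetaTwo| ≤ ξ * ‖(s + π * I : ℂ)‖ := by
    have hnorm : π ≤ ‖(s + π * I : ℂ)‖ :=
      (le_abs_self π).trans (by simpa using abs_im_le_norm (s + π * I : ℂ))
    rw [abs_of_pos sqrtZetaTwo_pos]
    nlinarith [sqrtZetaTwo_lt, Real.pi_gt_three]
  have hcircle := norm_two_pi_mul_partitionCount_sub_le hs0 hs1 n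
  have hintegral := norm_integral_sub_besselValue_le (by positivity) hs0 Real.pi_pos.le hα
  have hα_sq : (sqrtZetaTwo : ℂ) ^ 2 = π ^ 2 / 6 := by exact_mod_cast sqrtZetaTwo_sq
  have hξ_sq : (ξ : ℂ) ^ 2 = n - 1 / 24 := by
    rw [← ofReal_pow, hn]
    push_cast
    rfl
  rw [hα_sq, hξ_sq] at hintegral
  rw [← Real.norm_eq_abs, ← norm_real]
  push_cast
  refine (norm_sub_le_norm_sub_add_norm_sub _ _ _).trans (add_le_add hcircle ?_)
  rw [← ofReal_inv, ← mul_sub, norm_mul, norm_real, Real.norm_of_nonneg (by positivity)]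
  gcongr

section Estimates

-- The abscissa `s` is half that of the saddle point `sqrtZetaTwo / ξ`; with this choice the error
-- terms are exponentially smaller than the main term.
variable {ξ s : ℝ}

lemma modular_error_le (hξ : 22 ≤ ξ) (hs : s = sqrtZetaTwo / (2 * ξ)) :
    2 * √s * Real.exp (π ^ 2 / (24 * s)) * Real.exp ((ξ ^ 2 + 1 / 24) * s) ≤
      0.4 * Real.exp (sqrtZetaTwo * ξ) := by
  have : 0 < ξ := by linarith
  have hα0 := sqrtZetaTwo_pos
  have hs0 : 0 ≤ s := by rw [hs]; positivity
  have hs1 : s ≤ 0.03 := by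
    rw [hs, div_le_iff₀ (by positivity)]
    linarith [sqrtZetaTwo_lt]
  have hsqrt : √s ≤ 0.18 := by
    rw [Real.sqrt_le_left (by norm_num)]
    linarith
  have hexponent : π ^ 2 / (24 * s) + (ξ ^ 2 + 1 / 24) * s = sqrtZetaTwo * ξ + s / 24 := by
    rw [show π ^ 2 = 6 * sqrtZetaTwo ^ 2 by rw [sqrtZetaTwo_sq]; ring, hs]
    field_simp
    ring
  rw [mul_assoc, ← Real.exp_add, hexponent, Real.exp_add]
  calc _ ≤ 2 * 0.18 * (Real.exp (sqrtZetaTwo * ξ) * 1.1) := by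
        gcongr
        exact exp_le_of_le (by positivity) (by linarith)
    _ ≤ _ := by linarith [Real.exp_pos (sqrtZetaTwo * ξ)]

lemma boundary_error_le (hξ : 22 ≤ ξ) (hs : s = sqrtZetaTwo / (2 * ξ)) :
    (2 * √‖(s + π * I : ℂ)‖ / ξ ^ 2 +
        √π * (|besselWeight sqrtZetaTwo ξ| + |besselWeight (-sqrtZetaTwo) ξ|)) *
      Real.exp (sqrtZetaTwo ^ 2 * s / ‖(s + π * I : ℂ)‖ ^ 2 + ξ ^ 2 * s) ≤
      1.1 * Real.exp (sqrtZetaTwo * ξ / 2) := by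
  have hξ0 : 0 < ξ := by linarith
  have hα0 := sqrtZetaTwo_pos
  have hs0 : 0 < s := by rw [hs]; positivity
  have hs1 : s ≤ 0.03 := by
    rw [hs, div_le_iff₀ (by positivity)]
    linarith [sqrtZetaTwo_lt]
  have hnorm_sq : ‖(s + π * I : ℂ)‖ ^ 2 = s ^ 2 + π ^ 2 := by
    rw [← normSq_eq_norm_sq, normSq_add_mul_I]
  have hsqrt : √‖(s + π * I : ℂ)‖ ≤ 2 := by
    rw [Real.sqrt_le_left (by norm_num)]
    refine le_of_sq_le_sq ?_ (by norm_num)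
    rw [hnorm_sq]
    nlinarith [Real.pi_lt_d4, Real.pi_pos]
  have hcoefficient : 2 * √‖(s + π * I : ℂ)‖ / ξ ^ 2 +
      √π * (|besselWeight sqrtZetaTwo ξ| + |besselWeight (-sqrtZetaTwo) ξ|) ≤ 1 := by
    rw [abs_besselWeight_add_abs_besselWeight_neg hξ0 (by nlinarith [lt_sqrtZetaTwo]),
      mul_div_assoc', ← add_div, div_le_one (by positivity)]
    nlinarith [mul_lt_mul'' sqrt_pi_lt sqrtZetaTwo_lt (Real.sqrt_nonneg π) hα0.le]
  have hexponent : sqrtZetaTwo ^ 2 * s / ‖(s + π * I : ℂ)‖ ^ 2 ≤ s := by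
    rw [hnorm_sq, sqrtZetaTwo_sq, div_le_iff₀ (by positivity), mul_comm]
    gcongr
    nlinarith [sq_nonneg s, sq_nonneg π]
  have hpeak : ξ ^ 2 * s = sqrtZetaTwo * ξ / 2 := by
    rw [hs]
    field_simp
  rw [hpeak, Real.exp_add, ← mul_assoc]
  gcongr
  calc _ ≤ 1 * Real.exp s := by gcongr
    _ ≤ 1.1 := by simpa using exp_le_of_le hs0.le hs1

lemma exp_neg_mul_abs_besselWeight_neg_le (hξ : 22 ≤ ξ) :
    √π * (Real.exp (2 * -sqrtZetaTwo * ξ) * |besselWeight (-sqrtZetaTwo) ξ|) ≤ 1 := by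
  have hα0 := sqrtZetaTwo_pos
  have hξ0 : 0 < ξ := by linarith
  have hexp : Real.exp (2 * -sqrtZetaTwo * ξ) ≤ 1 :=
    Real.exp_le_one_iff.2 (by nlinarith)
  have hweight : |besselWeight (-sqrtZetaTwo) ξ| ≤ 0.01 := by
    refine (le_add_of_nonneg_left (abs_nonneg (besselWeight sqrtZetaTwo ξ))).trans ?_
    rw [abs_besselWeight_add_abs_besselWeight_neg hξ0 (by nlinarith [lt_sqrtZetaTwo]),
      div_le_iff₀ (by positivity)]
    nlinarith [sqrtZetaTwo_lt]
  have hproduct : √π * (Real.exp (2 * -sqrtZetaTwo * ξ) * |besselWeight (-sqrtZetaTwo) ξ|) ≤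
      1.8 * (1 * 0.01) := by
    gcongr
    exact sqrt_pi_lt.le
  linarith

end Estimates

lemma abs_two_pi_mul_partitionCount_sub_mainTerm_le {n : ℕ} {ξ : ℝ} (hξ : 22 ≤ ξ)
    (hn : ξ ^ 2 = n - 1 / 24) :
    |2 * π * partitionCount n - 2 * π * mainTerm (2 * sqrtZetaTwo * ξ)| ≤
      2 * π * (0.4 * Real.exp (sqrtZetaTwo * ξ)) + 1.1 * Real.exp (sqrtZetaTwo * ξ / 2) + 1 := by
  set s := sqrtZetaTwo / (2 * ξ) with hs
  have hα0 := sqrtZetaTwo_pos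
  have hs0 : 0 < s := by positivity
  have hs1 : s ≤ 1 := by
    rw [hs, div_le_one (by positivity)]
    linarith [sqrtZetaTwo_lt]
  have hcircle :=
    abs_two_pi_mul_partitionCount_sub_besselValue_le (by linarith) hn hs0 hs1
  have hmodular := modular_error_le hξ hs
  rw [hn, sub_add_cancel] at hmodular
  have hscale : (√(2 * π))⁻¹ ≤ 1 :=
    inv_le_one_of_one_le₀ (Real.one_le_sqrt.2 (by linarith [Real.pi_gt_three]))
  have hvalue : (√(2 * π))⁻¹ * besselValue sqrtZetaTwo ξ - 2 * π * mainTerm (2 * sqrtZetaTwo * ξ) =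
      (√(2 * π))⁻¹ * (√π * (Real.exp (2 * -sqrtZetaTwo * ξ) * besselWeight (-sqrtZetaTwo) ξ)) := by
    rw [two_pi_mul_mainTerm (by linarith), besselValue]
    ring
  have hsecondary :
      |(√(2 * π))⁻¹ * besselValue sqrtZetaTwo ξ - 2 * π * mainTerm (2 * sqrtZetaTwo * ξ)| ≤ 1 := by
    rw [hvalue, abs_mul, abs_mul, abs_mul, abs_of_pos (Real.exp_pos _),
      abs_of_nonneg (Real.sqrt_nonneg π), abs_of_nonneg (by positivity : 0 ≤ (√(2 * π))⁻¹)]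
    exact mul_le_one₀ hscale (by positivity) (exp_neg_mul_abs_besselWeight_neg_le hξ)
  refine (abs_sub_le _ _ _).trans (add_le_add (hcircle.trans (add_le_add ?_ ?_)) hsecondary)
  · gcongr
  · exact (mul_le_mul hscale (boundary_error_le hξ hs) (by positivity) zero_le_one).trans_eq
      (one_mul _)

theorem abs_partitionCount_sub_mainTerm_le {n : ℕ} (hn : 499 ≤ n) :
    |(partitionCount n : ℝ) - mainTerm (growthExponent n)| ≤ Real.exp (growthExponent n / 2) := by
  have hn' : (499 : ℝ) ≤ n := by exact_mod_cast hn
  have hξ_sq : √((n : ℝ) - 1 / 24) ^ 2 = n - 1 / 24 := Real.sq_sqrt (by linarith)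
  have hξ : 22 ≤ √((n : ℝ) - 1 / 24) := Real.le_sqrt_of_sq_le (by linarith)
  have hbound := abs_two_pi_mul_partitionCount_sub_mainTerm_le hξ hξ_sq
  rw [← growthExponent, ← mul_sub, abs_mul, abs_of_pos Real.two_pi_pos] at hbound
  have hhalf : sqrtZetaTwo * √((n : ℝ) - 1 / 24) = growthExponent n / 2 := by
    rw [growthExponent]
    ring
  have hlarge : 15 ≤ Real.exp (growthExponent n / 2 / 2) := by
    rw [← hhalf]
    nlinarith [Real.add_one_le_exp (sqrtZetaTwo * √((n : ℝ) - 1 / 24) / 2), lt_sqrtZetaTwo]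
  rw [hhalf] at hbound
  have hsquare : Real.exp (growthExponent n / 2) = Real.exp (growthExponent n / 2 / 2) ^ 2 := by
    rw [← Real.exp_nat_mul]
    ring_nf
  refine le_of_mul_le_mul_left (hbound.trans ?_) Real.two_pi_pos
  rw [hsquare]
  nlinarith [Real.pi_gt_three]

/-! ### Log-concavity defect of the main term -/

lemma mainTerm_pos {u : ℝ} (hu : 1 < u) : 0 < mainTerm u := by
  have hα := sqrtZetaTwo_pos
  have : 0 < u - 1 := sub_pos.2 hu
  unfold mainTerm
  positivity

lemma pow_mul_pow_div_factorial_le_exp {a x : ℝ} (ha : 0 ≤ a) (hax : a ≤ x) (k m : ℕ) :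
    x ^ k * a ^ m / (k + m).factorial ≤ Real.exp x := by
  refine le_trans ?_ (Real.pow_div_factorial_le_exp x (ha.trans hax) (k + m))
  rw [pow_add]
  have hx : 0 ≤ x ^ k := pow_nonneg (ha.trans hax) k
  gcongr

lemma pow_six_le_exp_half {u : ℝ} (hu : 56 ≤ u) : u ^ 6 ≤ 1.7 * Real.exp (u / 2) := by
  have hexp := pow_mul_pow_div_factorial_le_exp (a := 28) (x := u / 2) (by norm_num)
    (by linarith) 6 19
  have hconst : (1 / 1.7 : ℝ) ≤ 28 ^ 19 / 2 ^ 6 / (6 + 19).factorial := by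
    norm_num [Nat.factorial]
  calc u ^ 6 = 1.7 * (u ^ 6 * (1 / 1.7)) := by ring
    _ ≤ 1.7 * (u ^ 6 * (28 ^ 19 / 2 ^ 6 / (6 + 19).factorial)) := by gcongr
    _ = 1.7 * ((u / 2) ^ 6 * 28 ^ 19 / (6 + 19).factorial) := by ring
    _ ≤ _ := by gcongr

lemma le_mainTerm_coefficient : 0.9 ≤ √2 * sqrtZetaTwo ^ 3 / π := by
  have hsqrt : 1.41 ≤ √2 := Real.le_sqrt_of_sq_le (by norm_num)
  have hcube : (1.28 : ℝ) ^ 3 ≤ sqrtZetaTwo ^ 3 := by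
    gcongr
    exact lt_sqrtZetaTwo.le
  rw [le_div_iff₀ Real.pi_pos]
  nlinarith [Real.pi_lt_d4]

lemma exp_half_le_mul_mainTerm {u : ℝ} (hu : 56 ≤ u) :
    Real.exp (u / 2) ≤ 2 / u ^ 4 * mainTerm u := by
  have hsq : Real.exp u = Real.exp (u / 2) * Real.exp (u / 2) := by
    rw [← Real.exp_add, add_halves]
  have hlinear : 1.7 * u ≤ 2 * (√2 * sqrtZetaTwo ^ 3 / π) * (u - 1) := by
    nlinarith [le_mainTerm_coefficient]
  calc Real.exp (u / 2) = Real.exp (u / 2) * (u ^ 6 * u) / u ^ 7 := by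
        field_simp
    _ ≤ Real.exp (u / 2) * (1.7 * Real.exp (u / 2) * u) / u ^ 7 := by
        gcongr
        exact pow_six_le_exp_half hu
    _ = Real.exp (u / 2) * Real.exp (u / 2) * (1.7 * u) / u ^ 7 := by ring
    _ ≤ Real.exp (u / 2) * Real.exp (u / 2) *
          (2 * (√2 * sqrtZetaTwo ^ 3 / π) * (u - 1)) / u ^ 7 := by gcongr
    _ = _ := by
        rw [mainTerm, hsq]
        field_simp

lemma mainTerm_sq_mul {u v w r : ℝ} (hu : u ≠ 0) (hv : v ≠ 0) (hw : w ≠ 0)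
    (hvw : v * w = u ^ 2 * r) : mainTerm u ^ 2 * ((v - 1) * (w - 1)) =
      mainTerm v * mainTerm w * ((u - 1) ^ 2 * (Real.exp (2 * u - (v + w)) * r ^ 3)) := by
  have hr : r = v * w / u ^ 2 := by rw [hvw]; field_simp
  rw [Real.exp_sub, Real.exp_add, two_mul, Real.exp_add, hr, mainTerm, mainTerm, mainTerm]
  field_simp

lemma le_sqrt_one_sub {y : ℝ} (hy0 : 0 ≤ y) (hy1 : y ≤ 0.00001) :
    1 - y / 2 - 0.4 * y ^ 2 ≤ √(1 - y) := by
  refine Real.le_sqrt_of_sq_le ?_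
  have hgap : 0 ≤ y ^ 2 * (0.55 - 0.4 * y - 0.16 * y ^ 2) :=
    mul_nonneg (sq_nonneg y) (by nlinarith)
  linarith

lemma sqrt_one_sub_le {y : ℝ} (hy : y ≤ 1) : √(1 - y) ≤ 1 - y / 2 := by
  simpa [sub_eq_add_neg, neg_div] using Real.sqrt_one_add_le (neg_le_neg hy)

section

variable {u h : ℝ}

lemma sqrt_one_add_mul_sqrt_one_sub (hh0 : 0 ≤ h) :
    √(1 + h) * √(1 - h) = √(1 - h ^ 2) := by
  rw [← Real.sqrt_mul (by linarith)]
  ring_nf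

lemma sqrt_one_add_add_sqrt_one_sub_sq (hh0 : 0 ≤ h) (hh1 : h ≤ 1) :
    (√(1 + h) + √(1 - h)) ^ 2 = 2 + 2 * √(1 - h ^ 2) := by
  linear_combination Real.sq_sqrt (by linarith : 0 ≤ 1 + h) +
    Real.sq_sqrt (by linarith : 0 ≤ 1 - h) + 2 * sqrt_one_add_mul_sqrt_one_sub hh0

lemma sqrt_one_add_add_sqrt_one_sub_le (hh0 : 0 ≤ h) (hh1 : h ≤ 1) :
    √(1 + h) + √(1 - h) ≤ 2 := by
  linarith [Real.sqrt_one_add_le (by linarith : -1 ≤ h), sqrt_one_sub_le hh1]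

lemma le_sqrt_one_add_add_sqrt_one_sub (hh0 : 0 ≤ h) (hh1 : h ≤ 1 / 499) :
    2 - h ^ 2 / 4 * (1 + h ^ 2) ≤ √(1 + h) + √(1 - h) := by
  have hh_sq : h ^ 2 ≤ 0.00001 := by nlinarith
  refine le_of_sq_le_sq ?_ (by positivity)
  rw [sqrt_one_add_add_sqrt_one_sub_sq hh0 (by linarith)]
  have hsq : (h ^ 2 / 4 * (1 + h ^ 2)) ^ 2 ≤ (h ^ 2 / 3) ^ 2 := by
    gcongr
    nlinarith [sq_nonneg h]
  linarith [le_sqrt_one_sub (sq_nonneg h) hh_sq, sq_nonneg (h ^ 2)]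

lemma sub_one_sq_mul_le (hu : 56 ≤ u) (hh0 : 0 ≤ h) (hh1 : h ≤ 1 / 499) :
    (u - 1) ^ 2 * (1 - 0.53 * h ^ 2) ≤ (u * √(1 + h) - 1) * (u * √(1 - h) - 1) := by
  have hh_sq : h ^ 2 ≤ 0.00001 := by nlinarith
  have hsum := sqrt_one_add_add_sqrt_one_sub_le hh0 (by linarith)
  have hsqrt : 1 - √(1 - h ^ 2) ≤ 0.505 * h ^ 2 := by
    nlinarith [le_sqrt_one_sub (sq_nonneg h) hh_sq, sq_nonneg h]
  have hu_sq : u ^ 2 * 0.505 ≤ (u - 1) ^ 2 * 0.53 := by nlinarith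
  calc (u - 1) ^ 2 * (1 - 0.53 * h ^ 2)
      ≤ (u - 1) ^ 2 - u ^ 2 * (0.505 * h ^ 2) := by
        linarith [mul_le_mul_of_nonneg_right hu_sq (sq_nonneg h)]
    _ ≤ (u - 1) ^ 2 - u ^ 2 * (1 - √(1 - h ^ 2)) := by gcongr
    _ = u ^ 2 * (√(1 + h) * √(1 - h)) - u * 2 + 1 := by
        rw [sqrt_one_add_mul_sqrt_one_sub hh0]
        ring
    _ ≤ u ^ 2 * (√(1 + h) * √(1 - h)) - u * (√(1 + h) + √(1 - h)) + 1 := by gcongr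
    _ = _ := by ring

lemma exp_mul_sqrt_one_sub_pow_three_le {D t y : ℝ} (hy0 : 0 ≤ y) (hy1 : y ≤ 0.00001) (ht : 0 ≤ t)
    (hD : Real.exp D ≤ 1 + t + 0.01 * y) :
    Real.exp D * √(1 - y) ^ 3 ≤ (1 - 0.53 * y) * ((1 + t) * (1 - 0.9 * y)) := by
  have hcube : √(1 - y) ^ 3 ≤ (1 - y / 2) * (1 - y) := by
    rw [pow_succ', Real.sq_sqrt (by linarith)]
    gcongr
    · linarith
    · exact sqrt_one_sub_le (by linarith)
  calc _ ≤ (1 + t + 0.01 * y) * ((1 - y / 2) * (1 - y)) := by gcongr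
    _ ≤ (1 + t) * ((1 + 0.01 * y) * ((1 - y / 2) * (1 - y))) := by
      have hfactor : 0 ≤ (1 - y / 2) * (1 - y) := mul_nonneg (by linarith) (by linarith)
      rw [← mul_assoc (1 + t)]
      gcongr
      nlinarith [mul_nonneg ht hy0]
    _ ≤ (1 + t) * ((1 - 0.53 * y) * (1 - 0.9 * y)) := by
      refine mul_le_mul_of_nonneg_left ?_ (by linarith)
      nlinarith [pow_nonneg hy0 2, pow_nonneg hy0 3]
    _ = _ := by ring

lemma exp_sub_mul_sqrt_le {t : ℝ} (hu : 56 ≤ u) (hh0 : 0 < h) (hh1 : h ≤ 1 / 499)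
    (huh : u ^ 2 * h ≤ 6.6) (ht : u * h ^ 2 / 4 * (1 - h / 16) ≤ t) :
    Real.exp (2 * u - (u * √(1 + h) + u * √(1 - h))) ≤ 1 + t + 0.01 * h ^ 2 := by
  set D := 2 * u - (u * √(1 + h) + u * √(1 - h))
  set τ := u * h ^ 2 / 4 with hτ
  have : 0 ≤ τ := by positivity
  have hD0 : 0 ≤ D := by
    nlinarith [sqrt_one_add_add_sqrt_one_sub_le hh0.le (by linarith)]
  have hh_sq : h ^ 2 ≤ 0.00001 := by nlinarith
  have hD_le : D ≤ τ * (1 + h ^ 2) := by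
    nlinarith [le_sqrt_one_add_add_sqrt_one_sub hh0.le hh1]
  have hτ_le : τ ≤ 0.04 * h := by
    refine le_of_sq_le_sq ?_ (by positivity)
    calc τ ^ 2 = u ^ 2 * h * h * h ^ 2 / 16 := by rw [hτ]; ring
      _ ≤ 6.6 * (1 / 499) * h ^ 2 / 16 := by gcongr
      _ ≤ (0.04 * h) ^ 2 := by nlinarith [sq_nonneg h]
  have hτ_t : τ ≤ t + 0.0025 * h ^ 2 := by nlinarith
  have hD_sq : D ^ 2 ≤ 0.0064 * h ^ 2 := by
    have hD_linear : D ≤ 0.08 * h := by nlinarith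
    calc D ^ 2 ≤ (0.08 * h) ^ 2 := by gcongr
      _ = 0.0064 * h ^ 2 := by ring
  have hexp := Real.abs_exp_sub_one_sub_id_le (x := D) (by rw [abs_of_nonneg hD0]; nlinarith)
  nlinarith [le_abs_self (Real.exp D - 1 - D)]

lemma mainTerm_sq_le {t : ℝ} (hu : 56 ≤ u) (hh0 : 0 < h) (hh1 : h ≤ 1 / 499)
    (huh : u ^ 2 * h ≤ 6.6) (ht0 : 0 ≤ t) (ht : u * h ^ 2 / 4 * (1 - h / 16) ≤ t) :
    mainTerm u ^ 2 ≤ mainTerm (u * √(1 + h)) * mainTerm (u * √(1 - h)) *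
      ((1 + t) * (1 - 0.9 * h ^ 2)) := by
  have hh_sq : h ^ 2 ≤ 0.00001 := by nlinarith
  have hsqrt_sub : 1 / 2 ≤ √(1 - h) := Real.le_sqrt_of_sq_le (by linarith)
  have hsqrt_add : 1 ≤ √(1 + h) := Real.one_le_sqrt.2 (by linarith)
  have hv : 1 < u * √(1 + h) := by nlinarith
  have hw : 1 < u * √(1 - h) := by nlinarith
  have hvw : u * √(1 + h) * (u * √(1 - h)) = u ^ 2 * √(1 - h ^ 2) := by
    rw [← sqrt_one_add_mul_sqrt_one_sub hh0.le]
    ring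
  have hV := mainTerm_pos hv
  have hW := mainTerm_pos hw
  have hcorrection := exp_mul_sqrt_one_sub_pow_three_le (sq_nonneg h) hh_sq ht0
    (exp_sub_mul_sqrt_le hu hh0 hh1 huh ht)
  refine le_of_mul_le_mul_right ?_ (mul_pos (sub_pos.2 hv) (sub_pos.2 hw))
  calc mainTerm u ^ 2 * ((u * √(1 + h) - 1) * (u * √(1 - h) - 1))
      = _ := mainTerm_sq_mul (by positivity) (by positivity) (by positivity) hvw
    _ ≤ mainTerm (u * √(1 + h)) * mainTerm (u * √(1 - h)) *
          ((u - 1) ^ 2 * ((1 - 0.53 * h ^ 2) * ((1 + t) * (1 - 0.9 * h ^ 2)))) := by gcongr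
    _ = mainTerm (u * √(1 + h)) * mainTerm (u * √(1 - h)) * ((1 + t) * (1 - 0.9 * h ^ 2)) *
          ((u - 1) ^ 2 * (1 - 0.53 * h ^ 2)) := by ring
    _ ≤ _ := by
        have hfactor : 0 ≤ (1 + t) * (1 - 0.9 * h ^ 2) := mul_nonneg (by linarith) (by linarith)
        exact mul_le_mul_of_nonneg_left (sub_one_sq_mul_le hu hh0.le hh1)
          (mul_nonneg (mul_pos hV hW).le hfactor)

end

/-! ### The range `500 ≤ n` -/

lemma sqrt_mul_rpow_three_halves_sq {a x : ℝ} (ha : 0 ≤ a) (hx : 0 ≤ x) :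
    (√a * x ^ ((3 : ℝ) / 2)) ^ 2 = a * x ^ 3 := by
  rw [mul_pow, Real.sq_sqrt ha, ← Real.rpow_mul_natCast hx]
  norm_num

lemma growthExponent_sq {n : ℕ} (hn : 1 ≤ n) :
    growthExponent n ^ 2 = 2 * π ^ 2 / 3 * (n - 1 / 24) := by
  have hn' : (1 : ℝ) ≤ n := by exact_mod_cast hn
  rw [growthExponent, mul_pow, mul_pow, sqrtZetaTwo_sq, Real.sq_sqrt (by linarith)]
  ring

lemma le_growthExponent {n : ℕ} (hn : 499 ≤ n) : 56 ≤ growthExponent n := by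
  have hn' : (499 : ℝ) ≤ n := by exact_mod_cast hn
  have hα := sqrtZetaTwo_pos
  refine le_of_sq_le_sq ?_ (by unfold growthExponent; positivity)
  have hcoef : 6.5 ≤ 2 * π ^ 2 / 3 := by nlinarith [Real.pi_gt_d4]
  calc (56 : ℝ) ^ 2 ≤ 6.5 * (499 - 1 / 24) := by norm_num
    _ ≤ 2 * π ^ 2 / 3 * (n - 1 / 24) := by gcongr
    _ = growthExponent n ^ 2 := (growthExponent_sq (by omega)).symm

lemma growthExponent_eq_mul_sqrt {m n : ℕ} (hn : 1 ≤ n) :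
    growthExponent m = growthExponent n * √((m - 1 / 24) / (n - 1 / 24)) := by
  have hn' : (0 : ℝ) < n - 1 / 24 := by
    have : (1 : ℝ) ≤ n := by exact_mod_cast hn
    linarith
  rw [growthExponent, growthExponent, mul_assoc (2 * sqrtZetaTwo), ← Real.sqrt_mul hn'.le,
    mul_div_cancel₀ _ hn'.ne']

lemma abs_partitionCount_sub_mainTerm_le_mul {m : ℕ} {x : ℝ} (hm : 499 ≤ m) (hx : 499 ≤ x)
    (hxm : x - 1 ≤ m - 1 / 24) :
    |(partitionCount m : ℝ) - mainTerm (growthExponent m)| ≤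
      0.05 * (1 / x) ^ 2 * mainTerm (growthExponent m) := by
  have hu := le_growthExponent hm
  have hM := mainTerm_pos (by linarith : 1 < growthExponent m)
  have hcoef : 6.57 ≤ 2 * π ^ 2 / 3 := by nlinarith [Real.pi_gt_d4]
  have hpow : 40 * x ^ 2 ≤ growthExponent m ^ 4 := calc
    40 * x ^ 2 ≤ (6.57 * (0.99 * x)) ^ 2 := by nlinarith [sq_nonneg x]
    _ ≤ (2 * π ^ 2 / 3 * (m - 1 / 24)) ^ 2 := by
      gcongr
      linarith
    _ = growthExponent m ^ 4 := by
      rw [← growthExponent_sq (by omega)]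
      ring
  calc _ ≤ Real.exp (growthExponent m / 2) := abs_partitionCount_sub_mainTerm_le hm
    _ ≤ 2 / growthExponent m ^ 4 * mainTerm (growthExponent m) := exp_half_le_mul_mainTerm hu
    _ ≤ 2 / (40 * x ^ 2) * mainTerm (growthExponent m) := by gcongr
    _ = _ := by
      field_simp
      norm_num

lemma one_sub_sq_mul_one_add_pow_three_le {h : ℝ} (hh0 : 0 ≤ h) (hh1 : h ≤ 1) :
    (1 - h / 16) ^ 2 * (1 + h / 24) ^ 3 ≤ 1 := by
  have hsub : 0 ≤ 1 - h / 16 := by linarith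
  calc (1 - h / 16) ^ 2 * (1 + h / 24) ^ 3
      ≤ Real.exp (-(h / 16)) ^ 2 * Real.exp (h / 24) ^ 3 := by
        gcongr
        · exact Real.one_sub_le_exp_neg _
        · linarith [Real.add_one_le_exp (h / 24)]
    _ = 1 := by
        rw [← Real.exp_nat_mul, ← Real.exp_nat_mul, ← Real.exp_add, Real.exp_eq_one_iff]
        push_cast
        ring

lemma growthExponent_mul_le {n : ℕ} (hn : 1 ≤ n) {h : ℝ} (hh : h = 1 / (n - 1 / 24)) (hh1 : h ≤ 1) :
    growthExponent n * h ^ 2 / 4 * (1 - h / 16) ≤ π / (√24 * (n : ℝ) ^ ((3 : ℝ) / 2)) := by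
  have hn' : (1 : ℝ) ≤ n := by exact_mod_cast hn
  have hx0 : 0 < (n : ℝ) - 1 / 24 := by linarith
  have hh0 : 0 < h := by rw [hh]; positivity
  have hx_eq : (n : ℝ) - 1 / 24 = 1 / h := by rw [hh, one_div_one_div]
  have hn_eq : (n : ℝ) = (1 + h / 24) / h := by
    rw [add_div, ← hx_eq, div_div_cancel_left' hh0.ne']
    ring
  refine le_of_sq_le_sq ?_ (by positivity)
  calc (growthExponent n * h ^ 2 / 4 * (1 - h / 16)) ^ 2
      = growthExponent n ^ 2 * (h ^ 4 / 16 * (1 - h / 16) ^ 2) := by ring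
    _ = π ^ 2 * ((1 - h / 16) ^ 2 * (1 + h / 24) ^ 3) / (24 * n ^ 3) := by
      rw [growthExponent_sq hn, hx_eq, hn_eq]
      field_simp
      ring
    _ ≤ π ^ 2 / (24 * n ^ 3) := by
      gcongr
      exact mul_le_of_le_one_right (by positivity)
        (one_sub_sq_mul_one_add_pow_three_le hh0.le hh1)
    _ = _ := by rw [div_pow, sqrt_mul_rpow_three_halves_sq (by norm_num) (by positivity)]

lemma sq_lt_mul_mul_of_abs_sub_le {P Q R U V W t y : ℝ} (hV : 0 < V) (hW : 0 < W)
    (ht : 0 ≤ t) (hy0 : 0 < y) (hy1 : y ≤ 1) (hP0 : 0 ≤ P) (hP : |P - U| ≤ 0.05 * y * U)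
    (hQ : |Q - V| ≤ 0.05 * y * V) (hR : |R - W| ≤ 0.05 * y * W)
    (hUVW : U ^ 2 ≤ V * W * ((1 + t) * (1 - 0.9 * y))) : P ^ 2 < Q * R * (1 + t) := by
  have hP_le : P ≤ (1 + 0.05 * y) * U := by linarith [(abs_le.1 hP).2]
  have hQ_ge : (1 - 0.05 * y) * V ≤ Q := by linarith [(abs_le.1 hQ).1]
  have hR_ge : (1 - 0.05 * y) * W ≤ R := by linarith [(abs_le.1 hR).1]
  have hy_factor : 0 < 1 - 0.05 * y := by linarith
  have hfactor : (1 + 0.05 * y) ^ 2 * (1 - 0.9 * y) < (1 - 0.05 * y) ^ 2 := by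
    have : 0 < y * (0.7 + 0.09 * y + 0.00225 * y ^ 2) := by positivity
    linarith
  calc P ^ 2 ≤ ((1 + 0.05 * y) * U) ^ 2 := by gcongr
    _ = (1 + 0.05 * y) ^ 2 * U ^ 2 := by ring
    _ ≤ (1 + 0.05 * y) ^ 2 * (V * W * ((1 + t) * (1 - 0.9 * y))) := by gcongr
    _ = ((1 + 0.05 * y) ^ 2 * (1 - 0.9 * y)) * (V * W * (1 + t)) := by ring
    _ < (1 - 0.05 * y) ^ 2 * (V * W * (1 + t)) := by gcongr
    _ = ((1 - 0.05 * y) * V) * ((1 - 0.05 * y) * W) * (1 + t) := by ring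
    _ ≤ Q * R * (1 + t) := by
      have hQ0 : 0 ≤ Q := (mul_pos hy_factor hV).le.trans hQ_ge
      gcongr

theorem partitionCount_sq_lt_of_le {n : ℕ} (hn : 500 ≤ n) :
    (partitionCount n : ℝ) ^ 2 < partitionCount (n - 1) * partitionCount (n + 1) *
      (1 + π / (√24 * (n : ℝ) ^ ((3 : ℝ) / 2))) := by
  have hn' : (500 : ℝ) ≤ n := by exact_mod_cast hn
  have hpred : ((n - 1 : ℕ) : ℝ) = n - 1 := by
    rw [Nat.cast_sub (by omega), Nat.cast_one]
  have hsucc : ((n + 1 : ℕ) : ℝ) = n + 1 := Nat.cast_succ n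
  set x : ℝ := n - 1 / 24 with hx
  set h : ℝ := 1 / x with hh
  have hx499 : 499 ≤ x := by linarith
  have hx0 : x ≠ 0 := by positivity
  have hh0 : 0 < h := by positivity
  have hh1 : h ≤ 1 / 499 := one_div_le_one_div_of_le (by norm_num) hx499
  have ht0 : 0 ≤ π / (√24 * (n : ℝ) ^ ((3 : ℝ) / 2)) := by positivity
  have hpos {m : ℕ} (hm : 499 ≤ m) : 0 < mainTerm (growthExponent m) :=
    mainTerm_pos (by linarith [le_growthExponent hm])
  have happrox {m : ℕ} (hm : 499 ≤ m) (hxm : x - 1 ≤ m - 1 / 24) :=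
    abs_partitionCount_sub_mainTerm_le_mul hm hx499 hxm
  have hu_pred : growthExponent (n - 1) = growthExponent n * √(1 - h) := by
    rw [growthExponent_eq_mul_sqrt (n := n) (by omega), hpred, ← hx, hh, one_sub_div hx0,
      hx]
    ring_nf
  have hu_succ : growthExponent (n + 1) = growthExponent n * √(1 + h) := by
    rw [growthExponent_eq_mul_sqrt (n := n) (by omega), hsucc, ← hx, hh, one_add_div hx0,
      hx]
    ring_nf
  have huh : growthExponent n ^ 2 * h ≤ 6.6 := by
    rw [growthExponent_sq (by omega), ← hx, mul_assoc, hh, mul_one_div_cancel hx0]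
    nlinarith [Real.pi_lt_d4, Real.pi_pos]
  refine sq_lt_mul_mul_of_abs_sub_le (hpos (by omega)) (hpos (by omega)) ht0 (pow_pos hh0 2)
    (by nlinarith) (Nat.cast_nonneg _) (happrox (by omega) (by linarith))
    (happrox (by omega) (by linarith)) (happrox (by omega) (by linarith)) ?_
  rw [hu_pred, hu_succ, mul_comm (mainTerm _) (mainTerm _)]
  exact mainTerm_sq_le (le_growthExponent (by omega)) hh0 hh1 huh ht0
    (growthExponent_mul_le (by omega) (by rw [hh, hx]) (by linarith))

/-! ### The range `45 ≤ n < 500` -/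

lemma sum_range_mul_pow_modEq (a : ℕ → ℕ) (B : ℕ) {m l : ℕ} (hml : m ≤ l) :
    ∑ i ∈ range l, a i * B ^ i ≡ ∑ i ∈ range m, a i * B ^ i [MOD B ^ m] := by
  obtain ⟨d, rfl⟩ := Nat.exists_eq_add_of_le hml
  have htail : ∑ i ∈ range d, a (m + i) * B ^ (m + i) =
      B ^ m * ∑ i ∈ range d, a (m + i) * B ^ i := by
    rw [mul_sum]
    exact sum_congr rfl fun i _ ↦ by ring
  rw [sum_range_add, htail]
  exact Nat.add_mul_mod_self_left _ _ _

lemma sum_range_mul_pow_lt {a : ℕ → ℕ} {B n : ℕ} (ha : ∀ i < n, a i < B) :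
    ∑ i ∈ range n, a i * B ^ i < B ^ n := by
  induction n with
  | zero => simp
  | succ n ih =>
    calc ∑ i ∈ range (n + 1), a i * B ^ i = ∑ i ∈ range n, a i * B ^ i + a n * B ^ n :=
          sum_range_succ _ _
      _ < B ^ n + a n * B ^ n := by gcongr; exact ih fun i hi ↦ ha i (by omega)
      _ = (a n + 1) * B ^ n := by ring
      _ ≤ B * B ^ n := Nat.mul_le_mul_right _ (ha n (by omega))
      _ = B ^ (n + 1) := by ring

lemma div_pow_mod_eq_of_modEq_sum {a : ℕ → ℕ} {B L n x : ℕ} (ha : ∀ i ≤ n, a i < B) (hn : n < L)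
    (hx : x ≡ ∑ i ∈ range L, a i * B ^ i [MOD B ^ L]) : x / B ^ n % B = a n := by
  have hB : 0 < B ^ n := Nat.pow_pos ((Nat.zero_le _).trans_lt (ha n le_rfl))
  have hmod : x ≡ ∑ i ∈ range (n + 1), a i * B ^ i [MOD B ^ (n + 1)] :=
    (hx.of_dvd (pow_dvd_pow B hn)).trans (sum_range_mul_pow_modEq a B hn)
  have hsum := sum_range_mul_pow_lt fun i hi ↦ ha i (Nat.lt_succ_iff.1 hi)
  rw [← Nat.mod_mul_right_div_self, ← pow_succ, hmod, Nat.mod_eq_of_lt hsum, sum_range_succ,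
    Nat.add_mul_div_right _ _ hB, Nat.div_eq_of_lt (sum_range_mul_pow_lt fun i hi ↦ ha i hi.le),
    zero_add]

lemma modEq_mul_sum_pow_add {M s t x : ℕ} (h : s ≡ t + x * s [MOD M]) (m : ℕ) :
    s ≡ t * ∑ j ∈ range m, x ^ j + x ^ m * s [MOD M] := by
  induction m with
  | zero => simp [Nat.ModEq.refl]
  | succ m ih =>
    calc s ≡ t * ∑ j ∈ range m, x ^ j + x ^ m * s [MOD M] := ih
      _ ≡ t * ∑ j ∈ range m, x ^ j + x ^ m * (t + x * s) [MOD M] := (h.mul_left _).add_left _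
      _ = t * ∑ j ∈ range (m + 1), x ^ j + x ^ (m + 1) * s := by rw [sum_range_succ]; ring

/-- Kronecker substitution: a number congruent modulo `B ^ L` to the value at `B` of the generating
function of the partitions into parts of size at most `N`. The factor passing from `N` to `N + 1`
is a partial sum of the geometric series of `B ^ (N + 1)`, cut off beyond `B ^ L`. -/
def packedCounts (B L : ℕ) : ℕ → ℕ
  | 0 => 1
  | N + 1 => packedCounts B L N *
      (((B ^ (N + 1)) ^ (L / (N + 1) + 1) - 1) / (B ^ (N + 1) - 1)) % B ^ L

lemma sum_boundedCount_succ_modEq (B L N : ℕ) :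
    ∑ n ∈ range L, boundedCount (N + 1) n * B ^ n ≡ ∑ n ∈ range L, boundedCount N n * B ^ n +
      B ^ (N + 1) * ∑ n ∈ range L, boundedCount (N + 1) n * B ^ n [MOD B ^ L] := by
  have hrec := sum_boundedCount_succ_mul_pow B N L
  simp only [Nat.cast_id] at hrec
  have htrunc (K : ℕ) := sum_range_mul_pow_modEq (boundedCount K) B (Nat.le_add_right L (N + 1))
  exact (htrunc (N + 1)).symm.trans (hrec ▸ (htrunc N).add_right _)

lemma packedCounts_modEq {B L : ℕ} (hB : 2 ≤ B) (hL : 0 < L) (N : ℕ) :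
    packedCounts B L N ≡ ∑ n ∈ range L, boundedCount N n * B ^ n [MOD B ^ L] := by
  induction N with
  | zero => simp [packedCounts, boundedCount_zero_left, hL, Nat.ModEq.refl]
  | succ N ih =>
    have hcut : (B ^ (N + 1)) ^ (L / (N + 1) + 1) ≡ 0 [MOD B ^ L] := by
      rw [Nat.modEq_zero_iff_dvd, ← pow_mul]
      exact pow_dvd_pow B (Nat.lt_mul_div_succ L N.succ_pos).le
    rw [packedCounts, ← Nat.geomSum_eq (hB.trans (Nat.le_self_pow N.succ_ne_zero B))]
    have hgeom := modEq_mul_sum_pow_add (sum_boundedCount_succ_modEq B L N) (L / (N + 1) + 1)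
    calc _ ≡ packedCounts B L N * ∑ j ∈ range (L / (N + 1) + 1), (B ^ (N + 1)) ^ j [MOD B ^ L] :=
          Nat.mod_modEq _ _
      _ ≡ _ [MOD B ^ L] := ih.mul_right _
      _ ≡ _ [MOD B ^ L] := by simpa only [zero_mul, add_zero] using
          ((hcut.mul_right _).add_left _).symm
      _ ≡ _ [MOD B ^ L] := hgeom.symm

lemma partitionCount_le_two_pow (n : ℕ) : partitionCount n ≤ 2 ^ (n - 1) := by
  rw [← composition_card]
  exact Fintype.card_le_of_surjective _ Nat.Partition.ofComposition_surj

lemma packedCounts_div_mod {L n : ℕ} (hn : n < L) :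
    packedCounts (2 ^ L) L L / (2 ^ L) ^ n % 2 ^ L = partitionCount n := by
  have hL : 0 < L := by omega
  have hdigit (i : ℕ) (hi : i ≤ n) : boundedCount L i < 2 ^ L :=
    (boundedCount_le_partitionCount L i).trans_lt <| (partitionCount_le_two_pow i).trans_lt <|
      Nat.pow_lt_pow_right one_lt_two (by omega)
  rw [div_pow_mod_eq_of_modEq_sum hdigit hn
    (packedCounts_modEq (Nat.le_self_pow hL.ne' 2) hL L), boundedCount_eq_partitionCount hn.le]

/-- The value `partitionCount n` for `n ≤ 500`, in a form the kernel evaluates quickly. -/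
def tabulatedCount (n : ℕ) : ℕ := packedCounts (2 ^ 501) 501 501 / (2 ^ 501) ^ n % 2 ^ 501

lemma tabulatedCount_eq {n : ℕ} (hn : n ≤ 500) : tabulatedCount n = partitionCount n :=
  packedCounts_div_mod (Nat.lt_succ_of_le hn)

-- The truncated subtraction is harmless: the inequality sought is trivial when it is negative.
lemma tabulatedCount_sq_sub_lt : ∀ n < 500, 45 ≤ n →
    24 * n ^ 3 * (tabulatedCount n ^ 2 - tabulatedCount (n - 1) * tabulatedCount (n + 1)) ^ 2 *
      10 ^ 8 < 31415 ^ 2 * (tabulatedCount (n - 1) * tabulatedCount (n + 1)) ^ 2 := by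
  decide +kernel

lemma sq_lt_mul_one_add_pi_div {a b c n : ℕ} (hn : n ≠ 0)
    (h : 24 * n ^ 3 * (b ^ 2 - a * c) ^ 2 * 10 ^ 8 < 31415 ^ 2 * (a * c) ^ 2) :
    (b : ℝ) ^ 2 < a * c * (1 + π / (√24 * (n : ℝ) ^ ((3 : ℝ) / 2))) := by
  set d := √24 * (n : ℝ) ^ ((3 : ℝ) / 2)
  have hd0 : 0 < d := by positivity
  have hd2 : d ^ 2 = 24 * n ^ 3 := sqrt_mul_rpow_three_halves_sq (by norm_num) n.cast_nonneg
  have hle : (b : ℝ) ^ 2 ≤ (b ^ 2 - a * c : ℕ) + a * c := by exact_mod_cast le_tsub_add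
  generalize b ^ 2 - a * c = e at h hle
  have hsq : (d * e * 10 ^ 4) ^ 2 < (31415 * (a * c : ℝ)) ^ 2 := by
    have h' : 24 * (n : ℝ) ^ 3 * e ^ 2 * 10 ^ 8 < 31415 ^ 2 * (a * c) ^ 2 := by exact_mod_cast h
    rw [← hd2] at h'
    linarith
  have hdefect : e * d < π * (a * c) := by
    have hroot := lt_of_pow_lt_pow_left₀ 2 (by positivity) hsq
    have hpi : 3.1415 * (a * c : ℝ) ≤ π * (a * c) := by gcongr; exact Real.pi_gt_d4.le
    linarith
  rw [← lt_div_iff₀ hd0] at hdefect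
  linarith [show a * c * (1 + π / d) = a * c + π * (a * c) / d by ring]

lemma partitionCount_sq_lt_of_lt {n : ℕ} (hn : 45 ≤ n) (hn' : n < 500) :
    (partitionCount n : ℝ) ^ 2 < partitionCount (n - 1) * partitionCount (n + 1) *
      (1 + π / (√24 * (n : ℝ) ^ ((3 : ℝ) / 2))) := by
  have h := tabulatedCount_sq_sub_lt n hn' hn
  simp only [tabulatedCount_eq (show n - 1 ≤ 500 by omega), tabulatedCount_eq hn'.le,
    tabulatedCount_eq (show n + 1 ≤ 500 by omega)] at h
  exact sq_lt_mul_one_add_pi_div (by omega) h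

end PartitionRatio

open Real in
theorem stmt_11 (p : ℕ → ℕ) (hp : ∀ n, p n = Fintype.card (Nat.Partition n))
    (n : ℕ) (hn : 45 ≤ n) :
    (p (n - 1) : ℝ) / (p n : ℝ) * (1 + π / (Real.sqrt 24 * (n : ℝ) ^ ((3:ℝ)/2))) >
      (p n : ℝ) / (p (n + 1) : ℝ) := by
  have hpos (k : ℕ) : (0 : ℝ) < p k := by
    rw [hp]
    exact_mod_cast Fintype.card_pos
  have hsq : (p n : ℝ) ^ 2 < p (n - 1) * p (n + 1) *
      (1 + π / (√24 * (n : ℝ) ^ ((3 : ℝ) / 2))) := by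
    simp only [hp]
    rcases lt_or_ge n 500 with hlt | hge
    · exact PartitionRatio.partitionCount_sq_lt_of_lt hn hlt
    · exact PartitionRatio.partitionCount_sq_lt_of_le hge
  rw [gt_iff_lt, div_mul_eq_mul_div, div_lt_div_iff₀ (hpos _) (hpos _)]
  linarith
end

section
/- For every integer n ≥ 45, 2·log p(n) - log p(n-1) - log p(n+1) < log(1 + π/(√24 · n^(3/2))), where p is the partition function. -/
/-!
By Cauchy's formula `p(n)` is the integral of `P(q) q⁻ⁿ` over a circle `|q| = exp (-2πy)`, where
`P` is the generating function of the partition numbers. The modular transformation of Dedekind's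
`η` function replaces `P` near the cusp `q = 1` by an elementary function, whose integral has an
explicit antiderivative up to Gaussian tails. This gives
`p(n) = √3π²/(18μ²) (1 - 1/μ) exp μ + O(exp (μ/2))` with `μ = π √(2/3 (n - 1/24))` and an explicit
constant. For `n ≥ 400` the second difference of the logarithm of this main term is small enough.
For `n < 400` the numbers `p(n)` are computed exactly, as the base `2 ^ N` digits of a product of
truncated geometric series evaluated at `2 ^ N`.
-/

section RestrictedPartitions

open PowerSeries Finset

variable (R : Type*) [CommSemiring R]

/-- The formal geometric series `∑ j, X ^ (m * j)`, written through its coefficients. -/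
def geometricSeries (m : ℕ) : R⟦X⟧ :=
  PowerSeries.mk fun n ↦ if m ∣ n then 1 else 0

variable {R} in
open scoped PowerSeries.WithPiTopology in
theorem hasSum_geometricSeries [TopologicalSpace R] {m : ℕ} (hm : m ≠ 0) :
    HasSum (fun j ↦ (X : R⟦X⟧) ^ (m * j)) (geometricSeries R m) := by
  refine (PowerSeries.WithPiTopology.hasSum_iff_hasSum_coeff R).2 fun n ↦ ?_
  simp only [geometricSeries, coeff_mk, coeff_X_pow]
  by_cases hmn : m ∣ n
  · obtain ⟨j, rfl⟩ := hmn
    simpa [hm, eq_comm] using hasSum_ite_eq j (1 : R)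
  · have hne (j : ℕ) : n ≠ m * j := fun h ↦ hmn ⟨j, h⟩
    simp [hmn, hne]

theorem mk_card_restricted_eq_prod_geometricSeries (k : ℕ) :
    (PowerSeries.mk fun n ↦ (#(Nat.Partition.restricted n (· ≤ k)) : R)) =
      ∏ i ∈ range k, geometricSeries R (i + 1) := by
  open scoped PowerSeries.WithPiTopology in
  let _ : TopologicalSpace R := ⊥
  have _ : DiscreteTopology R := ⟨rfl⟩
  have hinfinite := Nat.Partition.hasProd_powerSeriesMk_card_restricted R (· ≤ k)
  have hfinite := hasProd_prod_of_ne_finset_one (L := SummationFilter.unconditional ℕ)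
    (f := fun i ↦ if i + 1 ≤ k then ∑' j : ℕ, (X : R⟦X⟧) ^ ((i + 1) * j) else 1)
    (s := range k) fun i hi ↦ if_neg (by simpa using hi)
  rw [hinfinite.unique hfinite]
  refine prod_congr rfl fun i hi ↦ ?_
  rw [if_pos (by simpa [Nat.succ_le_iff] using hi), (hasSum_geometricSeries i.succ_ne_zero).tsum_eq]

theorem card_restricted_eq_card {n k : ℕ} (h : n ≤ k) :
    #(Nat.Partition.restricted n (· ≤ k)) = Fintype.card n.Partition := by
  rw [Nat.Partition.restricted, filter_true_of_mem, card_univ]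
  exact fun x _ i hi ↦ (Nat.Partition.le_of_mem_parts hi).trans h

end RestrictedPartitions

section EulerProduct

open PowerSeries Finset Filter

variable {𝕜 : Type*} [RCLike 𝕜] {q : 𝕜}

theorem hasSum_coeff_mul_mul_pow {f g : 𝕜⟦X⟧} {a b : 𝕜}
    (hf : HasSum (fun n ↦ coeff n f * q ^ n) a) (hg : HasSum (fun n ↦ coeff n g * q ^ n) b) :
    HasSum (fun n ↦ coeff n (f * g) * q ^ n) (a * b) := by
  have hterm (n : ℕ) : coeff n (f * g) * q ^ n =
      ∑ ij ∈ antidiagonal n, coeff ij.1 f * q ^ ij.1 * (coeff ij.2 g * q ^ ij.2) := by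
    rw [coeff_mul, sum_mul]
    refine sum_congr rfl fun ij hij ↦ ?_
    rw [← mem_antidiagonal.1 hij, pow_add]
    ring
  rw [← hf.tsum_eq, ← hg.tsum_eq,
    tsum_mul_tsum_eq_tsum_sum_antidiagonal_of_summable_norm hf.summable.norm hg.summable.norm]
  simp_rw [hterm]
  exact (summable_norm_sum_mul_antidiagonal_of_summable_norm hf.summable.norm
    hg.summable.norm).of_norm.hasSum

theorem hasSum_coeff_geometricSeries_mul_pow (hq : ‖q‖ < 1) {m : ℕ} (hm : m ≠ 0) :
    HasSum (fun n ↦ coeff n (geometricSeries 𝕜 m) * q ^ n) (1 - q ^ m)⁻¹ := by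
  have hgeom : HasSum (fun j ↦ (q ^ m) ^ j) (1 - q ^ m)⁻¹ :=
    hasSum_geometric_of_norm_lt_one (by rw [norm_pow]; exact pow_lt_one₀ (norm_nonneg q) hq hm)
  rw [← (mul_right_injective₀ hm).hasSum_iff (f := fun n ↦ coeff n _ * q ^ n)]
  · simpa [Function.comp_def, geometricSeries, pow_mul] using hgeom
  · intro n hn
    have : ¬ m ∣ n := fun ⟨j, hj⟩ ↦ hn ⟨j, hj.symm⟩
    simp [geometricSeries, this]

theorem hasSum_card_restricted_mul_pow (hq : ‖q‖ < 1) (k : ℕ) :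
    HasSum (fun n ↦ (#(Nat.Partition.restricted n (· ≤ k)) : 𝕜) * q ^ n)
      (∏ i ∈ range k, (1 - q ^ (i + 1)))⁻¹ := by
  have hprod : HasSum (fun n ↦ coeff n (∏ i ∈ range k, geometricSeries 𝕜 (i + 1)) * q ^ n)
      (∏ i ∈ range k, (1 - q ^ (i + 1)))⁻¹ := by
    induction k with
    | zero =>
      rw [prod_range_zero, prod_range_zero, inv_one]
      convert hasSum_ite_eq 0 (1 : 𝕜) using 2 with n
      by_cases hn : n = 0 <;> simp [coeff_one, hn]
    | succ k ih =>
      rw [prod_range_succ, prod_range_succ, mul_inv]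
      exact hasSum_coeff_mul_mul_pow ih (hasSum_coeff_geometricSeries_mul_pow hq k.succ_ne_zero)
  simpa [← mk_card_restricted_eq_prod_geometricSeries] using hprod

theorem tendsto_prod_one_sub_pow_inv (hq : ‖q‖ < 1) :
    Tendsto (fun k ↦ (∏ i ∈ range k, (1 - q ^ (i + 1)))⁻¹) atTop
      (nhds (∏' i : ℕ, (1 - q ^ (i + 1)))⁻¹) := by
  have hsum : Summable fun i : ℕ ↦ ‖-q ^ (i + 1)‖ := by
    simpa using (summable_nat_add_iff 1).2 (summable_geometric_of_lt_one (norm_nonneg q) hq)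
  have hfactor (i : ℕ) : 1 + -q ^ (i + 1) ≠ 0 := by
    rw [← sub_eq_add_neg, sub_ne_zero]
    intro h
    have : ‖q ^ (i + 1)‖ < 1 := norm_pow q (i + 1) ▸ pow_lt_one₀ (norm_nonneg q) hq i.succ_ne_zero
    simp [← h] at this
  simp_rw [sub_eq_add_neg]
  exact (multipliable_one_add_of_summable hsum).hasProd.tendsto_prod_nat.inv₀
    (tprod_one_add_ne_zero_of_summable hfactor hsum)

theorem summable_card_partition_mul_pow {x : ℝ} (hx : 0 ≤ x) (hx1 : x < 1) :
    Summable fun n ↦ (Fintype.card (Nat.Partition n) : ℝ) * x ^ n := by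
  have hnorm : ‖x‖ < 1 := by rwa [Real.norm_of_nonneg hx]
  obtain ⟨C, hC⟩ := (tendsto_prod_one_sub_pow_inv hnorm).bddAbove_range
  refine summable_of_sum_range_le (c := C) (fun n ↦ by positivity) fun K ↦ ?_
  calc ∑ n ∈ range K, (Fintype.card (Nat.Partition n) : ℝ) * x ^ n
      = ∑ n ∈ range K, (#(Nat.Partition.restricted n (· ≤ K)) : ℝ) * x ^ n :=
        sum_congr rfl fun n hn ↦ by rw [card_restricted_eq_card (mem_range.1 hn).le]
    _ ≤ (∏ i ∈ range K, (1 - x ^ (i + 1)))⁻¹ :=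
        sum_le_hasSum _ (fun n _ ↦ by positivity) (hasSum_card_restricted_mul_pow hnorm K)
    _ ≤ C := hC ⟨K, rfl⟩

theorem hasSum_card_partition_mul_pow (hq : ‖q‖ < 1) :
    HasSum (fun n ↦ (Fintype.card (Nat.Partition n) : 𝕜) * q ^ n)
      (∏' i : ℕ, (1 - q ^ (i + 1)))⁻¹ := by
  have hsum := summable_card_partition_mul_pow (norm_nonneg q) hq
  have hlim := tendsto_tsum_of_dominated_convergence (𝓕 := atTop)
    (f := fun k n ↦ (#(Nat.Partition.restricted n (· ≤ k)) : 𝕜) * q ^ n)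
    (g := fun n ↦ (Fintype.card (Nat.Partition n) : 𝕜) * q ^ n) hsum
    (fun n ↦ tendsto_const_nhds.congr' <| (eventually_ge_atTop n).mono fun k hk ↦ by
      simp only [card_restricted_eq_card hk])
    (.of_forall fun k n ↦ by
      rw [norm_mul, norm_pow, RCLike.norm_natCast]
      gcongr
      exact card_le_univ _)
  simp_rw [fun k ↦ (hasSum_card_restricted_mul_pow hq k).tsum_eq] at hlim
  rw [tendsto_nhds_unique (tendsto_prod_one_sub_pow_inv hq) hlim]
  exact (Summable.of_norm (by simpa [norm_mul] using hsum)).hasSum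

end EulerProduct

section SmallArgument

theorem card_partition_le_two_pow (n : ℕ) :
    Fintype.card (Nat.Partition n) ≤ 2 ^ (n - 1) :=
  (Fintype.card_le_of_surjective _ Nat.Partition.ofComposition_surj).trans_eq (composition_card n)

theorem tsum_card_partition_mul_pow_le {x : ℝ} (hx : 0 ≤ x) (hx1 : x < 1 / 2) :
    ∑' n, (Fintype.card (Nat.Partition n) : ℝ) * x ^ n ≤ 1 + x / (1 - 2 * x) := by
  have hgeom : HasSum (fun n ↦ x * (2 * x) ^ n) (x / (1 - 2 * x)) := by
    rw [div_eq_mul_inv]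
    exact (hasSum_geometric_of_lt_one (by positivity) (by linarith)).mul_left x
  have hterm (n : ℕ) : (Fintype.card (Nat.Partition (n + 1)) : ℝ) * x ^ (n + 1) ≤
      x * (2 * x) ^ n := by
    calc _ ≤ (2 : ℝ) ^ n * x ^ (n + 1) := by
          gcongr
          exact_mod_cast card_partition_le_two_pow (n + 1)
      _ = x * (2 * x) ^ n := by ring
  have hsum := summable_card_partition_mul_pow hx (by linarith)
  rw [hsum.tsum_eq_zero_add, ← hgeom.tsum_eq]
  exact add_le_add (by simp)
    (((summable_nat_add_iff 1).2 hsum).tsum_le_tsum hterm hgeom.summable)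

end SmallArgument

section ModularTransformation

open Complex ModularForm

/-- The generating function `∑ p(n) q ^ n` of the partition numbers; the series converges for
`‖q‖ < 1`. -/
noncomputable def partitionGF (q : ℂ) : ℂ :=
  ∑' n, (Fintype.card (Nat.Partition n) : ℂ) * q ^ n

theorem norm_cexp_neg_two_pi_mul (s : ℂ) :
    ‖cexp (-2 * Real.pi * s)‖ = Real.exp (-2 * Real.pi * s.re) := by
  simp [Complex.norm_exp]

variable {s : ℂ}

theorem norm_cexp_neg_two_pi_mul_lt_one (hs : 0 < s.re) : ‖cexp (-2 * Real.pi * s)‖ < 1 := by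
  rw [norm_cexp_neg_two_pi_mul, Real.exp_lt_one_iff]
  nlinarith [Real.pi_pos]

theorem I_mul_mem_upperHalfPlaneSet (hs : 0 < s.re) : I * s ∈ UpperHalfPlane.upperHalfPlaneSet := by
  simpa [UpperHalfPlane.upperHalfPlaneSet] using hs

theorem partitionGF_mul_eta (hs : 0 < s.re) :
    partitionGF (cexp (-2 * Real.pi * s)) * η (I * s) = cexp (-(Real.pi / 12) * s) := by
  rw [partitionGF, (hasSum_card_partition_mul_pow (norm_cexp_neg_two_pi_mul_lt_one hs)).tsum_eq,
    ModularForm.eta]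
  have hprod : ∏' n, (1 - eta_q n (I * s)) =
      ∏' i : ℕ, (1 - cexp (-2 * Real.pi * s) ^ (i + 1)) := by
    refine tprod_congr fun i ↦ ?_
    rw [eta_q_eq_pow]
    congr 3
    linear_combination 2 * Real.pi * s * I_mul_I
  have hne := eta_tprod_ne_zero (I_mul_mem_upperHalfPlaneSet hs)
  rw [hprod] at hne ⊢
  rw [mul_comm, mul_assoc, mul_inv_cancel₀ hne, mul_one, Function.Periodic.qParam]
  congr 1
  push_cast
  linear_combination (2 * Real.pi * s / 24) * I_mul_I

theorem sqrt_I_mul (hs : 0 < s.re) : sqrt (I * s) = sqrt I * sqrt s := by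
  have hs0 : s ≠ 0 := by rintro rfl; simp at hs
  have harg := abs_lt.mp (abs_arg_lt_pi_div_two_iff.mpr (Or.inl hs))
  rw [sqrt_eq_exp (mul_ne_zero I_ne_zero hs0), sqrt_eq_exp I_ne_zero, sqrt_eq_exp hs0,
    ← exp_add, log_mul I_ne_zero hs0 (by rw [arg_I]; constructor <;> linarith)]
  congr 1
  ring

theorem eta_I_mul_inv (hs : 0 < s.re) : η (I * s⁻¹) = s ^ (1 / 2 : ℂ) * η (I * s) := by
  have hI : sqrt I ≠ 0 := by rw [sqrt_eq_exp I_ne_zero]; exact exp_ne_zero _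
  have harg : -1 / (I * s) = I * s⁻¹ := by
    have hs0 : s ≠ 0 := by rintro rfl; simp at hs
    field_simp
    simp
  have hη := eta_comp_eq_csqrt_I_inv (I_mul_mem_upperHalfPlaneSet hs)
  simp only [Function.comp_apply, harg, Pi.smul_apply, Pi.mul_apply, smul_eq_mul,
    sqrt_I_mul hs] at hη
  rw [hη]
  field_simp
  simp [sqrt, mul_comm]

theorem partitionGF_transform (hs : 0 < s.re) :
    partitionGF (cexp (-2 * Real.pi * s)) =
      s ^ (1 / 2 : ℂ) * cexp (Real.pi / 12 / s - Real.pi / 12 * s) *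
        partitionGF (cexp (-2 * Real.pi * s⁻¹)) := by
  have hs0 : s ≠ 0 := by rintro rfl; simp at hs
  have hsinv : 0 < (s⁻¹).re := by
    rw [Complex.inv_re]; exact div_pos hs (normSq_pos.mpr hs0)
  have hη_inv := partitionGF_mul_eta hsinv
  rw [eta_I_mul_inv hs] at hη_inv
  have hexp : cexp (Real.pi / 12 / s - Real.pi / 12 * s) * cexp (-(Real.pi / 12) * s⁻¹) =
      cexp (-(Real.pi / 12) * s) := by
    rw [← exp_add]; congr 1; ring
  refine mul_right_cancel₀ (eta_ne_zero (I_mul_mem_upperHalfPlaneSet hs)) ?_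
  rw [partitionGF_mul_eta hs, ← hexp, ← hη_inv]
  ring

end ModularTransformation

section CauchyFormula

open Complex

theorem integral_cexp_two_pi_int_mul (k : ℤ) (y : ℝ) :
    ∫ x in (-(1 / 2) : ℝ)..(1 / 2), cexp (2 * Real.pi * k * (y + x * I)) =
      if k = 0 then 1 else 0 := by
  split_ifs with hk
  · norm_num [hk]
  have hc : 2 * Real.pi * k * I ≠ 0 := by simp [Real.pi_ne_zero, hk, I_ne_zero]
  have hsplit : ∀ x : ℝ, cexp (2 * Real.pi * k * (y + x * I)) =
      cexp (2 * Real.pi * k * y) * cexp (2 * Real.pi * k * I * x) := fun x ↦ by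
    rw [← Complex.exp_add]; ring_nf
  have hperiod : cexp (2 * Real.pi * k * I * ((1 / 2 : ℝ) : ℂ)) =
      cexp (2 * Real.pi * k * I * ((-(1 / 2) : ℝ) : ℂ)) := by
    rw [Complex.exp_eq_exp_iff_exists_int]
    exact ⟨k, by push_cast; ring⟩
  simp_rw [hsplit]
  rw [intervalIntegral.integral_const_mul, integral_exp_mul_complex hc, hperiod, sub_self,
    zero_div, mul_zero]

theorem integral_tsum_mul_cexp {a : ℕ → ℂ} {y : ℝ}
    (ha : Summable fun m ↦ ‖a m‖ * Real.exp (-2 * Real.pi * y) ^ m) (n : ℕ) :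
    ∫ x in (-(1 / 2) : ℝ)..(1 / 2), (∑' m, a m * cexp (-2 * Real.pi * (y + x * I)) ^ m) *
      cexp (2 * Real.pi * n * (y + x * I)) = a n := by
  set f : ℕ → C(ℝ, ℂ) := fun m ↦
    ⟨fun x ↦ a m * cexp (2 * Real.pi * ((n - m : ℤ) : ℂ) * (y + x * I)), by fun_prop⟩ with hf
  have hfx : ∀ m (x : ℝ), f m x = a m * cexp (-2 * Real.pi * (y + x * I)) ^ m *
      cexp (2 * Real.pi * n * (y + x * I)) := fun m x ↦ by
    rw [← Complex.exp_nat_mul, mul_assoc (a m), ← Complex.exp_add]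
    simp only [hf, ContinuousMap.coe_mk]
    congr 2
    push_cast
    ring
  have hsum : Summable fun m ↦
      ‖(f m).restrict (⟨Set.uIcc (-(1 / 2) : ℝ) (1 / 2), isCompact_uIcc⟩ :
        TopologicalSpace.Compacts ℝ)‖ := by
    refine Summable.of_nonneg_of_le (fun m ↦ norm_nonneg _) (fun m ↦ ?_)
      (ha.mul_right (Real.exp (2 * Real.pi * n * y)))
    refine (ContinuousMap.norm_le _ (by positivity)).mpr fun x ↦ le_of_eq ?_
    rw [ContinuousMap.restrict_apply, hfx, norm_mul, norm_mul, norm_pow, norm_cexp_neg_two_pi_mul,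
      Complex.norm_exp]
    simp
  have hint := intervalIntegral.hasSum_intervalIntegral_of_summable_norm hsum
  simp_rw [← tsum_mul_right, ← hfx]
  rw [← hint.tsum_eq, tsum_eq_single n]
  · simp only [hf, ContinuousMap.coe_mk, intervalIntegral.integral_const_mul,
      integral_cexp_two_pi_int_mul]
    simp
  · intro m hm
    simp only [hf, ContinuousMap.coe_mk, intervalIntegral.integral_const_mul,
      integral_cexp_two_pi_int_mul]
    rw [if_neg (by omega), mul_zero]

theorem card_partition_eq_integral (n : ℕ) {y : ℝ} (hy : 0 < y) :
    (Fintype.card (Nat.Partition n) : ℂ) = ∫ x in (-(1 / 2) : ℝ)..(1 / 2),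
      partitionGF (cexp (-2 * Real.pi * (y + x * I))) * cexp (2 * Real.pi * n * (y + x * I)) := by
  have hy1 : Real.exp (-2 * Real.pi * y) < 1 := by
    rw [Real.exp_lt_one_iff]; nlinarith [Real.pi_pos]
  refine (integral_tsum_mul_cexp
    (a := fun m ↦ (Fintype.card (Nat.Partition m) : ℂ)) ?_ n).symm
  simpa only [Complex.norm_natCast] using
    summable_card_partition_mul_pow (Real.exp_pos _).le hy1

end CauchyFormula

section GaussTail

open Complex MeasureTheory Set Filter Topology

/-- The Gaussian integral over the vertical ray that starts at `z`. It plays the role of the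
complementary error function: `gaussTail z` tends to `0` when `z` goes to infinity along `I`. -/
noncomputable def gaussTail (z : ℂ) : ℂ := ∫ t in Ioi (0 : ℝ), cexp ((z + t * I) ^ 2)

theorem integrable_cexp_add_mul_I_sq (z : ℂ) :
    Integrable fun t : ℝ ↦ cexp ((z + t * I) ^ 2) := by
  convert integrable_cexp_quadratic (b := 1) (by simp) (2 * z * I) (z ^ 2) using 3 with t
  linear_combination (t : ℂ) ^ 2 * I_sq

theorem intervalIntegral_cexp_add_mul_I_sq {g : ℂ → ℂ}
    (hg : ∀ z, HasDerivAt g (cexp (z ^ 2)) z) (z : ℂ) (R : ℝ) :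
    ∫ t in (0 : ℝ)..R, cexp ((z + t * I) ^ 2) = -I * (g (z + R * I) - g z) := by
  have hderiv : ∀ t ∈ uIcc 0 R,
      HasDerivAt (fun t : ℝ ↦ -I * g (z + t * I)) (cexp ((z + t * I) ^ 2)) t := fun t _ ↦ by
    have hline : HasDerivAt (fun t : ℝ ↦ z + t * I) I t := by
      simpa using ((hasDerivAt_id t).ofReal_comp.mul_const I).const_add z
    refine (((hg _).comp t hline).const_mul (-I)).congr_deriv ?_
    linear_combination -cexp ((z + t * I) ^ 2) * I_sq
  rw [intervalIntegral.integral_eq_sub_of_hasDerivAt hderiv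
    (integrable_cexp_add_mul_I_sq z).intervalIntegrable]
  simp only [neg_mul, ofReal_zero, zero_mul, add_zero, sub_neg_eq_add]
  ring

theorem tendsto_sub_of_hasDerivAt_cexp_sq {g : ℂ → ℂ}
    (hg : ∀ z, HasDerivAt g (cexp (z ^ 2)) z) (z : ℂ) :
    Tendsto (fun R : ℝ ↦ g (z + R * I) - g (R * I)) atTop (𝓝 0) := by
  have hbound : ∀ R : ℝ, ‖z‖ ≤ R → ‖g (z + R * I) - g (R * I)‖ ≤
      Real.exp (‖z‖ ^ 2 - (R - ‖z‖) ^ 2) * ‖z‖ := fun R hR ↦ by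
    have hderiv : ∀ w ∈ Metric.closedBall (R * I) ‖z‖,
        ‖cexp (w ^ 2)‖ ≤ Real.exp (‖z‖ ^ 2 - (R - ‖z‖) ^ 2) := fun w hw ↦ by
      rw [mem_closedBall_iff_norm] at hw
      have hre := (abs_re_le_norm (w - R * I)).trans hw
      have him := (abs_le.mp ((abs_im_le_norm (w - R * I)).trans hw)).1
      simp only [sub_re, sub_im, mul_re, mul_im, ofReal_re, ofReal_im, I_re, I_im] at hre him
      ring_nf at hre him
      rw [Complex.norm_exp, Real.exp_le_exp, pow_two w, mul_re, ← pow_two, ← pow_two]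
      gcongr ?_ - ?_
      · exact sq_le_sq' (abs_le.mp hre).1 (abs_le.mp hre).2
      · exact pow_le_pow_left₀ (by linarith) (by linarith) 2
    simpa using (convex_closedBall (R * I) ‖z‖).norm_image_sub_le_of_norm_hasDerivWithin_le
      (fun w _ ↦ (hg w).hasDerivWithinAt) hderiv
      (Metric.mem_closedBall_self (norm_nonneg z)) (y := z + R * I) (by simp)
  refine squeeze_zero_norm' ((eventually_ge_atTop ‖z‖).mono hbound) ?_
  rw [← zero_mul ‖z‖]
  refine (Real.tendsto_exp_atBot.comp (tendsto_const_nhds.add_atBot ?_)).mul_const _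
  exact tendsto_neg_atTop_atBot.comp ((tendsto_pow_atTop two_ne_zero).comp
    (tendsto_atTop_add_const_right _ (-‖z‖) tendsto_id))

theorem gaussTail_eq_of_hasDerivAt {g : ℂ → ℂ} (hg : ∀ z, HasDerivAt g (cexp (z ^ 2)) z) (z : ℂ) :
    gaussTail z = I * (g z - g 0) + gaussTail 0 := by
  have hlim : ∀ w : ℂ, Tendsto (fun R : ℝ ↦ -I * (g (w + R * I) - g w)) atTop
      (𝓝 (gaussTail w)) := fun w ↦ by
    simp_rw [← intervalIntegral_cexp_add_mul_I_sq hg w]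
    exact intervalIntegral_tendsto_integral_Ioi 0
      (integrable_cexp_add_mul_I_sq w).integrableOn tendsto_id
  have hsub := (hlim z).sub (hlim 0)
  have hsub' :=
    ((tendsto_sub_of_hasDerivAt_cexp_sq hg z).const_mul (-I)).add_const (I * (g z - g 0))
  rw [mul_zero, zero_add] at hsub'
  refine eq_add_of_sub_eq (tendsto_nhds_unique hsub (hsub'.congr fun R ↦ ?_))
  rw [zero_add]
  ring

theorem hasDerivAt_gaussTail (z : ℂ) : HasDerivAt gaussTail (I * cexp (z ^ 2)) z := by
  obtain ⟨g, hg⟩ := Differentiable.isExactOn_univ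
    (by fun_prop : Differentiable ℂ fun z : ℂ ↦ cexp (z ^ 2))
  have hg : ∀ z, HasDerivAt g (cexp (z ^ 2)) z := fun z ↦ hg z (mem_univ z)
  rw [funext (gaussTail_eq_of_hasDerivAt hg)]
  exact (((hg z).sub_const (g 0)).const_mul I).add_const _

theorem gaussTail_add_gaussTail_neg (z : ℂ) :
    gaussTail z + gaussTail (-z) = (√Real.pi : ℂ) := by
  have hneg : gaussTail (-z) = ∫ t in Iic (0 : ℝ), cexp ((z + t * I) ^ 2) := by
    have h := integral_comp_neg_Iic 0 (fun t : ℝ ↦ cexp ((-z + t * I) ^ 2))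
    rw [neg_zero] at h
    rw [gaussTail, ← h]
    congr 1 with t
    congr 1
    push_cast
    ring
  have hint := integrable_cexp_add_mul_I_sq z
  have hgauss := integral_cexp_quadratic (b := -1) (by simp) (2 * z * I) (z ^ 2)
  have hsq : ∀ t : ℝ, -1 * (t : ℂ) ^ 2 + 2 * z * I * t + z ^ 2 = (z + t * I) ^ 2 := fun t ↦ by
    linear_combination -(t : ℂ) ^ 2 * I_sq
  have hzero : z ^ 2 - (2 * z * I) ^ 2 / (4 * -1) = 0 := by linear_combination z ^ 2 * I_sq
  simp_rw [hsq] at hgauss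
  rw [hneg, gaussTail, add_comm, ← setIntegral_union (Iic_disjoint_Ioi le_rfl) measurableSet_Ioi
    hint.integrableOn hint.integrableOn, Iic_union_Ioi, setIntegral_univ, hgauss, hzero,
    Complex.exp_zero, mul_one, neg_neg, div_one, Real.sqrt_eq_rpow, ofReal_cpow Real.pi_pos.le]
  norm_num

open ComplexConjugate in
theorem gaussTail_conj (z : ℂ) : gaussTail (conj z) = √Real.pi - conj (gaussTail z) := by
  rw [← gaussTail_add_gaussTail_neg (conj z), eq_sub_iff_add_eq, add_right_inj, gaussTail,
    gaussTail, ← integral_conj]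
  congr 1 with t
  rw [← exp_conj]
  congr 1
  simp only [map_pow, map_add, map_mul, conj_ofReal, conj_I, mul_neg]
  ring

theorem norm_gaussTail_le {z : ℂ} (hz : 0 ≤ z.im) :
    ‖gaussTail z‖ ≤ √Real.pi / 2 * Real.exp (z ^ 2).re := by
  have hgauss := integral_gaussian_Ioi 1
  rw [div_one] at hgauss
  rw [← hgauss, mul_comm, ← integral_const_mul, gaussTail]
  refine norm_integral_le_of_norm_le ((integrable_exp_neg_mul_sq one_pos).integrableOn.const_mul _)
    (ae_restrict_of_forall_mem measurableSet_Ioi fun t (ht : 0 < t) ↦ ?_)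
  have hre : ((z + t * I) ^ 2).re = (z ^ 2).re - 2 * z.im * t - t ^ 2 := by
    simp only [pow_two, mul_re, add_re, ofReal_re, I_re, mul_zero, ofReal_im, I_im, mul_one,
      sub_self, add_zero, add_im, mul_im]
    ring
  rw [Complex.norm_exp, ← Real.exp_add, Real.exp_le_exp, hre]
  nlinarith

end GaussTail

section BesselPrimitive

open Complex ComplexConjugate

theorem cpow_half_sq (s : ℂ) : (s ^ (1 / 2 : ℂ)) ^ 2 = s := by
  rw [one_div]; exact cpow_ofNat_inv_pow s 2

theorem norm_cpow_half (s : ℂ) : ‖s ^ (1 / 2 : ℂ)‖ = √‖s‖ := by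
  rw [eq_comm, Real.sqrt_eq_iff_eq_sq (norm_nonneg _) (norm_nonneg _), ← norm_pow, cpow_half_sq]

/-- The term `exp (-2αβ) * gaussTail (β√s + α/√s)` of `besselPrimitive α β`. The derivatives of
`besselTail α β` and `besselTail (-α) β` are combinations of `s ^ (±1 / 2 - 1)` times the same
exponential `exp (β² s + α² / s)`. -/
noncomputable def besselTail (α β : ℝ) (s : ℂ) : ℂ :=
  cexp (-(2 * α * β)) * gaussTail (β * s ^ (1 / 2 : ℂ) + α / s ^ (1 / 2 : ℂ))

/-- A primitive of `s ^ (1 / 2) * exp (β² s + α² / s)` on the right half plane. Integrands of this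
form arise from Bessel functions of order `3 / 2`, which are elementary; along a bounded segment
they are evaluated up to Gaussian tails. -/
noncomputable def besselPrimitive (α β : ℝ) (s : ℂ) : ℂ :=
  1 / β ^ 2 * (s ^ (1 / 2 : ℂ) * cexp (β ^ 2 * s + α ^ 2 / s) +
    I * ((1 / (2 * β) + α) * besselTail α β s + (1 / (2 * β) - α) * besselTail (-α) β s))

variable {s : ℂ}

theorem cpow_half_re_pos (hs : 0 < s.re) : 0 < (s ^ (1 / 2 : ℂ)).re := by
  rw [one_div, cpow_inv_two_re]
  positivity

theorem cpow_half_ne_zero (hs : 0 < s.re) : s ^ (1 / 2 : ℂ) ≠ 0 := fun h ↦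
  (cpow_half_re_pos hs).ne' (by rw [h, zero_re])

theorem cpow_half_im_nonneg (hs : 0 < s.re) (hs' : 0 ≤ s.im) : 0 ≤ (s ^ (1 / 2 : ℂ)).im := by
  have him := congrArg im (cpow_half_sq s)
  rw [pow_two, mul_im] at him
  have hre := cpow_half_re_pos hs
  nlinarith

theorem cpow_half_conj (hs : 0 < s.re) : conj s ^ (1 / 2 : ℂ) = conj (s ^ (1 / 2 : ℂ)) := by
  rw [conj_cpow _ _ (mt arg_eq_pi_iff.mp fun h ↦ by linarith [h.1])]
  simp [map_ofNat]

theorem hasDerivAt_cpow_half (hs : 0 < s.re) :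
    HasDerivAt (fun s : ℂ ↦ s ^ (1 / 2 : ℂ)) (1 / (2 * s ^ (1 / 2 : ℂ))) s := by
  have hs0 : s ≠ 0 := by rintro rfl; simp at hs
  have hw := cpow_half_ne_zero hs
  refine ((hasDerivAt_id s).cpow_const (c := 1 / 2) (Or.inl hs)).congr_deriv ?_
  rw [id, cpow_sub _ _ hs0, cpow_one]
  field_simp
  rw [cpow_half_sq]

variable (α β : ℝ)

theorem neg_two_mul_add_sq (hs : 0 < s.re) :
    -(2 * α * β) + (β * s ^ (1 / 2 : ℂ) + α / s ^ (1 / 2 : ℂ)) ^ 2 = β ^ 2 * s + α ^ 2 / s := by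
  have hw := cpow_half_ne_zero hs
  conv_rhs => rw [← cpow_half_sq s]
  field_simp
  ring

theorem hasDerivAt_besselTail (hs : 0 < s.re) :
    HasDerivAt (besselTail α β)
      (I * cexp (β ^ 2 * s + α ^ 2 / s) *
        ((β - α / s) / (2 * s ^ (1 / 2 : ℂ)))) s := by
  have hw := cpow_half_ne_zero hs
  have hroot := hasDerivAt_cpow_half hs
  have harg := (hroot.const_mul (β : ℂ)).add ((hasDerivAt_const s (α : ℂ)).fun_div hroot hw)
  refine (((hasDerivAt_gaussTail _).comp s harg).const_mul
    (cexp (-(2 * α * β)))).congr_deriv ?_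
  rw [← neg_two_mul_add_sq α β hs, Complex.exp_add]
  simp only [Pi.add_apply]
  conv_rhs => enter [2, 1, 2, 2]; rw [← cpow_half_sq s]
  field_simp
  ring

theorem hasDerivAt_cexp_mul_add_div (a b : ℂ) {s : ℂ} (hs : s ≠ 0) :
    HasDerivAt (fun s : ℂ ↦ cexp (b * s + a / s)) (cexp (b * s + a / s) * (b - a / s ^ 2)) s := by
  refine (((hasDerivAt_id s).const_mul b).add
    ((hasDerivAt_inv hs).const_mul a)).cexp.congr_deriv ?_
  simp only [id, div_eq_mul_inv, Pi.add_apply]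
  ring

variable {β} in
theorem hasDerivAt_besselPrimitive (hβ : β ≠ 0) (hs : 0 < s.re) :
    HasDerivAt (besselPrimitive α β) (s ^ (1 / 2 : ℂ) * cexp (β ^ 2 * s + α ^ 2 / s)) s := by
  have hs0 : s ≠ 0 := by rintro rfl; simp at hs
  have hβ' : (β : ℂ) ≠ 0 := by exact_mod_cast hβ
  have hw := cpow_half_ne_zero hs
  have hw2 := cpow_half_sq s
  have hderiv := (((hasDerivAt_cpow_half hs).mul
    (hasDerivAt_cexp_mul_add_div (α ^ 2) (β ^ 2) hs0)).add
    ((((hasDerivAt_besselTail α β hs).const_mul (1 / (2 * β) + α : ℂ)).add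
      ((hasDerivAt_besselTail (-α) β hs).const_mul (1 / (2 * β) - α : ℂ))).const_mul I)).const_mul
    (1 / β ^ 2 : ℂ)
  refine hderiv.congr_deriv ?_
  push_cast
  rw [neg_sq]
  generalize cexp (β ^ 2 * s + α ^ 2 / s) = E
  generalize s ^ (1 / 2 : ℂ) = w at *
  subst hw2
  field_simp
  linear_combination (2 * E * β * (w ^ 2 - 2 * α ^ 2)) * I_sq

theorem besselTail_conj (hs : 0 < s.re) :
    besselTail α β (conj s) =
      √Real.pi * cexp (-(2 * α * β)) - conj (besselTail α β s) := by
  have harg : (β * conj (s ^ (1 / 2 : ℂ)) + α / conj (s ^ (1 / 2 : ℂ)) : ℂ) =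
      conj (β * s ^ (1 / 2 : ℂ) + α / s ^ (1 / 2 : ℂ)) := by simp
  have hexp : conj (cexp (-(2 * α * β))) = cexp (-(2 * α * β)) := by
    rw [← exp_conj]; simp [map_ofNat]
  rw [besselTail, besselTail, cpow_half_conj hs, harg, gaussTail_conj, map_mul, hexp]
  ring

theorem besselPrimitive_conj (hs : 0 < s.re) :
    besselPrimitive α β (conj s) = conj (besselPrimitive α β s) +
      I * (√Real.pi / β ^ 2 * ((1 / (2 * β) + α) * cexp (-(2 * α * β)) +
        (1 / (2 * β) - α) * cexp (2 * α * β))) := by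
  simp only [besselPrimitive, besselTail_conj _ _ hs, cpow_half_conj hs, map_mul, map_add, map_sub,
    map_div₀, map_pow, map_one, map_ofNat, conj_ofReal, conj_I, ← exp_conj]
  push_cast
  ring_nf

theorem mul_add_div_im {w : ℂ} (hw : w ≠ 0) :
    ((β : ℂ) * w + α / w).im = w.im * (β - α / ‖w‖ ^ 2) := by
  have : ‖w‖ ≠ 0 := norm_ne_zero_iff.mpr hw
  rw [div_eq_mul_inv, Complex.add_im, Complex.im_ofReal_mul, Complex.im_ofReal_mul, Complex.inv_im,
    ← Complex.sq_norm]
  field_simp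
  ring

variable {α β}

theorem norm_besselTail_le (hs : 0 < s.re) (hs' : 0 ≤ s.im) (h : α ≤ β * ‖s‖) :
    ‖besselTail α β s‖ ≤ √Real.pi / 2 * Real.exp (β ^ 2 * s + α ^ 2 / s : ℂ).re := by
  have hs0 : s ≠ 0 := by rintro rfl; simp at hs
  have him : 0 ≤ ((β : ℂ) * s ^ (1 / 2 : ℂ) + α / s ^ (1 / 2 : ℂ)).im := by
    rw [mul_add_div_im α β (cpow_half_ne_zero hs), norm_cpow_half, Real.sq_sqrt (norm_nonneg s)]
    refine mul_nonneg (cpow_half_im_nonneg hs hs') (sub_nonneg.mpr ?_)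
    rwa [div_le_iff₀ (norm_pos_iff.mpr hs0)]
  rw [besselTail, norm_mul, Complex.norm_exp, ← neg_two_mul_add_sq α β hs, add_re, Real.exp_add,
    mul_left_comm]
  gcongr
  exact norm_gaussTail_le him

theorem norm_besselPrimitive_le (hs : 0 < s.re) (hs' : 0 ≤ s.im) (hβ : 0 < β)
    (hαβ : 1 ≤ 2 * α * β) (h : α ≤ β * ‖s‖) :
    ‖besselPrimitive α β s‖ ≤
      (√‖s‖ + √Real.pi * α) / β ^ 2 * Real.exp (β ^ 2 * s + α ^ 2 / s : ℂ).re := by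
  set B := Real.exp (β ^ 2 * s + α ^ 2 / s : ℂ).re
  have hα : 0 < α := by
    by_contra! hα
    nlinarith
  have hcoeff : 0 ≤ α - 1 / (2 * β) := by
    rw [sub_nonneg, div_le_iff₀ (by positivity)]; linarith
  have htail : ‖besselTail α β s‖ ≤ √Real.pi / 2 * B := norm_besselTail_le hs hs' h
  have htail' : ‖besselTail (-α) β s‖ ≤ √Real.pi / 2 * B := by
    have := norm_besselTail_le (α := -α) (β := β) hs hs' (by nlinarith [norm_nonneg s])
    rwa [ofReal_neg, neg_sq] at this
  have hnorm : ‖(1 / (2 * β) + α : ℂ)‖ = α + 1 / (2 * β) := by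
    rw [show (1 / (2 * β) + α : ℂ) = ((α + 1 / (2 * β) : ℝ) : ℂ) by push_cast; ring,
      Complex.norm_of_nonneg (by positivity)]
  have hnorm' : ‖(1 / (2 * β) - α : ℂ)‖ = α - 1 / (2 * β) := by
    rw [← norm_neg, show -(1 / (2 * β) - α : ℂ) = ((α - 1 / (2 * β) : ℝ) : ℂ) by push_cast; ring,
      Complex.norm_of_nonneg hcoeff]
  have hβnorm : ‖(1 / β ^ 2 : ℂ)‖ = 1 / β ^ 2 := by
    rw [norm_div, norm_one, norm_pow, norm_real, Real.norm_eq_abs, sq_abs]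
  rw [besselPrimitive, norm_mul, hβnorm]
  calc
    _ ≤ 1 / β ^ 2 * (√‖s‖ * B + ((α + 1 / (2 * β)) * (√Real.pi / 2 * B) +
          (α - 1 / (2 * β)) * (√Real.pi / 2 * B))) := by
      gcongr
      refine (norm_add_le _ _).trans (add_le_add ?_ ?_)
      · rw [norm_mul, norm_cpow_half, Complex.norm_exp]
      · rw [norm_mul, norm_I, one_mul]
        refine (norm_add_le _ _).trans ?_
        rw [norm_mul, norm_mul, hnorm, hnorm']
        gcongr
    _ = _ := by ring

theorem continuous_cpow_half_mul_cexp {y : ℝ} (hy : 0 < y) (a b : ℂ) :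
    Continuous fun x : ℝ ↦ ((y : ℂ) + x * I) ^ (1 / 2 : ℂ) *
      cexp (b * (y + x * I) + a / (y + x * I)) := by
  have hre : ∀ x : ℝ, 0 < ((y : ℂ) + x * I).re := fun x ↦ by simpa using hy
  have hne : ∀ x : ℝ, (y : ℂ) + x * I ≠ 0 := fun x h ↦ by simpa [h] using hre x
  exact (Continuous.cpow (by fun_prop) continuous_const fun x ↦ Or.inl (hre x)).mul
    (Continuous.add (by fun_prop) (continuous_const.div (by fun_prop) hne)).cexp

theorem integral_cpow_half_mul_cexp {y : ℝ} (hy : 0 < y) (hβ : β ≠ 0) (u v : ℝ) :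
    ∫ x in u..v, ((y : ℂ) + x * I) ^ (1 / 2 : ℂ) *
        cexp ((β : ℂ) ^ 2 * (y + x * I) + (α : ℂ) ^ 2 / (y + x * I)) =
      -I * (besselPrimitive α β (y + v * I) - besselPrimitive α β (y + u * I)) := by
  have hre : ∀ x : ℝ, 0 < ((y : ℂ) + x * I).re := fun x ↦ by simpa using hy
  rw [mul_sub]
  refine intervalIntegral.integral_eq_sub_of_hasDerivAt
    (f := fun x : ℝ ↦ -I * besselPrimitive α β (y + x * I)) (fun x _ ↦ ?_) ?_
  · have hline : HasDerivAt (fun x : ℝ ↦ (y : ℂ) + x * I) I x := by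
      simpa using ((hasDerivAt_id x).ofReal_comp.mul_const I).const_add (y : ℂ)
    refine (((hasDerivAt_besselPrimitive α hβ (hre x)).comp x hline).const_mul
      (-I)).congr_deriv ?_
    rw [mul_left_comm, neg_mul, I_mul_I, neg_neg, mul_one]
  · exact (continuous_cpow_half_mul_cexp hy _ _).intervalIntegrable _ _

theorem re_mul_add_div_le {y : ℝ} (hy : 0 < y) {s : ℂ} (hre : s.re = y) (him : s.im = 1 / 2) :
    ((β : ℂ) ^ 2 * s + (α : ℂ) ^ 2 / s).re ≤ β ^ 2 * y + 4 * α ^ 2 * y := by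
  rw [div_eq_mul_inv, ← ofReal_pow, ← ofReal_pow, add_re, re_ofReal_mul, re_ofReal_mul, inv_re,
    normSq_apply, hre, him]
  have : y / (y * y + 1 / 2 * (1 / 2)) ≤ 4 * y := by
    rw [div_le_iff₀ (by positivity)]
    nlinarith [pow_pos hy 3]
  nlinarith [mul_le_mul_of_nonneg_left this (sq_nonneg α)]

theorem norm_integral_cpow_half_mul_cexp_sub_le {y : ℝ} (hαβ : 2 * α ≤ β)
    (hαβ' : 1 ≤ 2 * α * β) (hβ : 0 < β) (hy : 0 < y) (hy' : y ≤ 1 / 2) :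
    ‖(∫ x in (-(1 / 2) : ℝ)..(1 / 2), ((y : ℂ) + x * I) ^ (1 / 2 : ℂ) *
        cexp ((β : ℂ) ^ 2 * (y + x * I) + (α : ℂ) ^ 2 / (y + x * I))) -
      (√Real.pi / β ^ 2 * ((α - 1 / (2 * β)) * Real.exp (2 * α * β) -
        (α + 1 / (2 * β)) * Real.exp (-(2 * α * β))) : ℝ)‖ ≤
      2 * ((1 + √Real.pi * α) / β ^ 2) * Real.exp (β ^ 2 * y + 4 * α ^ 2 * y) := by
  set s : ℂ := y + (1 / 2 : ℝ) * I with hs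
  have hre : s.re = y := by simp [hs]
  have him : s.im = 1 / 2 := by simp [hs]
  have hconj : (y + (-(1 / 2) : ℝ) * I : ℂ) = conj s := by simp [hs, map_ofNat]
  have hnorm_sq : ‖s‖ ^ 2 = y ^ 2 + 1 / 4 := by
    rw [Complex.sq_norm, normSq_apply, hre, him]; ring
  have hnorm : 1 / 2 ≤ ‖s‖ := by nlinarith [norm_nonneg s]
  have hnorm' : √‖s‖ ≤ 1 := by
    rw [Real.sqrt_le_one]; nlinarith [norm_nonneg s]
  have hα : 0 ≤ α := by
    by_contra! hα
    nlinarith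
  rw [integral_cpow_half_mul_cexp hy hβ.ne', ← hs, hconj, besselPrimitive_conj α β (hre ▸ hy)]
  calc
    _ = ‖-I * (besselPrimitive α β s - conj (besselPrimitive α β s))‖ := by
      congr 1
      push_cast
      linear_combination (√Real.pi / β ^ 2 * ((1 / (2 * β) + α) * cexp (-(2 * α * β)) +
        (1 / (2 * β) - α) * cexp (2 * α * β)) : ℂ) * I_sq
    _ ≤ 2 * ‖besselPrimitive α β s‖ := by
      rw [norm_mul, norm_neg, norm_I, one_mul, two_mul]
      simpa only [RCLike.norm_conj] using norm_sub_le _ (conj (besselPrimitive α β s))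
    _ ≤ _ := by
      rw [mul_assoc]
      gcongr
      refine (norm_besselPrimitive_le (hre ▸ hy) (by rw [him]; norm_num) hβ hαβ'
        (by nlinarith)).trans ?_
      gcongr
      exact re_mul_add_div_le hy hre him

end BesselPrimitive

section MainIntegral

open Complex

theorem norm_partitionGF_ofReal {x : ℝ} (hx : 0 ≤ x) :
    ‖partitionGF x‖ = ∑' n, (Fintype.card (Nat.Partition n) : ℝ) * x ^ n := by
  rw [← Real.norm_of_nonneg (tsum_nonneg fun n ↦ by positivity), ← Complex.norm_real, partitionGF,
    Complex.ofReal_tsum]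
  push_cast
  rfl

theorem norm_partitionGF_sub_one_le {q : ℂ} (hq : ‖q‖ < 1) :
    ‖partitionGF q - 1‖ ≤ ∑' n, (Fintype.card (Nat.Partition n) : ℝ) * ‖q‖ ^ n - 1 := by
  have hsum := summable_card_partition_mul_pow (norm_nonneg q) hq
  have hnorm : ∀ n, ‖(Fintype.card (Nat.Partition n) : ℂ) * q ^ n‖ =
      (Fintype.card (Nat.Partition n) : ℝ) * ‖q‖ ^ n := fun n ↦ by simp
  have hsum' : Summable fun n ↦ (Fintype.card (Nat.Partition n) : ℂ) * q ^ n :=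
    Summable.of_norm (by simpa only [hnorm] using hsum)
  have hcard : Fintype.card (Nat.Partition 0) = 1 := by decide
  rw [partitionGF, hsum'.tsum_eq_zero_add, hsum.tsum_eq_zero_add, hcard]
  simp only [Nat.cast_one, pow_zero, mul_one, add_sub_cancel_left]
  refine (norm_tsum_le_tsum_norm ?_).trans_eq (tsum_congr fun n ↦ hnorm (n + 1))
  simpa only [hnorm] using (summable_nat_add_iff 1).mpr hsum

variable {t : ℝ}

theorem tsum_card_partition_mul_exp_transform (ht : 0 < t) :
    ∑' n, (Fintype.card (Nat.Partition n) : ℝ) * Real.exp (-2 * Real.pi * t) ^ n =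
      √t * Real.exp (Real.pi / 12 / t - Real.pi / 12 * t) *
        ∑' n, (Fintype.card (Nat.Partition n) : ℝ) * Real.exp (-2 * Real.pi * t⁻¹) ^ n := by
  have h := congrArg norm (partitionGF_transform (s := (t : ℂ)) (by simpa using ht))
  rw [norm_mul, norm_mul, norm_cpow_half, norm_real, Real.norm_of_nonneg ht.le] at h
  rw [← norm_partitionGF_ofReal (Real.exp_pos _).le, ← norm_partitionGF_ofReal (Real.exp_pos _).le,
    ← Real.norm_of_nonneg (Real.exp_pos (_ - _)).le, ← norm_real]
  push_cast
  exact h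

theorem exp_neg_two_pi_mul_le (ht : 1 ≤ t) : Real.exp (-2 * Real.pi * t) ≤ 1 / 4 := by
  rw [neg_mul, neg_mul, Real.exp_neg, one_div]
  refine inv_anti₀ (by norm_num) ?_
  nlinarith [Real.add_one_le_exp (2 * Real.pi * t), Real.pi_gt_three]

theorem tsum_card_partition_mul_exp_le_of_one_le (ht : 1 ≤ t) :
    ∑' n, (Fintype.card (Nat.Partition n) : ℝ) * Real.exp (-2 * Real.pi * t) ^ n ≤
      1 + 2 * Real.exp (-2 * Real.pi * t) := by
  have hx := exp_neg_two_pi_mul_le ht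
  refine (tsum_card_partition_mul_pow_le (Real.exp_pos _).le (by linarith)).trans ?_
  gcongr
  rw [div_le_iff₀ (by linarith)]
  nlinarith [Real.exp_pos (-2 * Real.pi * t)]

theorem tsum_card_partition_mul_exp_le_of_le_one (ht : 0 < t) (ht' : t ≤ 1) :
    ∑' n, (Fintype.card (Nat.Partition n) : ℝ) * Real.exp (-2 * Real.pi * t) ^ n ≤
      2 * Real.exp (Real.pi / 12 / t - Real.pi / 12 * t) := by
  have hinv : 1 ≤ t⁻¹ := (one_le_inv₀ ht).mpr ht'
  rw [tsum_card_partition_mul_exp_transform ht, mul_comm]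
  gcongr
  · linarith [tsum_card_partition_mul_exp_le_of_one_le hinv, exp_neg_two_pi_mul_le hinv]
  · exact mul_le_of_le_one_left (Real.exp_pos _).le (Real.sqrt_le_one.mpr ht')

theorem exp_mul_tsum_card_partition_sub_one_le (ht : 0 < t) :
    Real.exp (Real.pi / 12 * t) *
      (∑' n, (Fintype.card (Nat.Partition n) : ℝ) * Real.exp (-2 * Real.pi * t) ^ n - 1) ≤
      2 * Real.exp (Real.pi / 12 / t) := by
  have hpi := Real.pi_pos
  rcases le_total 1 t with h | h
  · calc
      _ ≤ Real.exp (Real.pi / 12 * t) * (2 * Real.exp (-2 * Real.pi * t)) := by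
        gcongr
        linarith [tsum_card_partition_mul_exp_le_of_one_le h]
      _ = 2 * Real.exp (Real.pi / 12 * t + -2 * Real.pi * t) := by rw [Real.exp_add]; ring
      _ ≤ 2 * Real.exp (Real.pi / 12 / t) := by
        gcongr
        have : 0 ≤ Real.pi / 12 / t := by positivity
        nlinarith
  · calc
      _ ≤ Real.exp (Real.pi / 12 * t) *
          (2 * Real.exp (Real.pi / 12 / t - Real.pi / 12 * t)) := by
        gcongr
        linarith [tsum_card_partition_mul_exp_le_of_le_one ht h]
      _ = 2 * Real.exp (Real.pi / 12 / t) := by rw [mul_left_comm, ← Real.exp_add]; ring_nf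

theorem norm_cexp_mul_partitionGF_sub_one_le {u : ℂ} (hu : 0 < u.re) :
    ‖cexp (Real.pi / 12 * u) * (partitionGF (cexp (-2 * Real.pi * u)) - 1)‖ ≤
      2 * Real.exp (Real.pi / 12 / u.re) := by
  have h := norm_partitionGF_sub_one_le (norm_cexp_neg_two_pi_mul_lt_one hu)
  rw [norm_cexp_neg_two_pi_mul] at h
  rw [norm_mul, Complex.norm_exp, ← ofReal_ofNat, ← ofReal_div, re_ofReal_mul]
  refine le_trans ?_ (exp_mul_tsum_card_partition_sub_one_le hu)
  gcongr

variable {s : ℂ}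

theorem partitionGF_mul_cexp_sub (a : ℂ) (hs : 0 < s.re) :
    partitionGF (cexp (-2 * Real.pi * s)) * cexp (2 * Real.pi * a * s) -
        s ^ (1 / 2 : ℂ) * cexp (2 * Real.pi * (a - 1 / 24) * s + Real.pi / 12 / s) =
      s ^ (1 / 2 : ℂ) * cexp (2 * Real.pi * (a - 1 / 24) * s) *
        (cexp (Real.pi / 12 * s⁻¹) * (partitionGF (cexp (-2 * Real.pi * s⁻¹)) - 1)) := by
  have hexp : cexp (Real.pi / 12 * s⁻¹ - Real.pi / 12 * s) * cexp (2 * Real.pi * a * s) =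
      cexp (2 * Real.pi * (a - 1 / 24) * s) * cexp (Real.pi / 12 * s⁻¹) := by
    rw [← Complex.exp_add, ← Complex.exp_add]; congr 1; ring
  rw [partitionGF_transform hs, Complex.exp_add, div_eq_mul_inv _ s]
  linear_combination (s ^ (1 / 2 : ℂ) * partitionGF (cexp (-2 * Real.pi * s⁻¹))) * hexp

theorem norm_partitionGF_mul_cexp_sub_le (a : ℝ) (hs : 0 < s.re) (hs' : ‖s‖ ≤ 1) :
    ‖partitionGF (cexp (-2 * Real.pi * s)) * cexp (2 * Real.pi * a * s) -
        s ^ (1 / 2 : ℂ) * cexp (2 * Real.pi * (a - 1 / 24) * s + Real.pi / 12 / s)‖ ≤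
      2 * Real.exp (2 * Real.pi * (a - 1 / 24) * s.re + Real.pi / 12 / (s⁻¹).re) := by
  have hs0 : s ≠ 0 := by rintro rfl; simp at hs
  have hinv : 0 < (s⁻¹).re := by
    rw [inv_re]; exact div_pos hs (normSq_pos.mpr hs0)
  have hcast : (2 * Real.pi * (a - 1 / 24) : ℂ) = ((2 * Real.pi * (a - 1 / 24) : ℝ) : ℂ) := by
    push_cast; ring
  rw [partitionGF_mul_cexp_sub _ hs, norm_mul, norm_mul, norm_cpow_half, Complex.norm_exp, hcast,
    re_ofReal_mul]
  calc
    _ ≤ 1 * Real.exp (2 * Real.pi * (a - 1 / 24) * s.re) *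
        (2 * Real.exp (Real.pi / 12 / (s⁻¹).re)) := by
      gcongr
      · exact Real.sqrt_le_one.mpr hs'
      · exact norm_cexp_mul_partitionGF_sub_one_le hinv
    _ = _ := by rw [Real.exp_add]; ring

theorem norm_card_partition_sub_integral_le {n : ℕ} {y : ℝ} (hy : 0 < y) (hy' : y ≤ 1 / 2) :
    ‖(Fintype.card (Nat.Partition n) : ℂ) - ∫ x in (-(1 / 2) : ℝ)..(1 / 2),
      ((y : ℂ) + x * I) ^ (1 / 2 : ℂ) *
        cexp ((2 * Real.pi * (n - 1 / 24)) * (y + x * I) + Real.pi / 12 / (y + x * I))‖ ≤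
      2 * Real.exp (2 * Real.pi * (n - 1 / 24) * y + Real.pi / 12 * (1 / (4 * y) + y)) := by
  have hcauchy := card_partition_eq_integral n hy
  have hint := intervalIntegral.intervalIntegrable_of_integral_ne_zero
    (hcauchy ▸ Nat.cast_ne_zero.mpr Fintype.card_ne_zero)
  rw [hcauchy, ← intervalIntegral.integral_sub hint
    ((continuous_cpow_half_mul_cexp hy _ _).intervalIntegrable _ _)]
  refine (intervalIntegral.norm_integral_le_of_norm_le_const
    (C := 2 * Real.exp (2 * Real.pi * (n - 1 / 24) * y + Real.pi / 12 * (1 / (4 * y) + y)))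
    fun x hx ↦ ?_).trans (by norm_num)
  rw [Set.uIoc_of_le (by norm_num)] at hx
  have hx2 : x ^ 2 ≤ 1 / 4 := by nlinarith [hx.1, hx.2]
  set s : ℂ := y + x * I with hs
  have hre : s.re = y := by simp [hs]
  have hnorm_sq : ‖s‖ ^ 2 = y ^ 2 + x ^ 2 := by
    have him : s.im = x := by simp [hs]
    rw [Complex.sq_norm, normSq_apply, hre, him]; ring
  refine (norm_partitionGF_mul_cexp_sub_le n (hre ▸ hy)
    (by nlinarith [norm_nonneg s])).trans ?_
  have := Real.pi_pos
  rw [inv_re, ← Complex.sq_norm, hnorm_sq, hre, div_eq_mul_inv _ (y / _), inv_div]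
  gcongr
  rw [div_add' _ _ _ (by positivity), div_le_div_iff₀ hy (by positivity)]
  nlinarith

end MainIntegral

section EffectiveAsymptotics

open Real

/-- The leading term of the Hardy–Ramanujan–Rademacher formula for `p(n)`, as a function of
`μ = π * √(2 / 3 * (n - 1 / 24))`. -/
noncomputable def partitionMain (μ : ℝ) : ℝ :=
  √3 * π ^ 2 / (18 * μ ^ 2) * (1 - 1 / μ) * exp μ

theorem sqrt_pi_mul_sqrt_pi_div_twelve : √π * √(π / 12) = π * √3 / 6 := by
  rw [← sqrt_mul pi_pos.le, sqrt_eq_iff_mul_self_eq_of_pos (by positivity)]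
  linear_combination π ^ 2 / 36 * mul_self_sqrt (show (0 : ℝ) ≤ 3 by norm_num)

theorem sqrt_pi_div_sq_mul_eq {α μ : ℝ} (hα : α = √(π / 12)) (hμ : μ ≠ 0) :
    √π / (μ / (2 * α)) ^ 2 * ((α - 1 / (2 * (μ / (2 * α)))) * exp μ -
      (α + 1 / (2 * (μ / (2 * α)))) * exp (-μ)) =
    partitionMain μ - √3 * π ^ 2 / (18 * μ ^ 2) * (1 + 1 / μ) * exp (-μ) := by
  have hα0 : α ≠ 0 := hα ▸ by positivity
  have hα2 : α ^ 2 = π / 12 := hα ▸ sq_sqrt (by positivity)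
  have hsqrt : √π * α = π * √3 / 6 := hα ▸ sqrt_pi_mul_sqrt_pi_div_twelve
  calc
    _ = 4 * α ^ 2 * (√π * α) / μ ^ 2 * ((1 - 1 / μ) * exp μ - (1 + 1 / μ) * exp (-μ)) := by
      field_simp
      ring
    _ = _ := by
      rw [hα2, hsqrt, partitionMain]
      ring

variable {μ : ℝ}

theorem discarded_exponential_le (hμ : 3 ≤ μ) :
    √3 * π ^ 2 / (18 * μ ^ 2) * (1 + 1 / μ) * exp (-μ) ≤ exp (μ / 2) := by
  have hsqrt : √3 ≤ 2 := sqrt_le_iff.mpr (by norm_num)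
  have hfactor : √3 * π ^ 2 / (18 * μ ^ 2) ≤ 1 / 2 := by
    rw [div_le_iff₀ (by positivity)]
    calc √3 * π ^ 2 ≤ 2 * 4 ^ 2 := by gcongr; exact pi_le_four
      _ ≤ 1 / 2 * (18 * 3 ^ 2) := by norm_num
      _ ≤ 1 / 2 * (18 * μ ^ 2) := by gcongr
  have hinv : 1 / μ ≤ 1 := by
    rw [div_le_one (by linarith)]; linarith
  calc _ ≤ 1 / 2 * (1 + 1) * exp (μ / 2) := by gcongr; linarith
    _ = exp (μ / 2) := by ring

theorem two_mul_one_add_pi_mul_sqrt_three_div_le_one (hμ : 3 ≤ μ) :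
    2 * ((1 + π * √3 / 6) / (3 * μ ^ 2 / π)) ≤ 1 := by
  have hpi := pi_le_four
  have hsqrt : √3 ≤ 2 := sqrt_le_iff.mpr (by norm_num)
  rw [div_div_eq_mul_div, mul_div_assoc', div_le_one (by positivity)]
  calc 2 * ((1 + π * √3 / 6) * π) ≤ 2 * ((1 + 4 * 2 / 6) * 4) := by gcongr
    _ ≤ 3 * 3 ^ 2 := by norm_num
    _ ≤ 3 * μ ^ 2 := by gcongr

theorem norm_integral_sub_partitionMain_le (hμ : 3 ≤ μ) {c : ℂ} (hc : c = (3 * μ ^ 2 / π : ℝ)) :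
    ‖(∫ x in (-(1 / 2) : ℝ)..(1 / 2), ((π / (12 * μ) : ℝ) + x * Complex.I) ^ (1 / 2 : ℂ) *
        Complex.exp (c * ((π / (12 * μ) : ℝ) + x * Complex.I) +
          π / 12 / ((π / (12 * μ) : ℝ) + x * Complex.I))) -
      (partitionMain μ - √3 * π ^ 2 / (18 * μ ^ 2) * (1 + 1 / μ) * exp (-μ) : ℝ)‖ ≤
      exp (μ / 2) := by
  obtain ⟨α, hα⟩ : ∃ α, α = √(π / 12) := ⟨_, rfl⟩
  have hpi := pi_le_four
  have hα0 : 0 < α := hα ▸ by positivity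
  have hα2 : α ^ 2 = π / 12 := hα ▸ sq_sqrt (by positivity)
  have hsqrt : √π * α = π * √3 / 6 := hα ▸ sqrt_pi_mul_sqrt_pi_div_twelve
  have hαβ : 2 * α * (μ / (2 * α)) = μ := by field_simp
  have hβ2 : (μ / (2 * α)) ^ 2 = 3 * μ ^ 2 / π := by
    rw [div_pow, mul_pow, hα2]; field_simp; norm_num
  have hy : π / (12 * μ) ≤ 1 / 9 := by
    rw [div_le_div_iff₀ (by positivity) (by norm_num)]; linarith
  have h := norm_integral_cpow_half_mul_cexp_sub_le (α := α) (β := μ / (2 * α))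
    (y := π / (12 * μ)) (by rw [le_div_iff₀ (by positivity)]; nlinarith)
    (by linarith) (by positivity) (by positivity) (by linarith)
  rw [hαβ, sqrt_pi_div_sq_mul_eq hα (by positivity), ← Complex.ofReal_pow, hβ2, ← hc,
    ← Complex.ofReal_pow, hα2, hsqrt] at h
  push_cast at h ⊢
  refine h.trans ?_
  have hexponent : 3 * μ ^ 2 / π * (π / (12 * μ)) + 4 * (π / 12) * (π / (12 * μ)) ≤ μ / 2 := by
    have hfirst : 3 * μ ^ 2 / π * (π / (12 * μ)) = μ / 4 := by field_simp; norm_num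
    nlinarith [pi_pos]
  calc _ ≤ 1 * exp (μ / 2) := by gcongr; exact two_mul_one_add_pi_mul_sqrt_three_div_le_one hμ
    _ = exp (μ / 2) := one_mul _

theorem abs_card_partition_sub_partitionMain_le {n : ℕ} (hμ : 3 ≤ μ)
    (hμn : μ ^ 2 = 2 * π ^ 2 / 3 * (n - 1 / 24)) :
    |Fintype.card (Nat.Partition n) - partitionMain μ| ≤ 5 * exp (μ / 2) := by
  have hpi := pi_le_four
  have hc : 2 * π * (n - 1 / 24) = 3 * μ ^ 2 / π := by
    rw [hμn]; field_simp
  have hy : π / (12 * μ) ≤ 1 / 9 := by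
    rw [div_le_div_iff₀ (by positivity) (by norm_num)]; linarith
  have hmain := norm_integral_sub_partitionMain_le (c := 2 * π * (n - 1 / 24)) hμ
    (by rw [← hc]; push_cast; rfl)
  have hremainder : ‖(Fintype.card (Nat.Partition n) : ℂ) - _‖ ≤ _ :=
    norm_card_partition_sub_integral_le (y := π / (12 * μ)) (by positivity) (by linarith)
  have hexponent : 2 * π * (n - 1 / 24) * (π / (12 * μ)) +
      π / 12 * (1 / (4 * (π / (12 * μ))) + π / (12 * μ)) ≤ μ / 2 + 1 / 27 := by
    calc
      _ = μ / 2 + π / 12 * (π / (12 * μ)) := by rw [hc]; field_simp; ring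
      _ ≤ μ / 2 + 4 / 12 * (1 / 9) := by gcongr
      _ = μ / 2 + 1 / 27 := by norm_num
  have hexp : exp (1 / 27) ≤ 3 / 2 :=
    (exp_bound_div_one_sub_of_interval (by norm_num) (by norm_num)).trans (by norm_num)
  have herror : 2 * exp (2 * π * (n - 1 / 24) * (π / (12 * μ)) +
      π / 12 * (1 / (4 * (π / (12 * μ))) + π / (12 * μ))) ≤ 3 * exp (μ / 2) :=
    calc
      _ ≤ 2 * exp (μ / 2 + 1 / 27) := by gcongr
      _ = 2 * exp (μ / 2) * exp (1 / 27) := by rw [exp_add, mul_assoc]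
      _ ≤ 2 * exp (μ / 2) * (3 / 2) := by gcongr
      _ = 3 * exp (μ / 2) := by ring
  have htotal := (norm_sub_le_norm_sub_add_norm_sub _ _ _).trans
    (add_le_add (hremainder.trans herror) hmain)
  rw [← Complex.ofReal_natCast, ← Complex.ofReal_sub, Complex.norm_real, norm_eq_abs] at htotal
  have hdiscard := discarded_exponential_le hμ
  have hnonneg : 0 ≤ √3 * π ^ 2 / (18 * μ ^ 2) * (1 + 1 / μ) * exp (-μ) := by positivity
  rw [abs_le] at htotal ⊢
  constructor <;> linarith [htotal.1, htotal.2]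

end EffectiveAsymptotics

section SecondDifferences

open Real

theorem sqrt_sub_sqrt_mul_add {a b : ℝ} (ha : 0 ≤ a) (hb : 0 ≤ b) :
    (√b - √a) * (√a + √b) = b - a := by
  linear_combination sq_sqrt hb - sq_sqrt ha

variable {N : ℝ}

theorem sqrt_second_difference_le (hN : 1 < N) :
    2 * √N - √(N - 1) - √(N + 1) ≤ 1 / (4 * √(N - 1) ^ 3) := by
  have h₁ := sqrt_sub_sqrt_mul_add (a := N - 1) (b := N) (by linarith) (by linarith)
  have h₂ := sqrt_sub_sqrt_mul_add (a := N) (b := N + 1) (by linarith) (by linarith)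
  have h₃ := sqrt_sub_sqrt_mul_add (a := N - 1) (b := N + 1) (by linarith) (by linarith)
  have hs : 0 < √(N - 1) := sqrt_pos.mpr (by linarith)
  have hsr : √(N - 1) ≤ √N := sqrt_le_sqrt (by linarith)
  have hrt : √N ≤ √(N + 1) := sqrt_le_sqrt (by linarith)
  set s := √(N - 1)
  set r := √N
  set t := √(N + 1)
  calc
    2 * r - s - t = 2 / ((s + r) * (r + t) * (s + t)) := by
      rw [eq_div_iff (by positivity)]
      linear_combination (r + t) * (s + t) * h₁ - (s + r) * (s + t) * h₂ + h₃
    _ ≤ 2 / ((s + s) * (s + s) * (s + s)) := by gcongr <;> linarith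
    _ = 1 / (4 * s ^ 3) := by field_simp; ring

theorem inv_sqrt_second_difference_le (hN : 200 ≤ N) :
    1 / √(N - 1) + 1 / √(N + 1) - 2 / √N ≤ 0.8 / √(N - 1) ^ 5 := by
  have h₁ := sqrt_sub_sqrt_mul_add (a := N - 1) (b := N) (by linarith) (by linarith)
  have h₂ := sqrt_sub_sqrt_mul_add (a := N) (b := N + 1) (by linarith) (by linarith)
  have h₃ := sqrt_sub_sqrt_mul_add (a := N - 1) (b := N + 1) (by linarith) (by linarith)
  have hs : 14 ≤ √(N - 1) := le_sqrt_of_sq_le (by linarith)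
  have hsr : √(N - 1) ≤ √N := sqrt_le_sqrt (by linarith)
  have hrt : √N ≤ √(N + 1) := sqrt_le_sqrt (by linarith)
  set s := √(N - 1)
  set r := √N
  set t := √(N + 1)
  have hrts : r * (t - s) ≤ 1.2 := by
    have hts : (t - s) * s ≤ 1 := by nlinarith
    have hr : r ≤ 1.2 * s := by nlinarith
    calc r * (t - s) ≤ 1.2 * s * (t - s) := by gcongr; linarith
      _ ≤ 1.2 := by linarith
  calc
    1 / s + 1 / t - 2 / r = (r * (t - s) + 2) / (r * s * t * ((s + r) * (r + t))) := by
      have : s ≠ 0 := by positivity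
      have : r ≠ 0 := by positivity
      have : t ≠ 0 := by positivity
      have : s + r ≠ 0 := by positivity
      have : r + t ≠ 0 := by positivity
      field_simp
      linear_combination t * (r + t) * h₁ - s * (s + r) * h₂ + h₃
    _ ≤ (1.2 + 2) / (s * s * s * ((s + s) * (s + s))) := by gcongr <;> linarith
    _ = 0.8 / s ^ 5 := by field_simp; norm_num

theorem log_one_sub_second_difference_le {u v w : ℝ} (hu : u < 1) (hv : v < 1) (hw : w < 1)
    (huvw : u ^ 2 ≤ v * w) :
    2 * log (1 - u) - log (1 - v) - log (1 - w) ≤ (v + w - 2 * u) / ((1 - v) * (1 - w)) := by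
  have : 0 < 1 - u := by linarith
  have hv' : 0 < 1 - v := by linarith
  have hw' : 0 < 1 - w := by linarith
  calc
    _ = log ((1 - u) ^ 2 / ((1 - v) * (1 - w))) := by
      rw [log_div (by positivity) (by positivity), log_pow, log_mul hv'.ne' hw'.ne']
      push_cast
      ring
    _ ≤ (1 - u) ^ 2 / ((1 - v) * (1 - w)) - 1 := log_le_sub_one_of_pos (by positivity)
    _ = ((1 - u) ^ 2 - (1 - v) * (1 - w)) / ((1 - v) * (1 - w)) := by field_simp
    _ ≤ _ := div_le_div_of_nonneg_right (by linarith) (by positivity)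

theorem log_one_sub_inv_sqrt_second_difference_le {κ : ℝ} (hκ : 2.5 ≤ κ) (hN : 300 ≤ N) :
    2 * log (1 - 1 / (κ * √N)) - log (1 - 1 / (κ * √(N - 1))) - log (1 - 1 / (κ * √(N + 1))) ≤
      0.03 / (N - 1) ^ 2 := by
  have hinv := inv_sqrt_second_difference_le (N := N) (by linarith)
  have hs2 : √(N - 1) ^ 2 = N - 1 := sq_sqrt (by linarith)
  have hst : √(N - 1) * √(N + 1) ≤ √N ^ 2 := by
    rw [← sqrt_mul (by linarith), sq_sqrt (by linarith)]
    exact sqrt_le_iff.mpr ⟨by linarith, by linarith⟩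
  have hs : 17 ≤ √(N - 1) := le_sqrt_of_sq_le (by linarith)
  have hsr : √(N - 1) ≤ √N := sqrt_le_sqrt (by linarith)
  have hrt : √N ≤ √(N + 1) := sqrt_le_sqrt (by linarith)
  set s := √(N - 1)
  set r := √N
  set t := √(N + 1)
  have hsmall : ∀ x, 17 ≤ x → 1 / (κ * x) ≤ 0.03 := fun x hx ↦ by
    rw [div_le_iff₀ (by positivity)]; nlinarith
  have hr' := hsmall r (by linarith)
  have hs' := hsmall s hs
  have ht' := hsmall t (by linarith)
  refine (log_one_sub_second_difference_le (by linarith) (by linarith) (by linarith) ?_).trans ?_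
  · rw [one_div_pow, one_div_mul_one_div]
    gcongr
    nlinarith [sq_nonneg κ]
  have hnum : 1 / (κ * s) + 1 / (κ * t) - 2 * (1 / (κ * r)) ≤ 0.32 / s ^ 5 := by
    calc _ = (1 / s + 1 / t - 2 / r) / κ := by ring
      _ ≤ 0.8 / s ^ 5 / 2.5 := by gcongr
      _ = 0.32 / s ^ 5 := by ring
  have hden : 0.9 ≤ (1 - 1 / (κ * s)) * (1 - 1 / (κ * t)) := by nlinarith
  calc
    _ ≤ 0.32 / s ^ 5 / 0.9 := by gcongr
    _ ≤ 0.03 / (s ^ 2) ^ 2 := by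
      rw [div_div, div_le_div_iff₀ (by positivity) (by positivity)]
      nlinarith [pow_pos (show 0 < s by linarith) 4]
    _ = 0.03 / (N - 1) ^ 2 := by rw [hs2]

theorem log_second_difference_le (hN : 1 < N) :
    log (N - 1) + log (N + 1) - 2 * log N ≤ -(1 / N ^ 2) := by
  calc
    _ = log ((N - 1) * (N + 1) / N ^ 2) := by
      rw [log_div (mul_pos (by linarith) (by linarith)).ne' (by positivity),
        log_mul (by linarith) (by linarith), log_pow]
      push_cast
      ring
    _ ≤ (N - 1) * (N + 1) / N ^ 2 - 1 :=
      log_le_sub_one_of_pos (div_pos (mul_pos (by linarith) (by linarith)) (by positivity))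
    _ = -(1 / N ^ 2) := by field_simp; ring

end SecondDifferences

section LogMainTerm

open Real

theorem partitionMain_pos {μ : ℝ} (hμ : 1 < μ) : 0 < partitionMain μ := by
  have : 0 < 1 - 1 / μ := by
    rw [sub_pos, div_lt_one (by linarith)]; exact hμ
  rw [partitionMain]
  positivity

theorem log_partitionMain {μ : ℝ} (hμ : 1 < μ) :
    log (partitionMain μ) = log (√3 * π ^ 2 / 18) - 2 * log μ + log (1 - 1 / μ) + μ := by
  have hne : 1 - 1 / μ ≠ 0 := by
    rw [sub_ne_zero, ne_comm, Ne, div_eq_one_iff_eq (by linarith)]; exact hμ.ne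
  rw [partitionMain, log_mul (by positivity) (exp_ne_zero _), log_exp,
    log_mul (by positivity) hne, ← div_div, log_div (by positivity) (by positivity), log_pow]
  push_cast
  rfl

theorem log_partitionMain_mul_sqrt {κ N : ℝ} (hκ : 2 < κ) (hN : 1 ≤ N) :
    log (partitionMain (κ * √N)) = log (√3 * π ^ 2 / 18) - 2 * log κ - log N +
      log (1 - 1 / (κ * √N)) + κ * √N := by
  have hr : 1 ≤ √N := one_le_sqrt.mpr hN
  rw [log_partitionMain (by nlinarith), log_mul (by positivity) (by positivity),
    log_sqrt (by linarith)]
  ring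

theorem log_partitionMain_second_difference_le {κ N : ℝ} (hκ : 2.5 ≤ κ) (hN : 300 ≤ N) :
    2 * log (partitionMain (κ * √N)) - log (partitionMain (κ * √(N - 1))) -
      log (partitionMain (κ * √(N + 1))) ≤
      κ / 4 / √(N - 1) ^ 3 + 0.03 / (N - 1) ^ 2 - 1 / N ^ 2 := by
  rw [log_partitionMain_mul_sqrt (by linarith) (by linarith),
    log_partitionMain_mul_sqrt (by linarith) (by linarith),
    log_partitionMain_mul_sqrt (by linarith) (by linarith)]
  have hsqrt : κ * (2 * √N - √(N - 1) - √(N + 1)) ≤ κ / 4 / √(N - 1) ^ 3 :=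
    calc _ ≤ κ * (1 / (4 * √(N - 1) ^ 3)) := by
          gcongr; exact sqrt_second_difference_le (by linarith)
      _ = κ / 4 / √(N - 1) ^ 3 := by rw [mul_one_div, div_div]
  have hlog_one_sub := log_one_sub_inv_sqrt_second_difference_le hκ hN
  have hlog := log_second_difference_le (N := N) (by linarith)
  linarith

end LogMainTerm

section LargeCases

open Real

theorem two_mul_pow_six_le_exp_half {μ : ℝ} (hμ : 48 ≤ μ) : 2 * μ ^ 6 ≤ exp (μ / 2) := by
  have hexp_four : (54.5 : ℝ) ≤ exp 4 := by
    calc (54.5 : ℝ) ≤ 2.7182818283 ^ 4 := by norm_num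
      _ ≤ exp 1 ^ 4 := by gcongr; exact exp_one_gt_d9.le
      _ = exp 4 := by rw [← exp_nat_mul]; norm_num
  have hexp : 1.125 * μ ≤ exp (μ / 12) :=
    calc 1.125 * μ ≤ 54.5 * (μ / 12 - 4 + 1) := by linarith
      _ ≤ exp 4 * exp (μ / 12 - 4) := by gcongr <;> linarith [add_one_le_exp (μ / 12 - 4)]
      _ = exp (μ / 12) := by rw [← exp_add]; congr 1; ring
  calc 2 * μ ^ 6 ≤ (1.125 * μ) ^ 6 := by rw [mul_pow]; gcongr; norm_num
    _ ≤ exp (μ / 12) ^ 6 := by gcongr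
    _ = exp (μ / 2) := by rw [← exp_nat_mul]; congr 1; push_cast; ring

theorem five_mul_exp_half_le_partitionMain {μ : ℝ} (hμ : 48 ≤ μ) :
    5 * exp (μ / 2) ≤ 3 / μ ^ 4 * partitionMain μ := by
  have hsqrt : 1.73 ≤ √3 := le_sqrt_of_sq_le (by norm_num)
  have hinv : 0.97 ≤ 1 - 1 / μ := by
    rw [le_sub_comm, div_le_iff₀ (by linarith)]; linarith
  calc
    5 * exp (μ / 2) ≤ 3 / μ ^ 4 * (1.73 * 3.14 ^ 2 / (18 * μ ^ 2) * 0.97 *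
        (2 * μ ^ 6 * exp (μ / 2))) := by
      field_simp
      norm_num
    _ ≤ 3 / μ ^ 4 * (√3 * π ^ 2 / (18 * μ ^ 2) * (1 - 1 / μ) *
        (exp (μ / 2) * exp (μ / 2))) := by
      gcongr
      · exact pi_gt_d2.le
      · exact two_mul_pow_six_le_exp_half hμ
    _ = 3 / μ ^ 4 * partitionMain μ := by rw [← exp_add, add_halves, partitionMain]

theorem abs_log_sub_log_le_of_abs_sub_le {P M δ : ℝ} (hM : 0 < M) (hδ : δ ≤ 1 / 2)
    (h : |P - M| ≤ δ * M) : |log P - log M| ≤ 2 * δ := by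
  have hδ0 : 0 ≤ δ := nonneg_of_mul_nonneg_left ((abs_nonneg _).trans h) hM
  have hratio : |P / M - 1| ≤ δ := by
    rwa [div_sub_one hM.ne', abs_div, abs_of_pos hM, div_le_iff₀ hM]
  obtain ⟨hlower, hupper⟩ := abs_le.mp hratio
  have hpos : 0 < P / M := by linarith
  have hP : P ≠ 0 := fun hP ↦ by simp [hP] at hpos
  have hinv : (P / M)⁻¹ ≤ 1 + 2 * δ := by
    rw [inv_le_iff_one_le_mul₀ hpos]; nlinarith
  rw [← log_div hP hM.ne', abs_le]
  constructor
  · linarith [one_sub_inv_le_log_of_pos hpos]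
  · linarith [log_le_sub_one_of_pos hpos]

theorem sub_sq_le_log_one_add {x : ℝ} (hx : 0 ≤ x) : x - x ^ 2 ≤ log (1 + x) :=
  calc
    x - x ^ 2 ≤ 1 - (1 + x)⁻¹ := by
      rw [le_sub_comm, inv_le_iff_one_le_mul₀ (by linarith)]
      nlinarith [pow_nonneg hx 3]
    _ ≤ log (1 + x) := one_sub_inv_le_log_of_pos (by linarith)

theorem one_div_sqrt_cube_le {v : ℝ} (hv : 398 ≤ v) :
    1 / √v ^ 3 ≤ 1 / √(v + 25 / 24) ^ 3 + 0.1 / v ^ 2 := by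
  have hd := sqrt_sub_sqrt_mul_add (a := v) (b := v + 25 / 24) (by linarith) (by linarith)
  have hs2 : √v ^ 2 = v := sq_sqrt (by linarith)
  have hs19 : 19 ≤ √v := le_sqrt_of_sq_le (by linarith)
  have hsρ : √v ≤ √(v + 25 / 24) := sqrt_le_sqrt (by linarith)
  set s := √v
  set ρ := √(v + 25 / 24)
  have hd' : (ρ - s) * (2 * s) ≤ 25 / 24 := by nlinarith
  suffices (ρ - s) * (ρ ^ 2 + ρ * s + s ^ 2) / (s ^ 3 * ρ ^ 3) ≤ 0.1 / v ^ 2 by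
    have hdiff : 1 / s ^ 3 - 1 / ρ ^ 3 =
        (ρ - s) * (ρ ^ 2 + ρ * s + s ^ 2) / (s ^ 3 * ρ ^ 3) := by
      have : s ≠ 0 := by positivity
      have : ρ ≠ 0 := by positivity
      field_simp
      ring
    linarith
  rw [← hs2, div_le_div_iff₀ (by positivity) (by positivity)]
  calc (ρ - s) * (ρ ^ 2 + ρ * s + s ^ 2) * (s ^ 2) ^ 2
      ≤ (ρ - s) * (ρ ^ 2 + ρ * ρ + ρ ^ 2) * (s ^ 2) ^ 2 := by gcongr
    _ = (ρ - s) * (2 * s) * (3 / 2 * ρ ^ 2 * s ^ 3) := by ring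
    _ ≤ 25 / 24 * (3 / 2 * ρ ^ 2 * s ^ 3) := by gcongr
    _ = 25 / 16 * (ρ ^ 2 * s ^ 3) := by ring
    _ ≤ 0.1 * ρ * (ρ ^ 2 * s ^ 3) := by gcongr; linarith
    _ = 0.1 * (s ^ 3 * ρ ^ 3) := by ring

theorem add_lt_log_one_add_div_sqrt_cube {κ v : ℝ} (hκ : 0 < κ) (hκ' : κ ≤ 2.6) (hv : 398 ≤ v) :
    κ / 4 / √v ^ 3 + 0.03 / v ^ 2 - 1 / (v + 1) ^ 2 + 0.64 / v ^ 2 <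
      log (1 + κ / 4 / √(v + 25 / 24) ^ 3) := by
  have hρ2 : √(v + 25 / 24) ^ 2 = v + 25 / 24 := sq_sqrt (by linarith)
  have hρ : 0 < √(v + 25 / 24) := sqrt_pos.mpr (by linarith)
  have hx : κ / 4 / √v ^ 3 ≤ κ / 4 / √(v + 25 / 24) ^ 3 + 0.07 / v ^ 2 :=
    calc κ / 4 / √v ^ 3 = κ / 4 * (1 / √v ^ 3) := by ring
      _ ≤ κ / 4 * (1 / √(v + 25 / 24) ^ 3 + 0.1 / v ^ 2) := by
        gcongr; exact one_div_sqrt_cube_le hv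
      _ = κ / 4 / √(v + 25 / 24) ^ 3 + κ / 4 * (0.1 / v ^ 2) := by ring
      _ ≤ κ / 4 / √(v + 25 / 24) ^ 3 + 0.7 * (0.1 / v ^ 2) := by gcongr; linarith
      _ = _ := by ring
  set ρ := √(v + 25 / 24)
  have hx2 : (κ / 4 / ρ ^ 3) ^ 2 ≤ 0.01 / v ^ 2 :=
    calc (κ / 4 / ρ ^ 3) ^ 2 = (κ / 4) ^ 2 / (ρ ^ 2) ^ 3 := by ring
      _ ≤ 1 ^ 2 / v ^ 3 := by rw [hρ2]; gcongr <;> linarith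
      _ ≤ 0.01 / v ^ 2 := by
        rw [div_le_div_iff₀ (by positivity) (by positivity)]
        nlinarith [pow_pos (show 0 < v by linarith) 2]
  have hfinal : 0.75 / v ^ 2 < 1 / (v + 1) ^ 2 := by
    rw [div_lt_div_iff₀ (by positivity) (by positivity)]
    nlinarith
  have hsum : 0.75 / v ^ 2 = 0.64 / v ^ 2 + 0.03 / v ^ 2 + 0.07 / v ^ 2 + 0.01 / v ^ 2 := by ring
  have hlog := sub_sq_le_log_one_add (x := κ / 4 / ρ ^ 3) (by positivity)
  linarith

theorem le_pi_mul_sqrt_six_div_three : 2.56 ≤ π * √6 / 3 := by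
  have : 2.449 ≤ √6 := le_sqrt_of_sq_le (by norm_num)
  nlinarith [pi_gt_d4]

theorem pi_mul_sqrt_six_div_three_le : π * √6 / 3 ≤ 2.6 := by
  have : √6 ≤ 2.45 := sqrt_le_iff.mpr (by norm_num)
  nlinarith [pi_lt_d4, pi_pos]

theorem abs_log_card_partition_sub_le {n : ℕ} {N v : ℝ} (hn : N = n - 1 / 24) (hv : 398 ≤ v)
    (hvN : v ≤ N) :
    |log (Fintype.card (Nat.Partition n)) - log (partitionMain (π * √6 / 3 * √N))| ≤
      0.16 / v ^ 2 := by
  have hN2 : √N ^ 2 = N := sq_sqrt (by linarith)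
  have hN : 19 ≤ √N := le_sqrt_of_sq_le (by linarith)
  have hκ := le_pi_mul_sqrt_six_div_three
  have hκ2 : (π * √6 / 3) ^ 2 = 2 * π ^ 2 / 3 := by
    rw [div_pow, mul_pow, sq_sqrt (by norm_num)]; ring
  set κ := π * √6 / 3
  have hμ : 48 ≤ κ * √N := by nlinarith
  have hμ4 : 3 / (κ * √N) ^ 4 ≤ 0.08 / v ^ 2 :=
    calc 3 / (κ * √N) ^ 4 = 3 / κ ^ 4 / (√N ^ 2) ^ 2 := by ring
      _ ≤ 3 / 2.56 ^ 4 / v ^ 2 := by rw [hN2]; gcongr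
      _ ≤ 0.08 / v ^ 2 := by gcongr; norm_num
  have hpos := partitionMain_pos (μ := κ * √N) (by linarith)
  have hv2 : 0.08 / v ^ 2 ≤ 1 / 2 := by
    rw [div_le_div_iff₀ (by positivity) (by norm_num)]; nlinarith
  calc
    _ ≤ 2 * (0.08 / v ^ 2) := by
      refine abs_log_sub_log_le_of_abs_sub_le hpos hv2 ?_
      calc _ ≤ 5 * exp (κ * √N / 2) := abs_card_partition_sub_partitionMain_le (by linarith)
            (by rw [mul_pow, hN2, hκ2, hn])
        _ ≤ 3 / (κ * √N) ^ 4 * partitionMain (κ * √N) := five_mul_exp_half_le_partitionMain hμ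
        _ ≤ 0.08 / v ^ 2 * partitionMain (κ * √N) := by gcongr
    _ = 0.16 / v ^ 2 := by ring

theorem log_card_partition_second_difference_lt_of_le {n : ℕ} (hn : 400 ≤ n) :
    2 * log (Fintype.card (Nat.Partition n)) - log (Fintype.card (Nat.Partition (n - 1))) -
      log (Fintype.card (Nat.Partition (n + 1))) < log (1 + π * √6 / 3 / 4 / √n ^ 3) := by
  have hn' : (400 : ℝ) ≤ n := by exact_mod_cast hn
  obtain ⟨N, hN⟩ : ∃ N : ℝ, N = n - 1 / 24 := ⟨_, rfl⟩
  have hv : 398 ≤ N - 1 := by linarith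
  have h₀ := abs_log_card_partition_sub_le hN hv (by linarith)
  have h₁ := abs_log_card_partition_sub_le (n := n - 1) (N := N - 1)
    (by rw [hN, Nat.cast_sub (by lia)]; push_cast; ring) hv le_rfl
  have h₂ := abs_log_card_partition_sub_le (n := n + 1) (N := N + 1)
    (by rw [hN]; push_cast; ring) hv (by linarith)
  have hκ := le_pi_mul_sqrt_six_div_three
  have hmain := log_partitionMain_second_difference_le (κ := π * √6 / 3) (N := N)
    (by linarith) (by linarith)
  have hlog := add_lt_log_one_add_div_sqrt_cube (by linarith) pi_mul_sqrt_six_div_three_le hv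
  rw [show N - 1 + 25 / 24 = n by rw [hN]; ring, sub_add_cancel] at hlog
  have hδ : 0.64 / (N - 1) ^ 2 = 4 * (0.16 / (N - 1) ^ 2) := by ring
  rw [abs_le] at h₀ h₁ h₂
  linarith [h₀.2, h₁.1, h₂.1]

theorem pi_div_sqrt_mul_rpow {x : ℝ} (hx : 0 ≤ x) :
    π / (√24 * x ^ ((3 : ℝ) / 2)) = π * √6 / 3 / 4 / √x ^ 3 := by
  have h24 : √24 = 2 * √6 := by
    rw [show (24 : ℝ) = 2 ^ 2 * 6 by norm_num, sqrt_mul (by norm_num), sqrt_sq (by norm_num)]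
  have hpow : x ^ ((3 : ℝ) / 2) = √x ^ 3 := by
    rw [sqrt_eq_rpow, ← rpow_mul_natCast hx]
    norm_num
  have h6 : √6 ^ 2 = 6 := sq_sqrt (by norm_num)
  rw [h24, hpow, ← div_div]
  congr 1
  field_simp
  linarith

end LargeCases

section KroneckerSubstitution

open PowerSeries Finset

theorem eval_trunc_mul_modEq (f g : ℕ⟦X⟧) (B m : ℕ) :
    (trunc m (f * g)).eval B ≡ (trunc m f).eval B * (trunc m g).eval B [MOD B ^ m] := by
  have htrunc (P : Polynomial ℕ) : (trunc m (P : ℕ⟦X⟧)).eval B ≡ P.eval B [MOD B ^ m] := by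
    have hdeg : P.natDegree < m + (P.natDegree + 1) := by omega
    rw [Polynomial.eval, eval₂_trunc_eq_sum_range, Polynomial.eval_eq_sum_range' hdeg,
      sum_range_add]
    have htail : B ^ m ∣ ∑ i ∈ range (P.natDegree + 1), P.coeff (m + i) * B ^ (m + i) :=
      dvd_sum fun i _ ↦ (pow_dvd_pow B (m.le_add_right i)).mul_left _
    simpa using (Nat.modEq_zero_iff_dvd.2 htail).symm.add_left (∑ i ∈ range m, P.coeff i * B ^ i)
  rw [← Polynomial.eval_mul, ← trunc_trunc_mul_trunc, ← Polynomial.coe_mul]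
  exact htrunc _

theorem eval_trunc_geometricSeries {B N m : ℕ} (hB : 1 < B) (hm : m ≠ 0) :
    (trunc (N + 1) (geometricSeries ℕ m)).eval B =
      (B ^ (m * (N / m + 1)) - 1) / (B ^ m - 1) := by
  rw [pow_mul, ← Nat.geomSum_eq (Nat.one_lt_pow hm hB), Polynomial.eval,
    eval₂_trunc_eq_sum_range]
  have hm' : 0 < m := Nat.pos_of_ne_zero hm
  simp only [geometricSeries, coeff_mk, RingHom.id_apply, ite_mul, one_mul, zero_mul]
  rw [← sum_filter]
  symm
  refine sum_bij (fun j _ ↦ m * j) (fun j hj ↦ ?_) (fun j _ j' _ h ↦ ?_) (fun n hn ↦ ?_)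
    fun j _ ↦ (pow_mul B m j).symm
  · rw [mem_range, Nat.lt_succ_iff, Nat.le_div_iff_mul_le hm'] at hj
    simpa [Nat.lt_succ_iff, mul_comm] using hj
  · exact Nat.eq_of_mul_eq_mul_left hm' h
  · obtain ⟨hnN, j, rfl⟩ := mem_filter.1 hn
    refine ⟨j, ?_, rfl⟩
    rw [mem_range, Nat.lt_succ_iff, Nat.le_div_iff_mul_le hm', mul_comm]
    exact Nat.lt_succ_iff.1 (mem_range.1 hnN)

/-- The value at `B`, modulo `B ^ (N + 1)`, of the generating function of partitions into parts at
most `k`: for `k = N` and `B` large its base-`B` digits are `p(0), …, p(N)`. -/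
def packedPartitions (B N : ℕ) : ℕ → ℕ
  | 0 => 1
  | k + 1 =>
    packedPartitions B N k * ((B ^ ((k + 1) * (N / (k + 1) + 1)) - 1) / (B ^ (k + 1) - 1)) %
      B ^ (N + 1)

theorem packedPartitions_modEq {B : ℕ} (hB : 1 < B) (N k : ℕ) :
    packedPartitions B N k ≡
      (trunc (N + 1) (∏ i ∈ range k, geometricSeries ℕ (i + 1))).eval B [MOD B ^ (N + 1)] := by
  induction k with
  | zero => simp [packedPartitions, Nat.ModEq.refl]
  | succ k ih =>
    rw [packedPartitions, prod_range_succ, ← eval_trunc_geometricSeries hB k.succ_ne_zero]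
    exact (Nat.mod_modEq _ _).trans <| (ih.mul_right _).trans (eval_trunc_mul_modEq _ _ _ _).symm

theorem eval_trunc_prod_geometricSeries (B N : ℕ) :
    (trunc (N + 1) (∏ i ∈ range N, geometricSeries ℕ (i + 1))).eval B =
      Nat.ofDigits B ((List.range (N + 1)).map fun n ↦ Fintype.card (Nat.Partition n)) := by
  have hdigits : ((List.range (N + 1)).map fun n ↦ Fintype.card (Nat.Partition n)).mapIdx
      (fun i a ↦ a * B ^ i) =
        (List.range (N + 1)).map fun n ↦ Fintype.card (Nat.Partition n) * B ^ n :=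
    List.ext_getElem (by simp) fun i _ _ ↦ by simp
  rw [← mk_card_restricted_eq_prod_geometricSeries, Polynomial.eval, eval₂_trunc_eq_sum_range,
    Nat.ofDigits_eq_sum_mapIdx, hdigits,
    ← List.sum_toFinset _ List.nodup_range, List.toFinset_range]
  refine sum_congr rfl fun n hn ↦ ?_
  simp [card_restricted_eq_card (Nat.lt_succ_iff.1 (mem_range.1 hn))]

theorem packedPartitions_div_pow_mod {B N : ℕ} (hB : 2 ^ N ≤ B) {n : ℕ} (hn : n ≤ N) (hN : N ≠ 0) :
    packedPartitions B N N / B ^ n % B = Fintype.card (Nat.Partition n) := by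
  set digits := (List.range (N + 1)).map fun n ↦ Fintype.card (Nat.Partition n)
  have hB1 : 1 < B := (Nat.one_lt_two_pow hN).trans_le hB
  have hlength : digits.length = N + 1 := by simp [digits]
  have hlt : ∀ a ∈ digits, a < B := by
    simp only [digits, List.mem_map, List.mem_range]
    rintro _ ⟨i, hi, rfl⟩
    exact (card_partition_le_two_pow i).trans_lt
      ((Nat.pow_lt_pow_right one_lt_two (by omega)).trans_le hB)
  have hpacked : packedPartitions B N N = Nat.ofDigits B digits := by
    refine Nat.ModEq.eq_of_lt_of_lt (m := B ^ (N + 1)) ?_ ?_ ?_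
    · rw [← eval_trunc_prod_geometricSeries]
      exact packedPartitions_modEq hB1 N N
    · obtain ⟨k, rfl⟩ := Nat.exists_eq_succ_of_ne_zero hN
      exact Nat.mod_lt _ (by positivity)
    · exact hlength ▸ Nat.ofDigits_lt_base_pow_length hB1 hlt
  have hdrop : digits.drop n = digits[n] :: digits.drop (n + 1) :=
    List.drop_eq_getElem_cons (by omega)
  rw [hpacked, Nat.ofDigits_div_pow_eq_ofDigits_drop n (by omega) digits hlt, hdrop,
    Nat.ofDigits_cons, Nat.add_mul_mod_self_left,
    Nat.mod_eq_of_lt (hlt _ (List.getElem_mem _))]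
  simp [digits]

end KroneckerSubstitution

section SmallCases

/-- The `n`-th base-`2 ^ 400` digit of `packedPartitions (2 ^ 400) 400 400`, a form of `p(n)` for
`n ≤ 400` that the kernel can evaluate. -/
def smallPartitionNumber (n : ℕ) : ℕ :=
  packedPartitions (2 ^ 400) 400 400 / (2 ^ 400) ^ n % 2 ^ 400

theorem smallPartitionNumber_eq {n : ℕ} (hn : n ≤ 400) :
    smallPartitionNumber n = Fintype.card (Nat.Partition n) :=
  packedPartitions_div_pow_mod le_rfl hn (by norm_num)

theorem smallPartitionNumber_sq_sub_mul_lt :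
    ∀ n ∈ List.range' 45 355,
      24 * n ^ 3 * (100 * (smallPartitionNumber n ^ 2 -
        smallPartitionNumber (n - 1) * smallPartitionNumber (n + 1))) ^ 2 <
      (314 * (smallPartitionNumber (n - 1) * smallPartitionNumber (n + 1))) ^ 2 := by
  decide +kernel

theorem two_mul_log_sub_log_sub_log_lt_of_sq_sub_mul_lt {a b c n : ℕ} (ha : 0 < a) (hb : 0 < b)
    (hc : 0 < c) (hn : 0 < n)
    (h : 24 * n ^ 3 * (100 * (b ^ 2 - a * c)) ^ 2 < (314 * (a * c)) ^ 2) :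
    2 * Real.log b - Real.log a - Real.log c <
      Real.log (1 + Real.pi / (√24 * (n : ℝ) ^ ((3 : ℝ) / 2))) := by
  set x : ℝ := Real.pi / (√24 * (n : ℝ) ^ ((3 : ℝ) / 2)) with hx
  have hx_sq : 24 * n ^ 3 * x ^ 2 = Real.pi ^ 2 := by
    rw [hx, div_pow, mul_pow, Real.sq_sqrt (by norm_num), ← Real.rpow_mul_natCast n.cast_nonneg]
    norm_num
    field_simp
  have hdiff : ((b ^ 2 - a * c : ℕ) : ℝ) < a * c * x := by
    have hreal : 24 * (n : ℝ) ^ 3 * (100 * (b ^ 2 - a * c : ℕ)) ^ 2 < (314 * (a * c)) ^ 2 :=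
      mod_cast h
    refine lt_of_pow_lt_pow_left₀ 2 (by positivity) ?_
    refine lt_of_mul_lt_mul_left ?_ (show (0 : ℝ) ≤ 24 * n ^ 3 * 100 ^ 2 by positivity)
    calc 24 * (n : ℝ) ^ 3 * 100 ^ 2 * ((b ^ 2 - a * c : ℕ) : ℝ) ^ 2
        < (a * c) ^ 2 * 100 ^ 2 * 3.14 ^ 2 := by linear_combination hreal
      _ ≤ (a * c) ^ 2 * 100 ^ 2 * Real.pi ^ 2 := by gcongr; exact Real.pi_gt_d2.le
      _ = 24 * n ^ 3 * 100 ^ 2 * (a * c * x) ^ 2 := by rw [← hx_sq]; ring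
  have hle : (b : ℝ) ^ 2 ≤ (b ^ 2 - a * c : ℕ) + a * c := mod_cast le_tsub_add
  have hlog : Real.log ((b : ℝ) ^ 2) < Real.log (a * c * (1 + x)) :=
    Real.log_lt_log (by positivity) (by linarith)
  rw [Real.log_pow, Real.log_mul (by positivity) (by positivity),
    Real.log_mul (by positivity) (by positivity)] at hlog
  push_cast at hlog
  linarith

theorem log_card_partition_second_difference_lt_of_lt {n : ℕ} (hn : 45 ≤ n) (hn' : n < 400) :
    2 * Real.log (Fintype.card (Nat.Partition n)) -
        Real.log (Fintype.card (Nat.Partition (n - 1))) -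
        Real.log (Fintype.card (Nat.Partition (n + 1))) <
      Real.log (1 + Real.pi / (√24 * (n : ℝ) ^ ((3 : ℝ) / 2))) := by
  refine two_mul_log_sub_log_sub_log_lt_of_sq_sub_mul_lt Fintype.card_pos Fintype.card_pos
    Fintype.card_pos (by omega) ?_
  have hsmall := smallPartitionNumber_sq_sub_mul_lt n (by rw [List.mem_range'_1]; omega)
  rwa [smallPartitionNumber_eq (by omega), smallPartitionNumber_eq (by omega),
    smallPartitionNumber_eq (by omega)] at hsmall

end SmallCases

open Real in
theorem stmt_12 (p : ℕ → ℕ) (hp : ∀ n, p n = Fintype.card (Nat.Partition n))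
    (n : ℕ) (hn : 45 ≤ n) :
    2 * Real.log (p n) - Real.log (p (n - 1)) - Real.log (p (n + 1)) <
      Real.log (1 + π / (Real.sqrt 24 * (n : ℝ) ^ ((3:ℝ)/2))) := by
  rw [hp, hp, hp]
  rcases lt_or_ge n 400 with h | h
  · exact log_card_partition_second_difference_lt_of_lt hn h
  · rw [pi_div_sqrt_mul_rpow n.cast_nonneg]
    exact log_card_partition_second_difference_lt_of_le h
end
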